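/- Let v be a harmonic function on the open unit ball B ⊂ ℝⁿ, not identically zero, set Z = Z(v), let x₀ ∈ Z ∩ B_{1/2}, and let k ≥ 1 be the order of vanishing of v at x₀ (i.e. the k-th iterated derivative of v at x₀ is nonzero while all iterated derivatives of order less than k vanish at x₀). Then there exists a constant C = C(x₀, Z) > 0 such that for every harmonic function u on B with Z(u) = Z one has sup_{x ∈ B_{1/2}} |u(x)| ≤ C · ‖D^k u(x₀)‖, where D^k u(x₀) denotes the k-th iterated Fréchet derivative of u at x₀ with its operator norm. -/

import Mathlib

open Metric Set Filter

noncomputable section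

abbrev En (n : ℕ) : Type := EuclideanSpace ℝ (Fin n)

/-- The Laplacian of `u` at `x`, computed from the second iterated Fréchet derivative. -/
def laplacianAt {n : ℕ} (u : En n → ℝ) (x : En n) : ℝ :=
  ∑ i : Fin n, iteratedFDeriv ℝ 2 u x ![EuclideanSpace.single i 1, EuclideanSpace.single i 1]

/-- `u` is harmonic on `Ω`: twice continuously differentiable with vanishing Laplacian. -/
def HarmonicOnSet {n : ℕ} (u : En n → ℝ) (Ω : Set (En n)) : Prop :=
  ContDiffOn ℝ 2 u Ω ∧ ∀ x ∈ Ω, laplacianAt u x = 0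

/-- The zero set of `u` within `Ω`. -/
def zeroSet {n : ℕ} (u : En n → ℝ) (Ω : Set (En n)) : Set (En n) :=
  {x ∈ Ω | u x = 0}

/-- The collection of nodal domains of `u` in `Ω`, i.e. the connected components of
`Ω \ Z(u)`. -/
def nodalComponents {n : ℕ} (u : En n → ℝ) (Ω : Set (En n)) : Set (Set (En n)) :=
  {C | ∃ x ∈ Ω \ zeroSet u Ω, C = connectedComponentIn (Ω \ zeroSet u Ω) x}

section

open MeasureTheory Topology

/-- A smooth radial weight, positive exactly on the open unit ball. -/
def ballWeight {n : ℕ} (y : En n) : ℝ := expNegInvGlue (1 - ‖y‖ ^ 2)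

/-- A radial potential of `ballWeight`: its gradient is `-ballWeight y • y`. -/
def ballPotential {n : ℕ} (y : En n) : ℝ := 1 / 2 * ∫ s in (‖y‖ ^ 2)..1, expNegInvGlue (1 - s)

theorem ballWeight_contDiff {n : ℕ} {k : ℕ∞} : ContDiff ℝ k (ballWeight : En n → ℝ) :=
  expNegInvGlue.contDiff.comp (contDiff_const.sub (contDiff_norm_sq ℝ))

theorem ballWeight_continuous {n : ℕ} : Continuous (ballWeight : En n → ℝ) :=
  (ballWeight_contDiff (k := 0)).continuous

theorem ballWeight_nonneg {n : ℕ} (y : En n) : 0 ≤ ballWeight y := expNegInvGlue.nonneg _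

theorem ballWeight_pos {n : ℕ} {y : En n} (h : ‖y‖ < 1) : 0 < ballWeight y :=
  expNegInvGlue.pos_of_pos (by nlinarith [norm_nonneg y])

theorem ballWeight_eq_zero {n : ℕ} {y : En n} (h : 1 ≤ ‖y‖) : ballWeight y = 0 :=
  expNegInvGlue.zero_of_nonpos (by nlinarith)

theorem ballWeight_neg {n : ℕ} (y : En n) : ballWeight (-y) = ballWeight y := by
  simp [ballWeight]

theorem expNegInvGlue_le_one (x : ℝ) : expNegInvGlue x ≤ 1 := by
  unfold expNegInvGlue
  split_ifs with h
  · norm_num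
  · exact Real.exp_le_one_iff.2 (by simp only [Left.neg_nonpos_iff, inv_nonneg]; linarith)

theorem ballWeight_le_one {n : ℕ} (y : En n) : ballWeight y ≤ 1 := expNegInvGlue_le_one _

theorem ballWeight_eq_zero_of_notMem {n : ℕ} {y : En n} (h : y ∉ closedBall (0 : En n) 1) :
    ballWeight y = 0 :=
  ballWeight_eq_zero (by simp only [mem_closedBall, dist_zero_right, not_le] at h; exact h.le)

theorem ballPotential_eq_zero {n : ℕ} {y : En n} (h : 1 ≤ ‖y‖) : ballPotential y = 0 := by
  have : ∫ s in (1 : ℝ)..(‖y‖ ^ 2), expNegInvGlue (1 - s) = 0 := by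
    rw [intervalIntegral.integral_of_le (by nlinarith)]
    refine setIntegral_eq_zero_of_forall_eq_zero fun s hs => ?_
    exact expNegInvGlue.zero_of_nonpos (by linarith [hs.1])
  rw [ballPotential, intervalIntegral.integral_symm, this]; simp

theorem ballPotential_eq_zero_of_notMem {n : ℕ} {y : En n} (h : y ∉ closedBall (0 : En n) 1) :
    ballPotential y = 0 :=
  ballPotential_eq_zero (by simp only [mem_closedBall, dist_zero_right, not_le] at h; exact h.le)

theorem continuous_expNegInvGlue_one_sub : Continuous fun s : ℝ => expNegInvGlue (1 - s) :=
  (expNegInvGlue.contDiff (n := 0)).continuous.comp (continuous_const.sub continuous_id)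

theorem ballPotential_pos {n : ℕ} {y : En n} (h : ‖y‖ < 1) : 0 < ballPotential y := by
  unfold ballPotential
  have h1 : ‖y‖ ^ 2 < 1 := by nlinarith [norm_nonneg y]
  refine mul_pos (by norm_num) (intervalIntegral.intervalIntegral_pos_of_pos_on
    (continuous_expNegInvGlue_one_sub.intervalIntegrable _ _) (fun s hs => ?_) h1)
  exact expNegInvGlue.pos_of_pos (by linarith [hs.2])

theorem ballPotential_hasFDerivAt {n : ℕ} (y : En n) :
    HasFDerivAt ballPotential (-(ballWeight y) • innerSL ℝ y) y := by
  have h1 : HasDerivAt (fun t : ℝ => ∫ s in t..(1 : ℝ), expNegInvGlue (1 - s))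
      (-expNegInvGlue (1 - ‖y‖ ^ 2)) (‖y‖ ^ 2) :=
    intervalIntegral.integral_hasDerivAt_left
      (continuous_expNegInvGlue_one_sub.intervalIntegrable _ _)
      (continuous_expNegInvGlue_one_sub.stronglyMeasurableAtFilter _ _)
      continuous_expNegInvGlue_one_sub.continuousAt
  have h2 : HasFDerivAt (fun y : En n => ‖y‖ ^ 2) (2 • innerSL ℝ y) y :=
    (hasStrictFDerivAt_norm_sq y).hasFDerivAt
  have h3 := (h1.comp_hasFDerivAt y h2).const_mul (1 / 2 : ℝ)
  refine h3.congr_fderiv ?_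
  ext z
  simp [ballWeight]
  ring

theorem ballPotential_continuous {n : ℕ} : Continuous (ballPotential : En n → ℝ) :=
  continuous_iff_continuousAt.2 fun y => (ballPotential_hasFDerivAt y).continuousAt

/-- A continuous factor vanishing off the closed unit ball makes a product integrable. -/
theorem integrable_mul_of_eq_zero {n : ℕ} {w F : En n → ℝ} (hw : Continuous w)
    (h0 : ∀ y ∉ closedBall (0 : En n) 1, w y = 0) (hF : IntegrableOn F (closedBall 0 1)) :
    Integrable fun y => w y * F y := by
  have : IntegrableOn (fun y => w y * F y) (closedBall 0 1) :=
    hF.continuousOn_mul hw.continuousOn (isCompact_closedBall _ _)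
  exact this.integrable_of_forall_notMem_eq_zero fun y hy => by simp [h0 y hy]

theorem integrable_ballWeight_mul {n : ℕ} {F : En n → ℝ} (hF : ContinuousOn F (closedBall 0 1)) :
    Integrable fun y => ballWeight y * F y :=
  integrable_mul_of_eq_zero ballWeight_continuous (fun _ => ballWeight_eq_zero_of_notMem)
    (hF.integrableOn_compact (isCompact_closedBall _ _))

theorem integrable_ballWeight {n : ℕ} : Integrable (ballWeight : En n → ℝ) := by
  simpa using integrable_ballWeight_mul (n := n) (F := fun _ => 1) continuousOn_const

/-- The total mass of `ballWeight`. -/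
def ballMass (n : ℕ) : ℝ := ∫ y : En n, ballWeight y

theorem integral_mul_pos_of_ball {n : ℕ} {w F : En n → ℝ} (hw : Continuous w)
    (hpos : ∀ y, ‖y‖ < 1 → 0 < w y) (h0 : ∀ y ∉ closedBall (0 : En n) 1, w y = 0)
    (hF : ContinuousOn F (closedBall 0 1)) (hF0 : ∀ y ∈ closedBall (0 : En n) 1, 0 ≤ F y)
    {y₀ : En n} (hy₀ : ‖y₀‖ < 1) (hFy : 0 < F y₀) : 0 < ∫ y, w y * F y := by
  have hint := integrable_mul_of_eq_zero hw h0 (hF.integrableOn_compact (isCompact_closedBall _ _))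
  have hw0 : ∀ y, 0 ≤ w y * F y := by
    intro y
    by_cases hy : y ∈ closedBall (0 : En n) 1
    · refine mul_nonneg ?_ (hF0 y hy)
      have : closedBall (0 : En n) 1 ⊆ closure (ball 0 1) := by
        rw [closure_ball _ one_ne_zero]
      refine closure_minimal (fun z hz => (hpos z (by simpa using hz)).le)
        (isClosed_le continuous_const hw) (this hy)
    · simp [h0 y hy]
  rw [integral_pos_iff_support_of_nonneg hw0 hint]
  have hca : ContinuousAt (fun y => w y * F y) y₀ :=
    hw.continuousAt.mul (hF.continuousAt (closedBall_mem_nhds_of_mem (by simpa using hy₀)))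
  have : ∀ᶠ y in 𝓝 y₀, 0 < w y * F y :=
    continuousAt_const.eventually_lt hca (mul_pos (hpos _ hy₀) hFy)
  refine Measure.measure_pos_of_mem_nhds _ (x := y₀) ?_
  filter_upwards [this] with y hy using hy.ne'

theorem ballMass_pos (n : ℕ) : 0 < ballMass n := by
  have := integral_mul_pos_of_ball (n := n) (F := fun _ => 1) ballWeight_continuous
    (fun _ => ballWeight_pos) (fun _ => ballWeight_eq_zero_of_notMem) continuousOn_const
    (fun _ _ => zero_le_one) (y₀ := 0) (by simp) one_pos
  simpa [ballMass] using this

/-- Integration by parts against the radial weight: the flux of a vector field equals the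
weighted integral of its divergence. -/
theorem integral_ballWeight_flux {n : ℕ} {X : Fin n → En n → ℝ} {X' : Fin n → En n → En n →L[ℝ] ℝ}
    (hX : ∀ i, ∀ y ∈ closedBall (0 : En n) 1, HasFDerivAt (X i) (X' i y) y)
    (hX' : ∀ i, IntegrableOn (fun y => X' i y (EuclideanSpace.single i 1)) (closedBall 0 1)) :
    ∫ y, ballWeight y * ∑ i, y i * X i y
      = ∫ y, ballPotential y * ∑ i, X' i y (EuclideanSpace.single i 1) := by
  have hXc : ∀ i, ContinuousOn (X i) (closedBall 0 1) := fun i y hy =>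
    (hX i y hy).continuousAt.continuousWithinAt
  have hsupp : tsupport (ballPotential : En n → ℝ) ⊆ closedBall 0 1 :=
    closure_minimal (fun y hy => by
      by_contra h
      exact hy (ballPotential_eq_zero_of_notMem h)) isClosed_closedBall
  have hcoord : ∀ i : Fin n, Continuous fun y : En n => y i := fun i => by fun_prop
  have hL : ∀ i, Integrable fun y : En n => ballWeight y * (y i * X i y) := fun i =>
    integrable_ballWeight_mul ((hcoord i).continuousOn.mul (hXc i))
  have hR : ∀ i, Integrable fun y : En n =>
      ballPotential y * X' i y (EuclideanSpace.single i 1) := fun i =>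
    integrable_mul_of_eq_zero ballPotential_continuous
      (fun _ => ballPotential_eq_zero_of_notMem) (hX' i)
  have hpd : ∀ (i : Fin n) (y : En n),
      fderiv ℝ ballPotential y (EuclideanSpace.single i 1) = -(ballWeight y * y i) := fun i y => by
    rw [(ballPotential_hasFDerivAt y).fderiv]
    simp [EuclideanSpace.inner_single_right]
  have key : ∀ i, ∫ y : En n, ballWeight y * (y i * X i y)
      = ∫ y : En n, ballPotential y * X' i y (EuclideanSpace.single i 1) := by
    intro i
    have hfd : ∀ y : En n, fderiv ℝ (X i) y (EuclideanSpace.single i 1) * ballPotential y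
        = ballPotential y * X' i y (EuclideanSpace.single i 1) := fun y => by
      by_cases hy : y ∈ closedBall (0 : En n) 1
      · rw [(hX i y hy).fderiv, mul_comm]
      · rw [ballPotential_eq_zero_of_notMem hy]; simp
    have h := integral_mul_fderiv_eq_neg_fderiv_mul_of_integrable (μ := volume)
      (f := X i) (g := ballPotential) (v := EuclideanSpace.single i 1) ?_ ?_ ?_ ?_ ?_
    · simp only [hpd, hfd] at h
      rw [← neg_inj, ← h, ← integral_neg]
      exact integral_congr_ae (ae_of_all _ fun y => by simp; ring)
    · simp only [hfd]; exact hR i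
    · simp only [hpd]
      refine (hL i).neg.congr (ae_of_all _ fun y => by simp; ring)
    · refine (integrable_mul_of_eq_zero ballPotential_continuous
        (fun _ => ballPotential_eq_zero_of_notMem)
        ((hXc i).integrableOn_compact (isCompact_closedBall _ _))).congr
        (ae_of_all _ fun y => mul_comm _ _)
    · exact fun y hy => (hX i y (hsupp hy)).differentiableAt
    · exact fun y _ => (ballPotential_hasFDerivAt y).differentiableAt
  simp only [Finset.mul_sum]
  rw [integral_finsetSum _ fun i _ => hL i, integral_finsetSum _ fun i _ => hR i]
  exact Finset.sum_congr rfl fun i _ => key i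

theorem continuousOn_right_of_uncurry {α β γ : Type*} [TopologicalSpace α] [TopologicalSpace β]
    [TopologicalSpace γ] {F : α → β → γ} {S : Set α} {K : Set β}
    (hF : ContinuousOn (Function.uncurry F) (S ×ˢ K)) {τ : α} (hτ : τ ∈ S) :
    ContinuousOn (F τ) K :=
  hF.comp (f := fun y => (τ, y)) (by fun_prop) fun _ hy => ⟨hτ, hy⟩

/-- Continuity of an integral against `ballWeight` in a parameter. -/
theorem continuousOn_integral_ballWeight {n : ℕ} {α : Type*} [TopologicalSpace α]
    [FirstCountableTopology α] {F : α → En n → ℝ} {S : Set α}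
    (hF : ContinuousOn (Function.uncurry F) (S ×ˢ closedBall 0 1)) :
    ContinuousOn (fun τ => ∫ y, ballWeight y * F τ y) S := by
  intro τ₀ hτ₀
  obtain ⟨v, hv, hvF⟩ := (isCompact_closedBall (0 : En n) 1).mem_uniformity_of_prod hF hτ₀
    (dist_mem_uniformity one_pos)
  refine continuousWithinAt_of_dominated (bound := fun y => ballWeight y * (|F τ₀ y| + 1))
    ?_ ?_ ?_ ?_
  · filter_upwards [self_mem_nhdsWithin] with τ hτ
    exact (integrable_ballWeight_mul (continuousOn_right_of_uncurry hF hτ)).aestronglyMeasurable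
  · filter_upwards [hv] with τ hτ
    refine ae_of_all _ fun y => ?_
    by_cases hy : y ∈ closedBall (0 : En n) 1
    · rw [norm_mul, Real.norm_of_nonneg (ballWeight_nonneg y)]
      refine mul_le_mul_of_nonneg_left ?_ (ballWeight_nonneg y)
      have := hvF τ hτ y hy
      simp only [mem_ofPred_eq, Real.dist_eq] at this
      rw [Real.norm_eq_abs]
      have h2 := abs_sub_abs_le_abs_sub (F τ y) (F τ₀ y)
      linarith
    · simp [ballWeight_eq_zero_of_notMem hy]
  · exact integrable_ballWeight_mul
      ((continuousOn_right_of_uncurry hF hτ₀).abs.add continuousOn_const)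
  · refine ae_of_all _ fun y => ?_
    by_cases hy : y ∈ closedBall (0 : En n) 1
    · refine continuousWithinAt_const.mul ?_
      exact (hF (τ₀, y) ⟨hτ₀, hy⟩).comp (f := fun τ => (τ, y))
        (by fun_prop : Continuous fun τ : α => (τ, y)).continuousWithinAt fun τ hτ => ⟨hτ, hy⟩
    · simp only [ballWeight_eq_zero_of_notMem hy, zero_mul]; exact continuousWithinAt_const

/-- Differentiation under an integral against `ballWeight`. -/
theorem hasDerivAt_integral_ballWeight {n : ℕ} {F F' : ℝ → En n → ℝ} {S : Set ℝ} (hS : IsOpen S)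
    (hF : ∀ τ ∈ S, ContinuousOn (F τ) (closedBall 0 1))
    (hF' : ContinuousOn (Function.uncurry F') (S ×ˢ closedBall 0 1))
    (hd : ∀ τ ∈ S, ∀ y ∈ closedBall (0 : En n) 1, HasDerivAt (fun t => F t y) (F' τ y) τ)
    {τ₀ : ℝ} (hτ₀ : τ₀ ∈ S) :
    HasDerivAt (fun τ => ∫ y, ballWeight y * F τ y) (∫ y, ballWeight y * F' τ₀ y) τ₀ := by
  obtain ⟨v, hv, hvF⟩ := (isCompact_closedBall (0 : En n) 1).mem_uniformity_of_prod hF' hτ₀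
    (dist_mem_uniformity one_pos)
  rw [hS.nhdsWithin_eq hτ₀] at hv
  have hF'₀ := continuousOn_right_of_uncurry hF' hτ₀
  refine (hasDerivAt_integral_of_dominated_loc_of_deriv_le
    (F := fun τ y => ballWeight y * F τ y) (F' := fun τ y => ballWeight y * F' τ y)
    (bound := fun y => ballWeight y * (|F' τ₀ y| + 1)) (s := v ∩ S)
    (inter_mem hv (hS.mem_nhds hτ₀)) ?_ (integrable_ballWeight_mul (hF τ₀ hτ₀))
    (integrable_ballWeight_mul hF'₀).aestronglyMeasurable ?_
    (integrable_ballWeight_mul (hF'₀.abs.add continuousOn_const)) ?_).2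
  · filter_upwards [hS.mem_nhds hτ₀] with τ hτ
    exact (integrable_ballWeight_mul (hF τ hτ)).aestronglyMeasurable
  · refine ae_of_all _ fun y τ hτ => ?_
    by_cases hy : y ∈ closedBall (0 : En n) 1
    · rw [norm_mul, Real.norm_of_nonneg (ballWeight_nonneg y)]
      refine mul_le_mul_of_nonneg_left ?_ (ballWeight_nonneg y)
      have := hvF τ hτ.1 y hy
      simp only [mem_ofPred_eq, Real.dist_eq] at this
      rw [Real.norm_eq_abs]
      have h2 := abs_sub_abs_le_abs_sub (F' τ y) (F' τ₀ y)
      linarith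
    · simp [ballWeight_eq_zero_of_notMem hy]
  · refine ae_of_all _ fun y τ hτ => ?_
    by_cases hy : y ∈ closedBall (0 : En n) 1
    · exact (hd τ hτ.2 y hy).const_mul _
    · simp only [ballWeight_eq_zero_of_notMem hy, zero_mul]; exact hasDerivAt_const _ _

theorem laplacianAt_eq_sum_fderiv {n : ℕ} (u : En n → ℝ) (x : En n) :
    laplacianAt u x = ∑ i, fderiv ℝ (fderiv ℝ u) x (EuclideanSpace.single i 1)
      (EuclideanSpace.single i 1) := by
  simp [laplacianAt, iteratedFDeriv_two_apply]

theorem hasFDerivAt_comp_add_smul {n : ℕ} {F : Type*} [NormedAddCommGroup F] [NormedSpace ℝ F]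
    {f : En n → F} {f' : En n →L[ℝ] F} {x y : En n} {s : ℝ} (h : HasFDerivAt f f' (x + s • y)) :
    HasFDerivAt (fun y => f (x + s • y)) (s • f') y := by
  have h1 : HasFDerivAt (fun y : En n => x + s • y) (s • ContinuousLinearMap.id ℝ (En n)) y :=
    ((hasFDerivAt_id y).const_smul s).const_add x
  refine (h.comp y h1).congr_fderiv ?_
  ext z; simp

theorem hasDerivAt_comp_add_smul {n : ℕ} {F : Type*} [NormedAddCommGroup F] [NormedSpace ℝ F]
    {f : En n → F} {f' : En n →L[ℝ] F} {x y : En n} {s : ℝ} (h : HasFDerivAt f f' (x + s • y)) :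
    HasDerivAt (fun s : ℝ => f (x + s • y)) (f' y) s := by
  have h1 : HasDerivAt (fun s : ℝ => x + s • y) ((1 : ℝ) • y) s :=
    ((hasDerivAt_id s).smul_const y).const_add x
  have h2 := h.comp_hasDerivAt s h1
  rw [one_smul] at h2
  exact h2

theorem add_smul_mem_ball {n : ℕ} {x y : En n} {s R : ℝ} (hs : |s| < R)
    (hy : y ∈ closedBall (0 : En n) 1) : x + s • y ∈ ball x R := by
  simp only [mem_closedBall, dist_zero_right] at hy
  rw [mem_ball, dist_eq_norm, add_sub_cancel_left, norm_smul, Real.norm_eq_abs]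
  nlinarith [abs_nonneg s, norm_nonneg y]

theorem add_smul_mem_closedBall {n : ℕ} {x y : En n} {s : ℝ} (hs : 0 ≤ s)
    (hy : y ∈ closedBall (0 : En n) 1) : x + s • y ∈ closedBall x s := by
  simp only [mem_closedBall, dist_zero_right] at hy
  rw [mem_closedBall, dist_eq_norm, add_sub_cancel_left, norm_smul, Real.norm_of_nonneg hs]
  nlinarith [norm_nonneg y]

theorem sum_coord_mul_apply_single {n : ℕ} (L : En n →L[ℝ] ℝ) (y : En n) :
    ∑ i, y i * L (EuclideanSpace.single i 1) = L y := by
  conv_rhs => rw [← (EuclideanSpace.basisFun (Fin n) ℝ).sum_repr y]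
  simp

section C2

variable {n : ℕ} {f : En n → ℝ} {U : Set (En n)}

theorem contDiffOn_two_hasFDerivAt (hU : IsOpen U) (hf : ContDiffOn ℝ 2 f U) {x : En n}
    (hx : x ∈ U) : HasFDerivAt f (fderiv ℝ f x) x :=
  ((hf.contDiffAt (hU.mem_nhds hx)).differentiableAt (by norm_num)).hasFDerivAt

theorem contDiffOn_two_fderiv (hU : IsOpen U) (hf : ContDiffOn ℝ 2 f U) :
    ContDiffOn ℝ 1 (fderiv ℝ f) U :=
  hf.fderiv_of_isOpen hU (by norm_num)

theorem contDiffOn_two_hasFDerivAt_fderiv (hU : IsOpen U) (hf : ContDiffOn ℝ 2 f U) {x : En n}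
    (hx : x ∈ U) : HasFDerivAt (fderiv ℝ f) (fderiv ℝ (fderiv ℝ f) x) x :=
  (((contDiffOn_two_fderiv hU hf).contDiffAt (hU.mem_nhds hx)).differentiableAt
    (by norm_num)).hasFDerivAt

theorem contDiffOn_two_continuousOn_fderiv_fderiv (hU : IsOpen U) (hf : ContDiffOn ℝ 2 f U) :
    ContinuousOn (fderiv ℝ (fderiv ℝ f)) U :=
  (contDiffOn_two_fderiv hU hf).continuousOn_fderiv_of_isOpen hU le_rfl

end C2

theorem continuousOn_uncurry_comp {n : ℕ} {F : Type*} [TopologicalSpace F]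
    {f : En n → F} {x : En n} {R : ℝ} (hf : ContinuousOn f (ball x R))
    {c : ℝ → ℝ} (hc : Continuous c) {S : Set ℝ} (hcS : ∀ τ ∈ S, |c τ| < R) :
    ContinuousOn (fun p : ℝ × En n => f (x + c p.1 • p.2)) (S ×ˢ closedBall 0 1) :=
  hf.comp (f := fun p : ℝ × En n => x + c p.1 • p.2) (by fun_prop) fun p hp =>
    add_smul_mem_ball (hcS _ hp.1) hp.2

theorem continuousOn_comp_add_smul {n : ℕ} {F : Type*} [TopologicalSpace F]
    {f : En n → F} {x : En n} {R s : ℝ} (hf : ContinuousOn f (ball x R)) (hs : |s| < R) :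
    ContinuousOn (fun y : En n => f (x + s • y)) (closedBall 0 1) :=
  hf.comp (f := fun y : En n => x + s • y) (by fun_prop) fun y hy => add_smul_mem_ball hs hy

/-- The flux of the gradient of a rescaled `C²` function. -/
theorem integral_ballWeight_fderiv {n : ℕ} {f : En n → ℝ} {x : En n} {R s : ℝ}
    (hf : ContDiffOn ℝ 2 f (ball x R)) (hs : |s| < R) :
    ∫ y, ballWeight y * fderiv ℝ f (x + s • y) y
      = s * ∫ y, ballPotential y * laplacianAt f (x + s • y) := by
  have h := integral_ballWeight_flux (X := fun i y => fderiv ℝ f (x + s • y)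
      (EuclideanSpace.single i 1))
    (X' := fun i y => (s • fderiv ℝ (fderiv ℝ f) (x + s • y)).flip (EuclideanSpace.single i 1))
    (fun i y hy => by
      have h2 := hasFDerivAt_comp_add_smul (s := s) (y := y)
        (contDiffOn_two_hasFDerivAt_fderiv isOpen_ball hf (add_smul_mem_ball hs hy))
      refine (h2.clm_apply (hasFDerivAt_const (EuclideanSpace.single i (1 : ℝ)) y)).congr_fderiv ?_
      ext z; simp)
    (fun i => by
      refine ContinuousOn.integrableOn_compact (isCompact_closedBall _ _) ?_
      have := continuousOn_comp_add_smul
        (contDiffOn_two_continuousOn_fderiv_fderiv isOpen_ball hf) hs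
      exact ((this.const_smul s).clm_apply continuousOn_const).clm_apply continuousOn_const)
  simp only [sum_coord_mul_apply_single] at h
  rw [h, ← integral_const_mul]
  refine integral_congr_ae (ae_of_all _ fun y => ?_)
  simp only [laplacianAt_eq_sum_fderiv, ContinuousLinearMap.flip_apply,
    smul_apply, smul_eq_mul, ← Finset.mul_sum]
  ring

/-- The derivative of spherical-type means of a `C²` function in the radius. -/
theorem hasDerivAt_integral_ballWeight_comp {n : ℕ} {f : En n → ℝ} {x : En n} {R s : ℝ}
    (hf : ContDiffOn ℝ 1 f (ball x R)) (hs : |s| < R) :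
    HasDerivAt (fun s => ∫ y, ballWeight y * f (x + s • y))
      (∫ y, ballWeight y * fderiv ℝ f (x + s • y) y) s := by
  have hS : ∀ τ ∈ Ioo (-R) R, |τ| < R := fun τ hτ => abs_lt.2 hτ
  refine hasDerivAt_integral_ballWeight (F := fun s y => f (x + s • y))
    (F' := fun s y => fderiv ℝ f (x + s • y) y) (S := Ioo (-R) R) isOpen_Ioo
    (fun τ hτ => continuousOn_comp_add_smul hf.continuousOn (hS τ hτ)) ?_ ?_ (abs_lt.1 hs)
  · have := continuousOn_uncurry_comp
      (hf.continuousOn_fderiv_of_isOpen isOpen_ball le_rfl) continuous_id hS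
    exact this.clm_apply continuousOn_snd
  · intro τ hτ y hy
    exact hasDerivAt_comp_add_smul (((hf.contDiffAt (isOpen_ball.mem_nhds
      (add_smul_mem_ball (hS τ hτ) hy))).differentiableAt (by norm_num)).hasFDerivAt)

theorem integral_ballWeight_comp_of_flux_zero {n : ℕ} {f : En n → ℝ} {x : En n} {R s : ℝ}
    (hf : ContDiffOn ℝ 1 f (ball x R))
    (h0 : ∀ s, |s| < R → ∫ y, ballWeight y * fderiv ℝ f (x + s • y) y = 0) (hs : |s| < R) :
    ∫ y, ballWeight y * f (x + s • y) = ballMass n * f x := by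
  have hR : 0 < R := (abs_nonneg s).trans_lt hs
  have hd : ∀ τ ∈ Ioo (-R) R, HasDerivAt (fun s => ∫ y, ballWeight y * f (x + s • y)) 0 τ :=
    fun τ hτ => h0 τ (abs_lt.2 hτ) ▸ hasDerivAt_integral_ballWeight_comp hf (abs_lt.2 hτ)
  have := isOpen_Ioo.is_const_of_deriv_eq_zero (f := fun s => ∫ y, ballWeight y * f (x + s • y))
    (isPreconnected_Ioo (a := -R) (b := R))
    (fun τ hτ => (hd τ hτ).differentiableAt.differentiableWithinAt)
    (fun τ hτ => (hd τ hτ).deriv) (abs_lt.1 hs) (y := 0) ⟨by linarith, hR⟩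
  refine this.trans ?_
  simp [integral_mul_const, ballMass]

/-- The solid mean value property. -/
theorem HarmonicOnSet.integral_ballWeight {n : ℕ} {f : En n → ℝ} {x : En n} {R s : ℝ}
    (hf : HarmonicOnSet f (ball x R)) (hs : |s| < R) :
    ∫ y, ballWeight y * f (x + s • y) = ballMass n * f x := by
  refine integral_ballWeight_comp_of_flux_zero (hf.1.of_le (by norm_num)) (fun s hs => ?_) hs
  rw [integral_ballWeight_fderiv hf.1 hs, integral_eq_zero_of_ae, mul_zero]
  refine ae_of_all _ fun y => ?_
  by_cases hy : y ∈ closedBall (0 : En n) 1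
  · simp [hf.2 _ (add_smul_mem_ball hs hy)]
  · simp [ballPotential_eq_zero_of_notMem hy]

/-- The antisymmetric flux of two rescaled harmonic functions vanishes. -/
theorem HarmonicOnSet.integral_wronskian {n : ℕ} {f g : En n → ℝ} {x : En n} {R a b : ℝ}
    (hf : HarmonicOnSet f (ball x R)) (hg : HarmonicOnSet g (ball x R))
    (ha : |a| < R) (hb : |b| < R) :
    ∫ y, ballWeight y * (a * fderiv ℝ f (x + a • y) y * g (x + b • y)
      + f (x + a • y) * (-b * fderiv ℝ g (x + b • y) y)) = 0 := by
  have hfd : ∀ {y}, y ∈ closedBall (0 : En n) 1 → HasFDerivAt (fun y => f (x + a • y))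
      (a • fderiv ℝ f (x + a • y)) y := fun hy => hasFDerivAt_comp_add_smul
    (contDiffOn_two_hasFDerivAt isOpen_ball hf.1 (add_smul_mem_ball ha hy))
  have hgd : ∀ {y}, y ∈ closedBall (0 : En n) 1 → HasFDerivAt (fun y => g (x + b • y))
      (b • fderiv ℝ g (x + b • y)) y := fun hy => hasFDerivAt_comp_add_smul
    (contDiffOn_two_hasFDerivAt isOpen_ball hg.1 (add_smul_mem_ball hb hy))
  have hfdd : ∀ {y} (e : En n), y ∈ closedBall (0 : En n) 1 →
      HasFDerivAt (fun y => fderiv ℝ f (x + a • y) e)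
        ((a • fderiv ℝ (fderiv ℝ f) (x + a • y)).flip e) y := fun e hy => by
    have h2 := hasFDerivAt_comp_add_smul (s := a) (y := _)
      (contDiffOn_two_hasFDerivAt_fderiv isOpen_ball hf.1 (add_smul_mem_ball ha hy))
    refine (h2.clm_apply (hasFDerivAt_const e _)).congr_fderiv ?_
    ext z; simp
  have hgdd : ∀ {y} (e : En n), y ∈ closedBall (0 : En n) 1 →
      HasFDerivAt (fun y => fderiv ℝ g (x + b • y) e)
        ((b • fderiv ℝ (fderiv ℝ g) (x + b • y)).flip e) y := fun e hy => by
    have h2 := hasFDerivAt_comp_add_smul (s := b) (y := _)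
      (contDiffOn_two_hasFDerivAt_fderiv isOpen_ball hg.1 (add_smul_mem_ball hb hy))
    refine (h2.clm_apply (hasFDerivAt_const e _)).congr_fderiv ?_
    ext z; simp
  have cf := continuousOn_comp_add_smul hf.1.continuousOn ha
  have cg := continuousOn_comp_add_smul hg.1.continuousOn hb
  have cf1 := continuousOn_comp_add_smul (contDiffOn_two_fderiv isOpen_ball hf.1).continuousOn ha
  have cg1 := continuousOn_comp_add_smul (contDiffOn_two_fderiv isOpen_ball hg.1).continuousOn hb
  have cf2 := continuousOn_comp_add_smul
    (contDiffOn_two_continuousOn_fderiv_fderiv isOpen_ball hf.1) ha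
  have cg2 := continuousOn_comp_add_smul
    (contDiffOn_two_continuousOn_fderiv_fderiv isOpen_ball hg.1) hb
  have key := integral_ballWeight_flux
    (X := fun i y => a * fderiv ℝ f (x + a • y) (EuclideanSpace.single i 1) * g (x + b • y)
      - b * fderiv ℝ g (x + b • y) (EuclideanSpace.single i 1) * f (x + a • y))
    (X' := fun i y =>
      ((a * fderiv ℝ f (x + a • y) (EuclideanSpace.single i 1)) • (b • fderiv ℝ g (x + b • y))
        + g (x + b • y) • (a • (a • fderiv ℝ (fderiv ℝ f) (x + a • y)).flip
          (EuclideanSpace.single i 1)))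
      - ((b * fderiv ℝ g (x + b • y) (EuclideanSpace.single i 1)) • (a • fderiv ℝ f (x + a • y))
        + f (x + a • y) • (b • (b • fderiv ℝ (fderiv ℝ g) (x + b • y)).flip
          (EuclideanSpace.single i 1))))
    (fun i y hy => (((hfdd _ hy).const_mul a).mul (hgd hy)).sub
      (((hgdd _ hy).const_mul b).mul (hfd hy)))
    (fun i => by
      refine ContinuousOn.integrableOn_compact (isCompact_closedBall _ _) ?_
      set e : En n := EuclideanSpace.single i 1
      have d1 := cf1.clm_apply (continuousOn_const (c := e))
      have d2 := cg1.clm_apply (continuousOn_const (c := e))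
      have d3 := (cf2.clm_apply (continuousOn_const (c := e))).clm_apply
        (continuousOn_const (c := e))
      have d4 := (cg2.clm_apply (continuousOn_const (c := e))).clm_apply
        (continuousOn_const (c := e))
      exact (((d1.const_smul a).smul (d2.const_smul b)).add
        (cg.smul ((d3.const_smul a).const_smul a))).sub
        (((d2.const_smul b).smul (d1.const_smul a)).add
        (cf.smul ((d4.const_smul b).const_smul b))))
  have hdiv : ∀ y, ballPotential y * ∑ i, (((a * fderiv ℝ f (x + a • y)
        (EuclideanSpace.single i 1)) • (b • fderiv ℝ g (x + b • y))
        + g (x + b • y) • (a • (a • fderiv ℝ (fderiv ℝ f) (x + a • y)).flip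
          (EuclideanSpace.single i 1)))
      - ((b * fderiv ℝ g (x + b • y) (EuclideanSpace.single i 1)) • (a • fderiv ℝ f (x + a • y))
        + f (x + a • y) • (b • (b • fderiv ℝ (fderiv ℝ g) (x + b • y)).flip
          (EuclideanSpace.single i 1)))) (EuclideanSpace.single i 1) = 0 := by
    intro y
    by_cases hy : y ∈ closedBall (0 : En n) 1
    · have h1 := hf.2 _ (add_smul_mem_ball ha hy)
      have h2 := hg.2 _ (add_smul_mem_ball hb hy)
      rw [laplacianAt_eq_sum_fderiv] at h1 h2
      have h3 : ∑ i : Fin n, (((a * fderiv ℝ f (x + a • y)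
          (EuclideanSpace.single i 1)) • (b • fderiv ℝ g (x + b • y))
          + g (x + b • y) • (a • (a • fderiv ℝ (fderiv ℝ f) (x + a • y)).flip
            (EuclideanSpace.single i 1)))
        - ((b * fderiv ℝ g (x + b • y) (EuclideanSpace.single i 1)) • (a • fderiv ℝ f (x + a • y))
          + f (x + a • y) • (b • (b • fderiv ℝ (fderiv ℝ g) (x + b • y)).flip
            (EuclideanSpace.single i 1)))) (EuclideanSpace.single i 1)
          = ∑ i : Fin n, (g (x + b • y) * a * a * fderiv ℝ (fderiv ℝ f) (x + a • y)
            (EuclideanSpace.single i 1) (EuclideanSpace.single i 1)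
          - f (x + a • y) * b * b * fderiv ℝ (fderiv ℝ g) (x + b • y)
            (EuclideanSpace.single i 1) (EuclideanSpace.single i 1)) := by
        refine Finset.sum_congr rfl fun i _ => ?_
        simp only [sub_apply, add_apply, smul_apply, ContinuousLinearMap.flip_apply, smul_eq_mul]
        ring
      rw [h3, Finset.sum_sub_distrib, ← Finset.mul_sum, ← Finset.mul_sum, h1, h2]
      simp
    · simp [ballPotential_eq_zero_of_notMem hy]
  simp only [hdiv, integral_zero] at key
  rw [← key]
  refine integral_congr_ae (ae_of_all _ fun y => ?_)
  simp only
  congr 1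
  rw [← sum_coord_mul_apply_single (fderiv ℝ f (x + a • y)) y,
    ← sum_coord_mul_apply_single (fderiv ℝ g (x + b • y)) y]
  simp only [Finset.mul_sum, Finset.sum_mul, ← Finset.sum_add_distrib]
  exact Finset.sum_congr rfl fun i _ => by ring

/-- For harmonic `f` and `g` the weighted integral of `f (x + s y) * g (x + t y)` depends only on
the product `s * t`. -/
theorem HarmonicOnSet.integral_mul_dilation {n : ℕ} {f g : En n → ℝ} {x : En n}
    {R s t s' t' : ℝ} (hf : HarmonicOnSet f (ball x R)) (hg : HarmonicOnSet g (ball x R))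
    (hs : 0 < s) (hsR : s < R) (ht : 0 < t) (htR : t < R) (hs' : 0 < s') (hsR' : s' < R)
    (htR' : t' < R) (h : s * t = s' * t') :
    ∫ y, ballWeight y * (f (x + s • y) * g (x + t • y))
      = ∫ y, ballWeight y * (f (x + s' • y) * g (x + t' • y)) := by
  set a : ℝ → ℝ := fun τ => s * Real.exp τ with ha
  set b : ℝ → ℝ := fun τ => t * Real.exp (-τ) with hb
  set S := {τ : ℝ | a τ < R ∧ b τ < R} with hS
  have hac : Continuous a := by fun_prop
  have hbc : Continuous b := by fun_prop
  have haS : ∀ τ ∈ S, |a τ| < R := fun τ hτ => by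
    rw [abs_of_pos (by positivity)]; exact hτ.1
  have hbS : ∀ τ ∈ S, |b τ| < R := fun τ hτ => by
    rw [abs_of_pos (by positivity)]; exact hτ.2
  have hSo : IsOpen S := (isOpen_lt hac continuous_const).inter (isOpen_lt hbc continuous_const)
  have hSc : IsPreconnected S := by
    refine Set.OrdConnected.isPreconnected ⟨fun τ₁ h1 τ₂ h2 τ hτ => ⟨?_, ?_⟩⟩
    · refine lt_of_le_of_lt ?_ h2.1
      exact mul_le_mul_of_nonneg_left (Real.exp_le_exp.2 hτ.2) hs.le
    · refine lt_of_le_of_lt ?_ h1.2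
      exact mul_le_mul_of_nonneg_left (Real.exp_le_exp.2 (neg_le_neg hτ.1)) ht.le
  have hd : ∀ τ ∈ S, HasDerivAt
      (fun τ => ∫ y, ballWeight y * (f (x + a τ • y) * g (x + b τ • y))) 0 τ := by
    intro τ hτ
    rw [← hf.integral_wronskian hg (haS τ hτ) (hbS τ hτ)]
    refine hasDerivAt_integral_ballWeight (F := fun τ y => f (x + a τ • y) * g (x + b τ • y))
      (F' := fun τ y => a τ * fderiv ℝ f (x + a τ • y) y * g (x + b τ • y)
        + f (x + a τ • y) * (-b τ * fderiv ℝ g (x + b τ • y) y)) hSo ?_ ?_ ?_ hτ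
    · exact fun τ hτ => (continuousOn_comp_add_smul hf.1.continuousOn (haS τ hτ)).mul
        (continuousOn_comp_add_smul hg.1.continuousOn (hbS τ hτ))
    · have c1 := continuousOn_uncurry_comp hf.1.continuousOn hac haS
      have c2 := continuousOn_uncurry_comp hg.1.continuousOn hbc hbS
      have c3 := continuousOn_uncurry_comp
        (contDiffOn_two_fderiv isOpen_ball hf.1).continuousOn hac haS
      have c4 := continuousOn_uncurry_comp
        (contDiffOn_two_fderiv isOpen_ball hg.1).continuousOn hbc hbS
      have c5 := (hac.comp continuous_fst).continuousOn (s := S ×ˢ closedBall (0 : En n) 1)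
      have c6 := (hbc.comp continuous_fst).continuousOn (s := S ×ˢ closedBall (0 : En n) 1)
      exact ((c5.mul (c3.clm_apply continuousOn_snd)).mul c2).add
        (c1.mul (c6.neg.mul (c4.clm_apply continuousOn_snd)))
    · intro τ hτ y hy
      have da : HasDerivAt a (a τ) τ := (Real.hasDerivAt_exp τ).const_mul s
      have db : HasDerivAt b (-b τ) τ := by
        have := ((Real.hasDerivAt_exp (-τ)).comp τ (hasDerivAt_neg τ)).const_mul t
        refine this.congr_deriv ?_
        simp [hb]
      have e1 := (hasDerivAt_comp_add_smul (contDiffOn_two_hasFDerivAt isOpen_ball hf.1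
        (add_smul_mem_ball (haS τ hτ) hy))).comp τ da
      have e2 := (hasDerivAt_comp_add_smul (contDiffOn_two_hasFDerivAt isOpen_ball hg.1
        (add_smul_mem_ball (hbS τ hτ) hy))).comp τ db
      refine (e1.mul e2).congr_deriv ?_
      simp only [Function.comp_apply]
      ring
  have h0 : (0 : ℝ) ∈ S := by simp [hS, ha, hb, hsR, htR]
  have ha1 : a (Real.log (s' / s)) = s' := by
    simp only [ha]; rw [Real.exp_log (by positivity)]; field_simp
  have hb1 : b (Real.log (s' / s)) = t' := by
    simp only [hb]; rw [Real.exp_neg, Real.exp_log (by positivity)]; field_simp; linarith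
  have h1 : Real.log (s' / s) ∈ S := by
    rw [hS, mem_ofPred, ha1, hb1]; exact ⟨hsR', htR'⟩
  have := hSo.is_const_of_deriv_eq_zero hSc
    (fun τ hτ => (hd τ hτ).differentiableAt.differentiableWithinAt)
    (fun τ hτ => (hd τ hτ).deriv) h0 h1
  have ha0 : a 0 = s := by simp [ha]
  have hb0 : b 0 = t := by simp [hb]
  rwa [ha1, hb1, ha0, hb0] at this

theorem exists_ball_subset_of_closedBall_subset {n : ℕ} {U : Set (En n)} (hU : IsOpen U) {x : En n}
    {r : ℝ} (hr : 0 ≤ r) (h : closedBall x r ⊆ U) : ∃ R, r < R ∧ ball x R ⊆ U := by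
  obtain ⟨δ, hδ, hd⟩ := (isCompact_closedBall x r).exists_thickening_subset_open hU h
  rw [thickening_closedBall hδ hr] at hd
  exact ⟨δ + r, by linarith, hd⟩

/-- Continuity together with the solid mean value property for the weight `ballWeight`. -/
def MeanValueOn {n : ℕ} (f : En n → ℝ) (U : Set (En n)) : Prop :=
  ContinuousOn f U ∧ ∀ x r, 0 < r → closedBall x r ⊆ U →
    ∫ y, ballWeight y * f (x + r • y) = ballMass n * f x

section

variable {n : ℕ} {f g : En n → ℝ} {U V : Set (En n)}

theorem HarmonicOnSet.mono (hf : HarmonicOnSet f U) (h : V ⊆ U) : HarmonicOnSet f V :=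
  ⟨hf.1.mono h, fun x hx => hf.2 x (h hx)⟩

theorem HarmonicOnSet.meanValueOn (hU : IsOpen U) (hf : HarmonicOnSet f U) : MeanValueOn f U := by
  refine ⟨hf.1.continuousOn, fun x r hr hx => ?_⟩
  obtain ⟨R, hR, hRU⟩ := exists_ball_subset_of_closedBall_subset hU hr.le hx
  exact (hf.mono hRU).integral_ballWeight (by rwa [abs_of_pos hr])

theorem continuousOn_comp_closedBall {F : Type*} [TopologicalSpace F] {f : En n → F} {x : En n}
    {r : ℝ} (hr : 0 ≤ r) (hf : ContinuousOn f (closedBall x r)) :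
    ContinuousOn (fun y => f (x + r • y)) (closedBall 0 1) :=
  hf.comp (f := fun y : En n => x + r • y) (by fun_prop) fun _ hy => add_smul_mem_closedBall hr hy

theorem MeanValueOn.integrable (hf : MeanValueOn f U) {x : En n} {r : ℝ} (hr : 0 < r)
    (h : closedBall x r ⊆ U) : Integrable fun y => ballWeight y * f (x + r • y) :=
  integrable_ballWeight_mul (continuousOn_comp_closedBall hr.le (hf.1.mono h))

theorem MeanValueOn.sub (hf : MeanValueOn f U) (hg : MeanValueOn g U) :
    MeanValueOn (fun x => f x - g x) U := by
  refine ⟨hf.1.sub hg.1, fun x r hr h => ?_⟩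
  simp only [mul_sub]
  rw [integral_sub (hf.integrable hr h) (hg.integrable hr h), hf.2 x r hr h, hg.2 x r hr h]

theorem MeanValueOn.const_mul (hf : MeanValueOn f U) (c : ℝ) :
    MeanValueOn (fun x => c * f x) U := by
  refine ⟨continuousOn_const.mul hf.1, fun x r hr h => ?_⟩
  simp only [mul_left_comm _ c]
  rw [integral_const_mul, hf.2 x r hr h]

theorem MeanValueOn.of_tendstoUniformlyOn {u : ℕ → En n → ℝ} (hu : ∀ j, MeanValueOn (u j) U)
    (h : TendstoUniformlyOn u f atTop U) : MeanValueOn f U := by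
  have hfc : ContinuousOn f U := h.continuousOn (Frequently.of_forall fun j => (hu j).1)
  refine ⟨hfc, fun x r hr hx => ?_⟩
  have hxU : x ∈ U := hx (mem_closedBall_self hr.le)
  have h1 : Tendsto (fun j => ballMass n * u j x) atTop (𝓝 (ballMass n * f x)) :=
    (h.tendsto_at hxU).const_mul _
  refine tendsto_nhds_unique ?_ h1
  simp only [← (hu _).2 x r hr hx]
  have hfi : Integrable fun y => ballWeight y * f (x + r • y) :=
    integrable_ballWeight_mul (continuousOn_comp_closedBall hr.le (hfc.mono hx))
  refine tendsto_integral_filter_of_dominated_convergence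
    (fun y => ballWeight y * (|f (x + r • y)| + 1)) ?_ ?_ ?_ ?_
  · exact Eventually.of_forall fun j => ((hu j).integrable hr hx).aestronglyMeasurable
  · filter_upwards [Metric.tendstoUniformlyOn_iff.1 h 1 one_pos] with j hj
    refine ae_of_all _ fun y => ?_
    by_cases hy : y ∈ closedBall (0 : En n) 1
    · rw [norm_mul, Real.norm_of_nonneg (ballWeight_nonneg y)]
      refine mul_le_mul_of_nonneg_left ?_ (ballWeight_nonneg y)
      have := hj _ (hx (add_smul_mem_closedBall hr.le hy))
      rw [dist_comm, Real.dist_eq] at this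
      rw [Real.norm_eq_abs]
      have h2 := abs_sub_abs_le_abs_sub (u j (x + r • y)) (f (x + r • y))
      linarith
    · simp [ballWeight_eq_zero_of_notMem hy]
  · exact integrable_ballWeight_mul
      ((continuousOn_comp_closedBall hr.le (hfc.mono hx)).abs.add continuousOn_const)
  · refine ae_of_all _ fun y => ?_
    by_cases hy : y ∈ closedBall (0 : En n) 1
    · exact (h.tendsto_at (hx (add_smul_mem_closedBall hr.le hy))).const_mul _
    · simp only [ballWeight_eq_zero_of_notMem hy, zero_mul]; exact tendsto_const_nhds

theorem integral_comp_smul_ballWeight {r : ℝ} (hr : 0 < r) (F : En n → ℝ) :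
    ∫ y, ballWeight y * F (r • y) = (r ^ n)⁻¹ * ∫ z, ballWeight (r⁻¹ • z) * F z := by
  have := Measure.integral_comp_smul (volume : Measure (En n))
    (fun z => ballWeight (r⁻¹ • z) * F z) r
  simp only [smul_smul, inv_mul_cancel₀ hr.ne', one_smul] at this
  rw [this, abs_of_pos (by positivity)]
  simp

/-- Functions with the mean value property are smooth. -/
theorem MeanValueOn.contDiffOn (hU : IsOpen U) (hf : MeanValueOn f U) {k : ℕ∞} :
    ContDiffOn ℝ k f U := by
  intro x₀ hx₀
  obtain ⟨ε, hε, hεU⟩ := Metric.isOpen_iff.1 hU x₀ hx₀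
  set r := ε / 4 with hr
  have hr0 : 0 < r := by positivity
  have hsub : closedBall x₀ (2 * r) ⊆ U :=
    (closedBall_subset_ball (by rw [hr]; linarith)).trans hεU
  set F := (closedBall x₀ (2 * r)).indicator f with hF
  have hFi : Integrable F := (integrable_indicator_iff measurableSet_closedBall).2
    ((hf.1.mono hsub).integrableOn_compact (isCompact_closedBall _ _))
  set w : En n → ℝ := fun z => ballWeight (r⁻¹ • z) with hw
  have hwc : ContDiff ℝ k w := ballWeight_contDiff.comp (contDiff_const_smul _)
  have hws : HasCompactSupport w := by
    refine HasCompactSupport.intro (isCompact_closedBall (0 : En n) r) fun z hz => ?_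
    refine ballWeight_eq_zero ?_
    simp only [mem_closedBall, dist_zero_right, not_le] at hz
    rw [norm_smul, norm_inv, Real.norm_of_nonneg hr0.le]
    rw [inv_mul_eq_div, le_div_iff₀ hr0]; linarith
  have hconv := hws.contDiff_convolution_left (ContinuousLinearMap.mul ℝ ℝ) hwc
    hFi.locallyIntegrable (μ := volume)
  have heq : ∀ x ∈ ball x₀ r, f x = (ballMass n)⁻¹ * ((r ^ n)⁻¹ *
      MeasureTheory.convolution w F (ContinuousLinearMap.mul ℝ ℝ) volume x) := by
    intro x hx
    have hxs : closedBall x r ⊆ closedBall x₀ (2 * r) := by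
      refine closedBall_subset_closedBall' ?_
      rw [mem_ball] at hx; linarith
    rw [eq_inv_mul_iff_mul_eq₀ (ballMass_pos n).ne', ← hf.2 x r hr0 (hxs.trans hsub)]
    have e1 : ∫ y, ballWeight y * f (x + r • y) = ∫ y, ballWeight y * F (x + r • y) := by
      refine integral_congr_ae (ae_of_all _ fun y => ?_)
      by_cases hy : y ∈ closedBall (0 : En n) 1
      · simp only [hF]
        rw [indicator_of_mem (hxs (add_smul_mem_closedBall hr0.le hy))]
      · simp [ballWeight_eq_zero_of_notMem hy]
    rw [e1, integral_comp_smul_ballWeight hr0 (fun z => F (x + z)), convolution]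
    congr 1
    rw [← integral_neg_eq_self]
    refine integral_congr_ae (ae_of_all _ fun z => ?_)
    simp [hw, ballWeight_neg, sub_eq_add_neg]
  refine ContDiffAt.contDiffWithinAt ?_
  have hc : ContDiffAt ℝ k (fun x => (ballMass n)⁻¹ * ((r ^ n)⁻¹ *
      MeasureTheory.convolution w F (ContinuousLinearMap.mul ℝ ℝ) volume x)) x₀ :=
    contDiffAt_const.mul (contDiffAt_const.mul hconv.contDiffAt)
  refine hc.congr_of_eventuallyEq ?_
  filter_upwards [ball_mem_nhds x₀ hr0] with x hx using heq x hx

theorem integral_ballPotential_mul_pos {F : En n → ℝ} (hF : ContinuousOn F (closedBall 0 1))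
    (hpos : ∀ y ∈ closedBall (0 : En n) 1, 0 < F y) : 0 < ∫ y, ballPotential y * F y :=
  integral_mul_pos_of_ball ballPotential_continuous (fun _ => ballPotential_pos)
    (fun _ => ballPotential_eq_zero_of_notMem) hF (fun y hy => (hpos y hy).le) (y₀ := 0) (by simp)
    (hpos 0 (by simp))

theorem continuousOn_laplacianAt (hU : IsOpen U) (hf : ContDiffOn ℝ 2 f U) :
    ContinuousOn (laplacianAt f) U := by
  have h := contDiffOn_two_continuousOn_fderiv_fderiv hU hf
  refine ContinuousOn.congr (f := fun x => ∑ i, fderiv ℝ (fderiv ℝ f) x (EuclideanSpace.single i 1)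
      (EuclideanSpace.single i 1)) ?_ fun x _ => laplacianAt_eq_sum_fderiv f x
  exact continuousOn_finsetSum _ fun i _ =>
    (h.clm_apply continuousOn_const).clm_apply continuousOn_const

/-- Functions with the mean value property are harmonic. -/
theorem MeanValueOn.harmonicOnSet (hU : IsOpen U) (hf : MeanValueOn f U) : HarmonicOnSet f U := by
  have h2 : ContDiffOn ℝ 2 f U := hf.contDiffOn hU (k := 2)
  refine ⟨h2, fun x hx => ?_⟩
  obtain ⟨ε, hε, hεU⟩ := Metric.isOpen_iff.1 hU x hx
  have hflux : ∀ s, 0 < s → s < ε → ∫ y, ballPotential y * laplacianAt f (x + s • y) = 0 := by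
    intro s hs hsε
    have habs : |s| < ε := by rwa [abs_of_pos hs]
    have h3 := hasDerivAt_integral_ballWeight_comp ((h2.mono hεU).of_le (by norm_num)) habs
    have h4 : HasDerivAt (fun s => ∫ y, ballWeight y * f (x + s • y)) 0 s := by
      refine (hasDerivAt_const s (ballMass n * f x)).congr_of_eventuallyEq ?_
      filter_upwards [Ioo_mem_nhds hs hsε] with t ht
      exact hf.2 x t ht.1 ((closedBall_subset_ball ht.2).trans hεU)
    have h5 := h3.unique h4
    rw [integral_ballWeight_fderiv (h2.mono hεU) habs] at h5
    exact (mul_eq_zero.1 h5).resolve_left hs.ne'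
  have hc := (continuousOn_laplacianAt hU h2).continuousAt (hU.mem_nhds hx)
  by_contra hne
  have hev : ∀ᶠ z in 𝓝 x, 0 < laplacianAt f z * laplacianAt f x := by
    have := hc.mul_const (laplacianAt f x)
    exact continuousAt_const.eventually_lt this (mul_self_pos.2 hne)
  obtain ⟨δ, hδ, hδp⟩ := Metric.eventually_nhds_iff_ball.1 hev
  set s := min δ ε / 2 with hs
  have hm : 0 < min δ ε := lt_min hδ hε
  have hs0 : 0 < s := by positivity
  have hsδ : s < δ := by have := min_le_left δ ε; rw [hs]; linarith
  have hsε : s < ε := by have := min_le_right δ ε; rw [hs]; linarith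
  have := integral_ballPotential_mul_pos
    (F := fun y : En n => laplacianAt f (x + s • y) * laplacianAt f x)
    ((continuousOn_comp_closedBall hs0.le ((continuousOn_laplacianAt hU h2).mono
      ((closedBall_subset_ball hsε).trans hεU))).mul continuousOn_const)
    (fun y hy => hδp _ (closedBall_subset_ball hsδ (add_smul_mem_closedBall hs0.le hy)))
  simp only [← mul_assoc] at this
  rw [integral_mul_const, hflux s hs0 hsε, zero_mul] at this
  exact lt_irrefl _ this

theorem HarmonicOnSet.contDiffOn (hU : IsOpen U) (hf : HarmonicOnSet f U) {k : ℕ∞} :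
    ContDiffOn ℝ k f U :=
  (hf.meanValueOn hU).contDiffOn hU

end

section

variable {n : ℕ} {f g : En n → ℝ} {U V : Set (En n)}

theorem MeanValueOn.hasFDerivAt (hU : IsOpen U) (hf : MeanValueOn f U) {x : En n} (hx : x ∈ U) :
    HasFDerivAt f (fderiv ℝ f x) x :=
  contDiffOn_two_hasFDerivAt hU (hf.contDiffOn hU (k := 2)) hx

/-- Directional derivatives inherit the mean value property. -/
theorem MeanValueOn.fderiv_apply (hU : IsOpen U) (hf : MeanValueOn f U) (e : En n) :
    MeanValueOn (fun x => fderiv ℝ f x e) U := by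
  have h2 := contDiffOn_two_fderiv hU (hf.contDiffOn hU (k := 2))
  refine ⟨h2.continuousOn.clm_apply continuousOn_const, fun x r hr hx => ?_⟩
  obtain ⟨R, hR, hRU⟩ := exists_ball_subset_of_closedBall_subset hU hr.le hx
  set S : Set ℝ := {τ | |τ| * ‖e‖ + r < R} with hS
  have hSo : IsOpen S := isOpen_lt (by fun_prop) continuous_const
  have h0 : (0 : ℝ) ∈ S := by simpa [hS] using hR
  have hsub : ∀ τ ∈ S, closedBall (x + τ • e) r ⊆ U := fun τ hτ => by
    refine Subset.trans (fun z hz => ?_) hRU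
    rw [mem_closedBall] at hz
    rw [mem_ball]
    have h3 : dist (x + τ • e) x = |τ| * ‖e‖ := by
      rw [dist_eq_norm, add_sub_cancel_left, norm_smul, Real.norm_eq_abs]
    have := dist_triangle z (x + τ • e) x
    have h4 : |τ| * ‖e‖ + r < R := hτ
    linarith
  have hmem : ∀ τ ∈ S, ∀ y ∈ closedBall (0 : En n) 1, x + τ • e + r • y ∈ U :=
    fun τ hτ y hy => hsub τ hτ (add_smul_mem_closedBall hr.le hy)
  have hd := hasDerivAt_integral_ballWeight (F := fun τ y => f (x + τ • e + r • y))
    (F' := fun τ y => fderiv ℝ f (x + τ • e + r • y) e) hSo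
    (fun τ hτ => continuousOn_comp_closedBall hr.le (hf.1.mono (hsub τ hτ)))
    ((h2.continuousOn.comp (f := fun p : ℝ × En n => x + p.1 • e + r • p.2) (by fun_prop)
      fun p hp => hmem p.1 hp.1 p.2 hp.2).clm_apply continuousOn_const)
    (fun τ hτ y hy => by
      have hcomm : ∀ t : ℝ, x + r • y + t • e = x + t • e + r • y := fun t =>
        add_right_comm _ _ _
      have := hasDerivAt_comp_add_smul (x := x + r • y) (y := e) (s := τ)
        (hf.hasFDerivAt hU (by rw [hcomm]; exact hmem τ hτ y hy))
      simpa only [hcomm] using this)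
    h0
  have hd' : HasDerivAt (fun τ : ℝ => ∫ y, ballWeight y * f (x + τ • e + r • y))
      (ballMass n * fderiv ℝ f x e) 0 := by
    have h3 : HasDerivAt (fun τ : ℝ => ballMass n * f (x + τ • e))
        (ballMass n * fderiv ℝ f x e) 0 := by
      have := hasDerivAt_comp_add_smul (x := x) (y := e) (s := (0 : ℝ))
        (hf.hasFDerivAt hU (by simpa using hx (mem_closedBall_self hr.le)))
      simpa using this.const_mul (ballMass n)
    refine h3.congr_of_eventuallyEq ?_
    filter_upwards [hSo.mem_nhds h0] with τ hτ using hf.2 _ r hr (hsub τ hτ)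
  simpa using hd.unique hd'

theorem ballWeight_tsupport : tsupport (ballWeight : En n → ℝ) ⊆ closedBall 0 1 :=
  closure_minimal (fun y hy => by
    by_contra h
    exact hy (ballWeight_eq_zero_of_notMem h)) isClosed_closedBall

theorem ballWeight_hasCompactSupport : HasCompactSupport (ballWeight : En n → ℝ) :=
  HasCompactSupport.intro (isCompact_closedBall (0 : En n) 1) fun _ =>
    ballWeight_eq_zero_of_notMem

theorem ballWeight_integrable_norm_fderiv :
    Integrable fun y : En n => ‖fderiv ℝ ballWeight y‖ :=
  (((ballWeight_contDiff (n := n) (k := 1)).continuous_fderiv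
    (by norm_num)).integrable_of_hasCompactSupport (ballWeight_hasCompactSupport.fderiv ℝ)).norm

/-- The constant in the gradient estimate. -/
def gradientConst (n : ℕ) : ℝ := (∫ y : En n, ‖fderiv ℝ ballWeight y‖) / ballMass n

theorem gradientConst_nonneg (n : ℕ) : 0 ≤ gradientConst n :=
  div_nonneg (integral_nonneg fun _ => norm_nonneg _) (ballMass_pos n).le

/-- The gradient estimate for functions with the mean value property. -/
theorem MeanValueOn.norm_fderiv_le (hU : IsOpen U) (hf : MeanValueOn f U) {x : En n} {r M : ℝ}
    (hr : 0 < r) (hx : closedBall x r ⊆ U) (hM : ∀ z ∈ closedBall x r, |f z| ≤ M) :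
    ‖fderiv ℝ f x‖ ≤ gradientConst n / r * M := by
  have hM0 : 0 ≤ M := (abs_nonneg _).trans (hM x (mem_closedBall_self hr.le))
  refine ContinuousLinearMap.opNorm_le_bound _
    (mul_nonneg (div_nonneg (gradientConst_nonneg n) hr.le) hM0) fun e => ?_
  have hmem : ∀ {y}, y ∈ closedBall (0 : En n) 1 → x + r • y ∈ U := fun hy =>
    hx (add_smul_mem_closedBall hr.le hy)
  have hfd : ∀ {y}, y ∈ closedBall (0 : En n) 1 → HasFDerivAt (fun y => f (x + r • y))
      (r • fderiv ℝ f (x + r • y)) y := fun hy =>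
    hasFDerivAt_comp_add_smul (hf.hasFDerivAt hU (hmem hy))
  have hcφ : Continuous fun y : En n => fderiv ℝ ballWeight y e :=
    ((ballWeight_contDiff (k := 1)).continuous_fderiv (by norm_num)).clm_apply continuous_const
  have h0φ : ∀ y ∉ closedBall (0 : En n) 1, fderiv ℝ ballWeight y e = 0 := fun y hy => by
    have : fderiv ℝ ballWeight y = 0 := by
      by_contra h
      exact hy (ballWeight_tsupport (support_fderiv_subset ℝ h))
    simp [this]
  have hcf := continuousOn_comp_closedBall hr.le (hf.1.mono hx)
  have hg := hf.fderiv_apply hU e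
  have e1 : ∀ y : En n, fderiv ℝ (fun y => f (x + r • y)) y e * ballWeight y
      = r * (ballWeight y * fderiv ℝ f (x + r • y) e) := fun y => by
    by_cases hy : y ∈ closedBall (0 : En n) 1
    · rw [(hfd hy).fderiv, smul_apply, smul_eq_mul]; ring
    · simp [ballWeight_eq_zero_of_notMem hy]
  have hi1 : Integrable fun y => f (x + r • y) * fderiv ℝ ballWeight y e :=
    (integrable_mul_of_eq_zero hcφ h0φ (hcf.integrableOn_compact (isCompact_closedBall _ _))).congr
      (ae_of_all _ fun y => mul_comm _ _)
  have key := integral_mul_fderiv_eq_neg_fderiv_mul_of_integrable (μ := volume)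
    (f := fun y => f (x + r • y)) (g := ballWeight) (v := e)
    (by simp only [e1]; exact (hg.integrable hr hx).const_mul r) hi1
    ((integrable_ballWeight_mul hcf).congr (ae_of_all _ fun y => mul_comm _ _))
    (fun y hy => (hfd (ballWeight_tsupport hy)).differentiableAt)
    (fun y _ => ((ballWeight_contDiff (k := 1)).differentiable (by norm_num)).differentiableAt)
  simp only [e1] at key
  rw [integral_const_mul, hg.2 x r hr hx] at key
  have hb : |∫ y, f (x + r • y) * fderiv ℝ ballWeight y e|
      ≤ (∫ y : En n, ‖fderiv ℝ ballWeight y‖) * (M * ‖e‖) := by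
    rw [← integral_mul_const]
    refine (abs_integral_le_integral_abs).trans (integral_mono hi1.abs
      (ballWeight_integrable_norm_fderiv.mul_const _) fun y => ?_)
    by_cases hy : y ∈ closedBall (0 : En n) 1
    · simp only [abs_mul]
      have h1 := hM _ (add_smul_mem_closedBall hr.le hy)
      have h2 := (fderiv ℝ ballWeight y).le_opNorm e
      rw [Real.norm_eq_abs] at h2
      calc _ ≤ M * (‖fderiv ℝ ballWeight y‖ * ‖e‖) := by gcongr
        _ = _ := by ring
    · simp only [h0φ y hy, mul_zero, abs_zero]; positivity
  rw [key, abs_neg, abs_mul, abs_mul, abs_of_pos hr, abs_of_pos (ballMass_pos n)] at hb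
  rw [Real.norm_eq_abs, gradientConst]
  have hm := ballMass_pos n
  rw [← mul_le_mul_iff_right₀ (mul_pos hr hm)]
  field_simp
  linarith

/-- Interior estimates for all iterated derivatives. -/
theorem exists_norm_iteratedFDeriv_le (n k : ℕ) : ∃ C : ℝ, 0 ≤ C ∧
    ∀ {f : En n → ℝ} {U : Set (En n)} {x : En n} {r M : ℝ}, IsOpen U → MeanValueOn f U → 0 < r →
      closedBall x r ⊆ U → (∀ z ∈ closedBall x r, |f z| ≤ M) →
      ‖iteratedFDeriv ℝ k f x‖ ≤ C / r ^ k * M := by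
  induction k with
  | zero =>
    refine ⟨1, zero_le_one, fun {f U x r M} hU hf hr hx hM => ?_⟩
    simpa using hM x (mem_closedBall_self hr.le)
  | succ k ih =>
    obtain ⟨C, hC, ih⟩ := ih
    refine ⟨C * 2 ^ k * (2 * gradientConst n), mul_nonneg (by positivity)
      (mul_nonneg zero_le_two (gradientConst_nonneg n)), fun {f U x r M} hU hf hr hx hM => ?_⟩
    have hM0 : 0 ≤ M := (abs_nonneg _).trans (hM x (mem_closedBall_self hr.le))
    have hxU : x ∈ U := hx (mem_closedBall_self hr.le)
    have hg0 := gradientConst_nonneg n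
    refine ContinuousMultilinearMap.opNorm_le_bound (by positivity) fun m => ?_
    have hsm : ContDiffOn ℝ (k : ℕ∞) (fderiv ℝ f) U :=
      (hf.contDiffOn hU (k := (k + 1 : ℕ∞))).fderiv_of_isOpen hU (by simp)
    have h1 : iteratedFDeriv ℝ (k + 1) f x m
        = iteratedFDeriv ℝ k (fun z => fderiv ℝ f z (m (Fin.last k))) x (Fin.init m) := by
      rw [iteratedFDeriv_succ_apply_right, ← iteratedFDerivWithin_of_isOpen k hU hxU,
        ← iteratedFDerivWithin_of_isOpen k hU hxU,
        iteratedFDerivWithin_clm_apply_const_apply hU.uniqueDiffOn hsm le_rfl hxU]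
    have hr2 : 0 < r / 2 := by positivity
    have hx2 : closedBall x (r / 2) ⊆ U := (closedBall_subset_closedBall (by linarith)).trans hx
    have h2 : ∀ z ∈ closedBall x (r / 2), |fderiv ℝ f z (m (Fin.last k))|
        ≤ gradientConst n / (r / 2) * M * ‖m (Fin.last k)‖ := fun z hz => by
      have hz' : closedBall z (r / 2) ⊆ closedBall x r := by
        refine closedBall_subset_closedBall' ?_
        rw [mem_closedBall] at hz; linarith
      exact ((fderiv ℝ f z).le_opNorm _).trans (mul_le_mul_of_nonneg_right
        (hf.norm_fderiv_le hU hr2 (hz'.trans hx) fun w hw => hM w (hz' hw)) (norm_nonneg _))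
    have h3 := ih hU (hf.fderiv_apply hU (m (Fin.last k))) hr2 hx2 h2
    have h4 := (iteratedFDeriv ℝ k (fun z => fderiv ℝ f z (m (Fin.last k))) x).le_opNorm
      (Fin.init m)
    have h5 : ∏ i, ‖m i‖ = (∏ i, ‖Fin.init m i‖) * ‖m (Fin.last k)‖ := Fin.prod_univ_castSucc _
    have h6 : 0 ≤ ∏ i, ‖Fin.init m i‖ := Finset.prod_nonneg fun _ _ => norm_nonneg _
    rw [h1, h5]
    refine h4.trans ((mul_le_mul_of_nonneg_right h3 h6).trans_eq ?_)
    generalize ∏ i, ‖Fin.init m i‖ = P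
    generalize ‖m (Fin.last k)‖ = Q
    rw [div_pow, pow_succ]
    field_simp

end

section

variable {n : ℕ} {f g v : En n → ℝ} {U V : Set (En n)}

theorem integral_ballWeight_comp_eq {r : ℝ} (hr : 0 < r) (x : En n) (F : En n → ℝ) :
    ∫ y, ballWeight y * F (x + r • y)
      = (r ^ n)⁻¹ * ∫ w, ballWeight (r⁻¹ • (w - x)) * F w := by
  rw [integral_comp_smul_ballWeight hr (fun z => F (x + z)),
    ← integral_sub_right_eq_self _ x]
  simp

theorem integrable_ballWeight_rescaled {r : ℝ} (hr : 0 < r) {x : En n} {F : En n → ℝ}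
    (hF : ContinuousOn F (closedBall x r)) :
    Integrable fun w => ballWeight (r⁻¹ • (w - x)) * F w := by
  have h := integrable_ballWeight_mul (continuousOn_comp_closedBall hr.le hF)
  have h2 := (h.comp_smul (inv_ne_zero hr.ne')).comp_sub_right x
  refine h2.congr (ae_of_all _ fun w => ?_)
  simp [smul_smul, hr.ne']

/-- Comparison of weighted integrals over a ball and over a larger ball containing it well
inside. -/
theorem integral_ballWeight_le_of_subset {F : En n → ℝ} {x x' : En n} {ρ r θ : ℝ} (hρ : 0 < ρ)
    (hr : 0 < r) (hθ0 : 0 ≤ θ) (hθ : θ < 1) (hF : ContinuousOn F (closedBall x' r))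
    (hF0 : ∀ z ∈ closedBall x' r, 0 ≤ F z) (h : closedBall x ρ ⊆ closedBall x' (θ * r)) :
    ∫ y, ballWeight y * F (x + ρ • y)
      ≤ (r / ρ) ^ n * (expNegInvGlue (1 - θ ^ 2))⁻¹ * ∫ y, ballWeight y * F (x' + r • y) := by
  have hc : 0 < expNegInvGlue (1 - θ ^ 2) := expNegInvGlue.pos_of_pos (by nlinarith)
  have hsub : closedBall x' (θ * r) ⊆ closedBall x' r :=
    closedBall_subset_closedBall (by nlinarith)
  rw [integral_ballWeight_comp_eq hρ, integral_ballWeight_comp_eq hr, div_pow]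
  have key : ∫ w, ballWeight (ρ⁻¹ • (w - x)) * F w
      ≤ ∫ w, (expNegInvGlue (1 - θ ^ 2))⁻¹ * (ballWeight (r⁻¹ • (w - x')) * F w) := by
    refine integral_mono (integrable_ballWeight_rescaled hρ (hF.mono (h.trans hsub)))
      ((integrable_ballWeight_rescaled hr hF).const_mul _) fun w => ?_
    simp only
    by_cases hw : w ∈ closedBall x ρ
    · have hw' := h hw
      have hFw := hF0 w (hsub hw')
      rw [inv_mul_eq_div, le_div_iff₀ hc]
      have h1 : expNegInvGlue (1 - θ ^ 2) ≤ ballWeight (r⁻¹ • (w - x')) := by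
        refine expNegInvGlue.monotone ?_
        rw [mem_closedBall, dist_eq_norm] at hw'
        have : ‖r⁻¹ • (w - x')‖ ≤ θ := by
          rw [norm_smul, norm_inv, Real.norm_of_nonneg hr.le, inv_mul_eq_div, div_le_iff₀ hr]
          exact hw'
        have h0 := norm_nonneg (r⁻¹ • (w - x'))
        nlinarith
      have h2 := ballWeight_le_one (ρ⁻¹ • (w - x))
      have h3 := ballWeight_nonneg (ρ⁻¹ • (w - x))
      calc _ ≤ 1 * F w * expNegInvGlue (1 - θ ^ 2) := by gcongr
        _ ≤ _ := by rw [one_mul, mul_comm]; gcongr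
    · have h0 : ballWeight (ρ⁻¹ • (w - x)) = 0 := by
        refine ballWeight_eq_zero ?_
        rw [mem_closedBall, dist_eq_norm, not_le] at hw
        rw [norm_smul, norm_inv, Real.norm_of_nonneg hρ.le, inv_mul_eq_div, le_div_iff₀ hρ]
        linarith
      rw [h0, zero_mul]
      by_cases hw2 : w ∈ closedBall x' r
      · exact mul_nonneg (inv_nonneg.2 hc.le) (mul_nonneg (ballWeight_nonneg _) (hF0 w hw2))
      · have : ballWeight (r⁻¹ • (w - x')) = 0 := by
          refine ballWeight_eq_zero ?_
          rw [mem_closedBall, dist_eq_norm, not_le] at hw2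
          rw [norm_smul, norm_inv, Real.norm_of_nonneg hr.le, inv_mul_eq_div, le_div_iff₀ hr]
          linarith
        simp [this]
  rw [integral_const_mul] at key
  have hρn : 0 < ρ ^ n := by positivity
  have hrn : 0 < r ^ n := by positivity
  calc _ ≤ (ρ ^ n)⁻¹ * ((expNegInvGlue (1 - θ ^ 2))⁻¹ *
        ∫ w, ballWeight (r⁻¹ • (w - x')) * F w) := by gcongr
    _ = _ := by field_simp

/-- The weighted `L²` energy of `v` on the ball of radius `ρ` around `x`. -/
def ballEnergy (v : En n → ℝ) (x : En n) (ρ : ℝ) : ℝ := ∫ y, ballWeight y * v (x + ρ • y) ^ 2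

theorem ballEnergy_nonneg (v : En n → ℝ) (x : En n) (ρ : ℝ) : 0 ≤ ballEnergy v x ρ :=
  integral_nonneg fun y => mul_nonneg (ballWeight_nonneg y) (sq_nonneg _)

/-- The Cauchy–Schwarz inequality for the weight `ballWeight`. -/
theorem integral_ballWeight_mul_sq_le {a b : En n → ℝ} (ha : ContinuousOn a (closedBall 0 1))
    (hb : ContinuousOn b (closedBall 0 1)) :
    (∫ y, ballWeight y * (a y * b y)) ^ 2
      ≤ (∫ y, ballWeight y * a y ^ 2) * ∫ y, ballWeight y * b y ^ 2 := by
  have i1 : Integrable fun y => ballWeight y * a y ^ 2 := integrable_ballWeight_mul (ha.pow 2)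
  have i2 : Integrable fun y => ballWeight y * (a y * b y) := integrable_ballWeight_mul (ha.mul hb)
  have i3 : Integrable fun y => ballWeight y * b y ^ 2 := integrable_ballWeight_mul (hb.pow 2)
  have := discrim_le_zero (a := ∫ y, ballWeight y * b y ^ 2)
    (b := 2 * ∫ y, ballWeight y * (a y * b y)) (c := ∫ y, ballWeight y * a y ^ 2) fun t => by
      have i4 : Integrable fun y => ballWeight y * b y ^ 2 * (t * t)
          + 2 * (ballWeight y * (a y * b y)) * t :=
        (i3.mul_const _).add ((i2.const_mul 2).mul_const t)
      rw [← integral_const_mul, ← integral_mul_const, ← integral_mul_const,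
        ← integral_add (i3.mul_const _) ((i2.const_mul 2).mul_const t), ← integral_add i4 i1]
      refine integral_nonneg fun y => ?_
      have := mul_nonneg (ballWeight_nonneg y) (sq_nonneg (b y * t + a y))
      simp only [Pi.zero_apply]
      nlinarith
  rw [discrim] at this
  nlinarith

theorem MeanValueOn.mass_mul_sq_le (hf : MeanValueOn f U) {x : En n} {r : ℝ} (hr : 0 < r)
    (hx : closedBall x r ⊆ U) : ballMass n * f x ^ 2 ≤ ballEnergy f x r := by
  have hc := continuousOn_comp_closedBall hr.le (hf.1.mono hx)
  have h := integral_ballWeight_mul_sq_le hc (continuousOn_const (c := (1 : ℝ)))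
  simp only [mul_one, one_pow] at h
  rw [hf.2 x r hr hx] at h
  change _ ≤ ballEnergy f x r * ballMass n at h
  have hm := ballMass_pos n
  refine le_of_mul_le_mul_right ?_ hm
  nlinarith

/-- The constant comparing pointwise values with the energy on a ball twice as large. -/
def supConst (n : ℕ) : ℝ := 4 ^ n * (expNegInvGlue (1 - (3 / 4) ^ 2))⁻¹ / ballMass n

theorem supConst_pos (n : ℕ) : 0 < supConst n :=
  div_pos (mul_pos (by positivity) (inv_pos.2 (expNegInvGlue.pos_of_pos (by norm_num))))
    (ballMass_pos n)

theorem MeanValueOn.sq_le_ballEnergy (hf : MeanValueOn f U) {x z : En n} {ρ : ℝ} (hρ : 0 < ρ)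
    (hx : closedBall x (2 * ρ) ⊆ U) (hz : z ∈ closedBall x ρ) :
    f z ^ 2 ≤ supConst n * ballEnergy f x (2 * ρ) := by
  have hs : closedBall z (ρ / 2) ⊆ closedBall x (3 / 4 * (2 * ρ)) := by
    refine closedBall_subset_closedBall' ?_
    rw [mem_closedBall] at hz; linarith
  have hs2 : closedBall x (3 / 4 * (2 * ρ)) ⊆ closedBall x (2 * ρ) :=
    closedBall_subset_closedBall (by linarith)
  have h1 := hf.mass_mul_sq_le (half_pos hρ) ((hs.trans hs2).trans hx)
  have h2 := integral_ballWeight_le_of_subset (F := fun z => f z ^ 2) (half_pos hρ)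
    (by positivity : 0 < 2 * ρ) (by norm_num) (by norm_num : (3 / 4 : ℝ) < 1)
    ((hf.1.mono hx).pow 2) (fun _ _ => sq_nonneg _) hs
  have h3 : 2 * ρ / (ρ / 2) = 4 := by field_simp; norm_num
  rw [h3] at h2
  have hm := ballMass_pos n
  rw [supConst, div_mul_eq_mul_div, le_div_iff₀ hm, mul_comm]
  exact h1.trans h2

/-- Logarithmic convexity of the energy. -/
theorem HarmonicOnSet.ballEnergy_sq_le {x : En n} {R s t s' : ℝ} (hv : HarmonicOnSet v (ball x R))
    (hs : 0 < s) (hsR : s < R) (ht : 0 < t) (htR : t < R) (hsR' : s' < R) (hs' : 0 < s')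
    (h : t * t = s * s') :
    ballEnergy v x t ^ 2 ≤ ballEnergy v x s * ballEnergy v x s' := by
  have h1 := hv.integral_mul_dilation hv ht htR ht htR hs hsR hsR' h
  have h2 := integral_ballWeight_mul_sq_le
    (continuousOn_comp_add_smul hv.1.continuousOn (by rwa [abs_of_pos hs] : |s| < R))
    (continuousOn_comp_add_smul hv.1.continuousOn (by rwa [abs_of_pos hs'] : |s'| < R))
  rw [← h1] at h2
  simpa only [ballEnergy, pow_two] using h2

theorem eq_zero_of_ballEnergy_eq_zero {x : En n} {t : ℝ} (ht : 0 < t)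
    (hv : ContinuousOn v (closedBall x t)) (h : ballEnergy v x t = 0) {z : En n}
    (hz : z ∈ ball x t) : v z = 0 := by
  by_contra hne
  have hz' : x + t • (t⁻¹ • (z - x)) = z := by rw [smul_smul, mul_inv_cancel₀ ht.ne']; simp
  have := integral_mul_pos_of_ball ballWeight_continuous (fun _ => ballWeight_pos)
    (fun _ => ballWeight_eq_zero_of_notMem) ((continuousOn_comp_closedBall ht.le hv).pow 2)
    (fun _ _ => sq_nonneg _) (y₀ := t⁻¹ • (z - x)) ?_ ?_
  · exact this.ne' h
  · rw [norm_smul, norm_inv, Real.norm_of_nonneg ht.le, inv_mul_eq_div, div_lt_one ht,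
      ← dist_eq_norm]
    exact hz
  · rw [Pi.pow_apply, hz']; positivity

/-- Unique continuation for harmonic functions. -/
theorem HarmonicOnSet.eqOn_zero (hU : IsOpen U) (hUc : IsPreconnected U) (hv : HarmonicOnSet v U)
    {x : En n} (hx : x ∈ U) (h0 : ∀ᶠ z in 𝓝 x, v z = 0) : ∀ z ∈ U, v z = 0 := by
  set S := {z | ∀ᶠ w in 𝓝 z, v w = 0} with hS
  have hSo : IsOpen S := isOpen_setOfPred_eventually_nhds
  have hUS : U ⊆ S := by
    refine hUc.subset_of_closure_inter_subset hSo ⟨x, hx, h0⟩ fun z hz => ?_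
    obtain ⟨R, hR, hRU⟩ := Metric.isOpen_iff.1 hU z hz.2
    obtain ⟨s, hsS, hsz⟩ := Metric.mem_closure_iff.1 hz.1 (R / 8) (by positivity)
    have hsub : ball s (7 * R / 8) ⊆ U :=
      (ball_subset_ball' (by rw [dist_comm]; linarith)).trans hRU
    have hvs := hv.mono hsub
    have hstep : ∀ t, 0 < t → t ≤ R / 4 → ballEnergy v s t ≠ 0 → ballEnergy v s (t / 2) ≠ 0 := by
      intro t ht htR hne h0
      have := hvs.ballEnergy_sq_le (s := t / 2) (t := t) (s' := 2 * t) (by positivity)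
        (by linarith) ht (by linarith) (by linarith) (by positivity) (by ring)
      rw [h0, zero_mul] at this
      exact hne (by nlinarith)
    have hE : ballEnergy v s (R / 4) = 0 := by
      by_contra hne
      have hall : ∀ j : ℕ, ballEnergy v s (R / 4 / 2 ^ j) ≠ 0 := by
        intro j
        induction j with
        | zero => simpa using hne
        | succ j ih =>
          rw [pow_succ, ← div_div]
          refine hstep _ (by positivity) (div_le_self (by positivity) (one_le_pow₀ one_le_two)) ih
      obtain ⟨δ, hδ, hδ0⟩ := Metric.eventually_nhds_iff_ball.1 hsS
      obtain ⟨j, hj⟩ := pow_unbounded_of_one_lt (R / 4 / δ) (one_lt_two)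
      refine hall j (integral_eq_zero_of_ae (ae_of_all _ fun y => ?_))
      by_cases hy : y ∈ closedBall (0 : En n) 1
      · have : s + (R / 4 / 2 ^ j) • y ∈ ball s δ := by
          refine add_smul_mem_ball ?_ hy
          rw [abs_of_pos (by positivity), div_lt_iff₀ (by positivity)]
          rwa [div_lt_iff₀ hδ, mul_comm] at hj
        simp [hδ0 _ this]
      · simp [ballWeight_eq_zero_of_notMem hy]
    have hz0 := fun {w} => eq_zero_of_ballEnergy_eq_zero (x := s) (t := R / 4) (z := w)
      (by positivity)
      (hvs.1.continuousOn.mono (closedBall_subset_ball (by linarith))) hE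
    have hmem : z ∈ ball s (R / 4) := by rw [mem_ball]; linarith
    filter_upwards [isOpen_ball.mem_nhds hmem] with w hw using hz0 hw
  exact fun z hz => (hUS hz).self_of_nhds

theorem HarmonicOnSet.ballEnergy_pos (hU : IsOpen U) (hUc : IsPreconnected U)
    (hv : HarmonicOnSet v U) (hne : ∃ x ∈ U, v x ≠ 0) {x : En n} {t : ℝ} (ht : 0 < t)
    (hx : closedBall x t ⊆ U) : 0 < ballEnergy v x t := by
  refine (ballEnergy_nonneg v x t).lt_of_ne fun h => ?_
  obtain ⟨z, hz, hvz⟩ := hne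
  refine hvz (hv.eqOn_zero hU hUc (hx (mem_closedBall_self ht.le)) ?_ z hz)
  filter_upwards [ball_mem_nhds x ht] with w hw
  exact eq_zero_of_ballEnergy_eq_zero ht (hv.1.continuousOn.mono hx) h.symm hw

end

section

variable {n : ℕ} {u v : En n → ℝ}

theorem HarmonicOnSet.ballEnergy_dyadic {x : En n} {R r N : ℝ} (hv : HarmonicOnSet v (ball x R))
    (hr : 0 < r) (hrR : r < R) (hpos : ∀ i : ℕ, 0 < ballEnergy v x (r / 2 ^ i))
    (hN : ballEnergy v x r ≤ N * ballEnergy v x (r / 2)) (i : ℕ) :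
    ballEnergy v x (r / 2 ^ i) ≤ N * ballEnergy v x (r / 2 ^ (i + 1)) := by
  induction i with
  | zero => simpa using hN
  | succ i ih =>
    have h2 : r / 2 ^ (i + 1) < R :=
      (div_le_self hr.le (one_le_pow₀ one_le_two)).trans_lt hrR
    have h1 : r / 2 ^ i < R := (div_le_self hr.le (one_le_pow₀ one_le_two)).trans_lt hrR
    have h3 : r / 2 ^ (i + 1 + 1) < R :=
      (div_le_self hr.le (one_le_pow₀ one_le_two)).trans_lt hrR
    have h := hv.ballEnergy_sq_le (s := r / 2 ^ (i + 1 + 1)) (t := r / 2 ^ (i + 1))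
      (s' := r / 2 ^ i) (by positivity) h3 (by positivity) h2 h1 (by positivity)
      (by field_simp; ring)
    have p1 := hpos (i + 1)
    have p2 := hpos (i + 1 + 1)
    refine le_of_mul_le_mul_right ?_ p1
    nlinarith

theorem HarmonicOnSet.ballEnergy_le_pow {x : En n} {R r N : ℝ} (hv : HarmonicOnSet v (ball x R))
    (hr : 0 < r) (hrR : r < R) (hpos : ∀ i : ℕ, 0 < ballEnergy v x (r / 2 ^ i))
    (hN0 : 0 ≤ N) (hN : ballEnergy v x r ≤ N * ballEnergy v x (r / 2)) (i : ℕ) :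
    ballEnergy v x r ≤ N ^ i * ballEnergy v x (r / 2 ^ i) := by
  induction i with
  | zero => simp
  | succ i ih =>
    have := hv.ballEnergy_dyadic hr hrR hpos hN i
    calc _ ≤ N ^ i * ballEnergy v x (r / 2 ^ i) := ih
      _ ≤ N ^ i * (N * ballEnergy v x (r / 2 ^ (i + 1))) := by gcongr
      _ = _ := by ring

theorem continuousOn_ballEnergy {U : Set (En n)} {X : Set (En n)} {r : ℝ} (hr : 0 ≤ r)
    (hv : ContinuousOn v U) (hX : ∀ x ∈ X, closedBall x r ⊆ U) :
    ContinuousOn (fun x => ballEnergy v x r) X := by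
  refine continuousOn_integral_ballWeight (F := fun x y => v (x + r • y) ^ 2) ?_
  refine ContinuousOn.pow ?_ 2
  exact hv.comp (f := fun p : En n × En n => p.1 + r • p.2) (by fun_prop) fun p hp =>
    hX p.1 hp.1 (add_smul_mem_closedBall hr hp.2)

theorem closedBall_subset_unit {x : En n} {a r : ℝ} (hx : x ∈ closedBall (0 : En n) a)
    (h : a + r < 1) : closedBall x r ⊆ ball (0 : En n) 1 := by
  refine closedBall_subset_ball' ?_
  rw [mem_closedBall] at hx; linarith

/-- A uniform doubling inequality for the energy. -/
theorem HarmonicOnSet.exists_doubling (hv : HarmonicOnSet v (ball 0 1))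
    (hne : ∃ x ∈ ball (0 : En n) 1, v x ≠ 0) :
    ∃ N h : ℝ, 1 ≤ N ∧ 0 < h ∧ ∀ x ∈ closedBall (0 : En n) 0.62, ∀ i : ℕ,
      0 < ballEnergy v x (0.1 / 2 ^ i) ∧
      ballEnergy v x (2 * (0.1 / 2 ^ i)) ≤ N * ballEnergy v x (0.1 / 2 ^ i) ∧
      h ≤ N ^ i * ballEnergy v x (0.1 / 2 ^ i) := by
  set X := closedBall (0 : En n) 0.62 with hX
  have hXc : IsCompact X := isCompact_closedBall _ _
  have hXn : X.Nonempty := ⟨0, by rw [hX]; exact mem_closedBall_self (by norm_num)⟩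
  have hc2 := continuousOn_ballEnergy (X := X) (r := 0.2) (by norm_num) hv.1.continuousOn
    fun x hx => closedBall_subset_unit hx (by norm_num)
  have hc1 := continuousOn_ballEnergy (X := X) (r := 0.1) (by norm_num) hv.1.continuousOn
    fun x hx => closedBall_subset_unit hx (by norm_num)
  have hpos : ∀ x ∈ X, ∀ t, 0 < t → t ≤ 0.2 → 0 < ballEnergy v x t := fun x hx t ht ht2 =>
    hv.ballEnergy_pos isOpen_ball (convex_ball _ _).isPreconnected hne ht
      (closedBall_subset_unit hx (by linarith))
  obtain ⟨x1, hx1, h1⟩ := hXc.exists_isMinOn hXn hc1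
  obtain ⟨x2, hx2, h2⟩ := hXc.exists_isMaxOn hXn hc2
  have p1 := hpos x1 hx1 0.1 (by norm_num) (by norm_num)
  have p2 := hpos x2 hx2 0.2 (by norm_num) le_rfl
  refine ⟨ballEnergy v x2 0.2 / ballEnergy v x1 0.1 + 1, ballEnergy v x1 0.1, ?_, p1,
    fun x hx i => ?_⟩
  · have := div_pos p2 p1; linarith
  · set N := ballEnergy v x2 0.2 / ballEnergy v x1 0.1 + 1 with hN
    have hN0 : 1 ≤ N := by have := div_pos p2 p1; linarith
    have hvx : HarmonicOnSet v (ball x 0.3) := hv.mono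
      (ball_subset_closedBall.trans (closedBall_subset_unit hx (by norm_num)))
    have e1 : (0.2 : ℝ) / 2 = 0.1 := by norm_num
    have g1 : ballEnergy v x1 0.1 ≤ ballEnergy v x 0.1 := h1 hx
    have g2 : ballEnergy v x 0.2 ≤ ballEnergy v x2 0.2 := h2 hx
    have hbase : ballEnergy v x 0.2 ≤ N * ballEnergy v x (0.2 / 2) := by
      rw [e1]
      calc _ ≤ ballEnergy v x2 0.2 := g2
        _ = ballEnergy v x2 0.2 / ballEnergy v x1 0.1 * ballEnergy v x1 0.1 := by
          rw [div_mul_cancel₀ _ p1.ne']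
        _ ≤ N * ballEnergy v x 0.1 := by gcongr; linarith
    have hpos2 : ∀ i : ℕ, 0 < ballEnergy v x (0.2 / 2 ^ i) := fun i =>
      hpos x hx _ (by positivity) (div_le_self (by norm_num) (one_le_pow₀ one_le_two))
    have hpos1 : ∀ i : ℕ, 0 < ballEnergy v x (0.1 / 2 ^ i) := fun i => by
      have := hpos2 (i + 1)
      convert this using 2
      field_simp; norm_num; ring
    have d2 := hvx.ballEnergy_dyadic (by norm_num) (by norm_num) hpos2 hbase
    have d1 : ∀ i : ℕ, ballEnergy v x (2 * (0.1 / 2 ^ i)) ≤ N * ballEnergy v x (0.1 / 2 ^ i) := by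
      intro i
      convert d2 i using 2
      · field_simp; norm_num
      · congr 1; field_simp; norm_num; ring
    refine ⟨hpos1 i, d1 i, ?_⟩
    refine g1.trans (hvx.ballEnergy_le_pow (by norm_num) (by norm_num) hpos1 (by linarith) ?_ i)
    have := d1 1
    convert this using 2
    · norm_num
    · norm_num

/-- The weighted mass of the product `|u v|` at scale `0.65`. -/
def productMass (u v : En n → ℝ) : ℝ :=
  ∫ y, ballWeight y * |u ((0.65 : ℝ) • y) * v ((0.65 : ℝ) • y)|

theorem productMass_nonneg (u v : En n → ℝ) : 0 ≤ productMass u v :=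
  integral_nonneg fun y => mul_nonneg (ballWeight_nonneg y) (abs_nonneg _)

/-- At a point where `|u|` nearly attains its maximum over a small ball, `|u|` is controlled by
the product mass. -/
theorem HarmonicOnSet.exists_le_of_almost_max (hv : HarmonicOnSet v (ball 0 1))
    (hne : ∃ x ∈ ball (0 : En n) 1, v x ≠ 0) :
    ∃ c D L : ℝ, 0 < c ∧ 0 ≤ D ∧ 1 ≤ L ∧ ∀ u : En n → ℝ, HarmonicOnSet u (ball 0 1) →
      ∀ (x : En n) (i : ℕ), closedBall x (0.1 / 2 ^ i) ⊆ closedBall 0 0.62 →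
      (∀ z ∈ closedBall x (0.1 / 2 ^ i), |u z| ≤ (1 + c) * |u x|) →
      |u x| ≤ D * L ^ i * productMass u v := by
  obtain ⟨N, h, hN, hh, hdoub⟩ := hv.exists_doubling hne
  have hK := supConst_pos n
  set K := supConst n
  have hm := ballMass_pos n
  obtain ⟨V, hV⟩ := ((isCompact_closedBall (0 : En n) 0.62).image_of_continuousOn
    (hv.1.continuousOn.mono (closedBall_subset_ball (by norm_num)))).isBounded.exists_norm_le
  have hV' : ∀ z ∈ closedBall (0 : En n) 0.62, |v z| ≤ V := fun z hz =>
    hV _ (mem_image_of_mem v hz)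
  have hV0 : 0 ≤ V := (abs_nonneg _).trans (hV' 0 (mem_closedBall_self (by norm_num)))
  set g := (expNegInvGlue (1 - (0.62 / 0.65 : ℝ) ^ 2))⁻¹ with hg
  have hg0 : 0 < g := inv_pos.2 (expNegInvGlue.pos_of_pos (by norm_num))
  set κ := 1 / (K * N) with hκ
  have hκ0 : 0 < κ := by positivity
  refine ⟨κ / (2 * ballMass n), 2 / κ * (V / (K * h)) * (6.5 ^ n * g), N * 2 ^ n, by positivity,
    by positivity, one_le_mul_of_one_le_of_one_le hN (one_le_pow₀ one_le_two),
    fun u hu x i hsub hmax => ?_⟩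
  set ρ : ℝ := 0.1 / 2 ^ i with hρ
  have hρ0 : 0 < ρ := by positivity
  have hρ1 : ρ ≤ 0.1 := div_le_self (by norm_num) (one_le_pow₀ one_le_two)
  have hx : x ∈ closedBall (0 : En n) 0.62 := hsub (mem_closedBall_self hρ0.le)
  obtain ⟨hA, hdbl, hlow⟩ := hdoub x hx i
  set A := ballEnergy v x ρ with hAdef
  set M := |u x| with hMdef
  have hmv := hv.meanValueOn isOpen_ball
  have hmu := hu.meanValueOn isOpen_ball
  have hball : closedBall x ρ ⊆ ball (0 : En n) 1 := closedBall_subset_unit hx (by linarith)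
  set Q := K * N * A with hQ
  have hQ0 : 0 < Q := by positivity
  have hvQ : ∀ z ∈ closedBall x ρ, v z ^ 2 ≤ Q := fun z hz => by
    refine (hmv.sq_le_ballEnergy hρ0 (closedBall_subset_unit hx (by linarith)) hz).trans ?_
    calc K * ballEnergy v x (2 * ρ) ≤ K * (N * A) := by gcongr
      _ = Q := by rw [hQ]; ring
  have cu := continuousOn_comp_closedBall hρ0.le (hmu.1.mono hball)
  have cv := continuousOn_comp_closedBall hρ0.le (hmv.1.mono hball)
  set c := κ / (2 * ballMass n) with hc
  have hc0 : 0 < c := by positivity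
  have iu : Integrable fun y : En n => ballWeight y * |u (x + ρ • y)| :=
    integrable_ballWeight_mul cu.abs
  have iw : Integrable fun y : En n => ballWeight y * v (x + ρ • y) ^ 2 :=
    integrable_ballWeight_mul (cv.pow 2)
  have iuv : Integrable fun y : En n => ballWeight y * |u (x + ρ • y) * v (x + ρ • y)| :=
    integrable_ballWeight_mul (cu.mul cv).abs
  set P := ∫ y : En n, ballWeight y * |u (x + ρ • y) * v (x + ρ • y)| with hP
  have hM0 : 0 ≤ M := abs_nonneg _
  have step1 : M * ballMass n ≤ ∫ y : En n, ballWeight y * |u (x + ρ • y)| := by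
    have := hmu.2 x ρ hρ0 hball
    rw [hMdef, mul_comm, ← abs_of_pos hm, ← abs_mul, ← this]
    refine (abs_integral_le_integral_abs).trans_eq (integral_congr_ae (ae_of_all _ fun y => ?_))
    simp only [abs_mul, abs_of_nonneg (ballWeight_nonneg y)]
  have step2 : ∫ y : En n, ballWeight y * |u (x + ρ • y)|
      ≤ ∫ y : En n, ((1 + c) * M * (ballWeight y - Q⁻¹ * (ballWeight y * v (x + ρ • y) ^ 2))
        + V / Q * (ballWeight y * |u (x + ρ • y) * v (x + ρ • y)|)) := by
    refine integral_mono iu (((integrable_ballWeight.sub (iw.const_mul _)).const_mul _).add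
      (iuv.const_mul _)) fun y => ?_
    simp only
    by_cases hy : y ∈ closedBall (0 : En n) 1
    · have hz := add_smul_mem_closedBall (x := x) hρ0.le hy
      set z := x + ρ • y
      have b1 := hmax z hz
      have b2 := hvQ z hz
      have b3 := hV' z (hsub hz)
      have b4 := ballWeight_nonneg y
      have b5 : Q⁻¹ * v z ^ 2 ≤ 1 := by rw [inv_mul_le_iff₀ hQ0]; linarith
      have b6 : |u z| * (1 - Q⁻¹ * v z ^ 2) ≤ (1 + c) * M * (1 - Q⁻¹ * v z ^ 2) :=
        mul_le_mul_of_nonneg_right b1 (by linarith)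
      have b7 : |u z| * (Q⁻¹ * v z ^ 2) ≤ V / Q * |u z * v z| := by
        rw [← sq_abs (v z), abs_mul, div_eq_mul_inv]
        have : |u z| * (Q⁻¹ * |v z| ^ 2) = |v z| * (Q⁻¹ * (|u z| * |v z|)) := by ring
        rw [this, mul_assoc]
        gcongr
      calc _ = ballWeight y * (|u z| * (1 - Q⁻¹ * v z ^ 2) + |u z| * (Q⁻¹ * v z ^ 2)) := by ring
        _ ≤ ballWeight y * ((1 + c) * M * (1 - Q⁻¹ * v z ^ 2) + V / Q * |u z * v z|) := by gcongr
        _ = _ := by ring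
    · simp [ballWeight_eq_zero_of_notMem hy]
  have i4 : Integrable fun y : En n => Q⁻¹ * (ballWeight y * v (x + ρ • y) ^ 2) := iw.const_mul _
  have i5 : Integrable fun y : En n =>
      (1 + c) * M * (ballWeight y - Q⁻¹ * (ballWeight y * v (x + ρ • y) ^ 2)) :=
    (integrable_ballWeight.sub i4).const_mul _
  rw [integral_add i5 (iuv.const_mul _), integral_const_mul, integral_const_mul,
    integral_sub integrable_ballWeight i4, integral_const_mul] at step2
  replace step2 := step1.trans step2
  change _ ≤ (1 + c) * M * (ballMass n - Q⁻¹ * A) + V / Q * P at step2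
  have hQA : Q⁻¹ * A = κ := by rw [hQ, hκ]; field_simp
  rw [hQA] at step2
  have step3 : M * (κ / 2) ≤ V / Q * P := by
    have e : (1 + c) * (ballMass n - κ) ≤ ballMass n - κ / 2 := by
      have e1 : c * ballMass n = κ / 2 := by rw [hc]; field_simp
      nlinarith [mul_pos hc0 hκ0]
    have := mul_le_mul_of_nonneg_left e hM0
    nlinarith
  have step4 : P ≤ (0.65 / ρ) ^ n * g * productMass u v := by
    have h65 : closedBall (0 : En n) 0.65 ⊆ ball 0 1 := closedBall_subset_ball (by norm_num)
    have e : (0.62 / 0.65 * 0.65 : ℝ) = 0.62 := by norm_num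
    have := integral_ballWeight_le_of_subset (F := fun z => |u z * v z|) (x := x)
      (x' := 0) (ρ := ρ) (r := 0.65) (θ := 0.62 / 0.65) hρ0 (by norm_num) (by norm_num)
      (by norm_num) ((hmu.1.mono h65).mul (hmv.1.mono h65)).abs (fun _ _ => abs_nonneg _)
      (by rw [e]; exact hsub)
    simpa only [zero_add, productMass] using this
  have hρe : (0.65 / ρ) ^ n = 6.5 ^ n * (2 ^ n) ^ i := by
    rw [← pow_mul, mul_comm n i, pow_mul, ← mul_pow, hρ]; congr 1; field_simp; norm_num
  have hQi : V / Q ≤ V / (K * h) * N ^ i := by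
    rw [div_le_iff₀ hQ0, hQ]
    have : V / (K * h) * N ^ i * (K * N * A) = V * (N * (N ^ i * A) / h) := by field_simp
    rw [this]
    refine le_mul_of_one_le_right hV0 ?_
    rw [one_le_div hh]
    nlinarith
  have hJ := productMass_nonneg u v
  calc M = 2 / κ * (M * (κ / 2)) := by field_simp
    _ ≤ 2 / κ * (V / Q * P) := by gcongr
    _ ≤ 2 / κ * (V / (K * h) * N ^ i * (6.5 ^ n * (2 ^ n) ^ i * g * productMass u v)) := by
      rw [hρe] at step4
      have hP0 : 0 ≤ P := integral_nonneg fun y => mul_nonneg (ballWeight_nonneg y) (abs_nonneg _)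
      gcongr
    _ = _ := by rw [mul_pow]; ring

end

section

variable {n : ℕ} {u v : En n → ℝ}

/-- A harmonic function is controlled by its product mass against a fixed harmonic function. -/
theorem HarmonicOnSet.exists_le_productMass (hv : HarmonicOnSet v (ball 0 1))
    (hne : ∃ x ∈ ball (0 : En n) 1, v x ≠ 0) :
    ∃ C : ℝ, 0 ≤ C ∧ ∀ u : En n → ℝ, HarmonicOnSet u (ball 0 1) →
      ∀ x ∈ closedBall (0 : En n) 0.6, |u x| ≤ C * productMass u v := by
  obtain ⟨c, D, L, hc, hD, hL, hmain⟩ := hv.exists_le_of_almost_max hne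
  obtain ⟨a, ha0, haL⟩ : ∃ a : ℕ, a ≠ 0 ∧ L ≤ 2 ^ a := by
    obtain ⟨a, ha⟩ := pow_unbounded_of_one_lt L (one_lt_two)
    exact ⟨a + 1, a.succ_ne_zero, ha.le.trans (pow_le_pow_right₀ one_le_two a.le_succ)⟩
  set θ : ℝ := min (1 / 8) (c / ((1 + c) * (a + 1))) with hθ
  have hθ0 : 0 < θ := lt_min (by norm_num) (by positivity)
  have hθ8 : θ ≤ 1 / 8 := min_le_left _ _
  have hbern : 1 ≤ (1 + c) * (1 - θ) ^ a := by
    have h1 := one_add_mul_le_pow (a := -θ) (by linarith) a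
    have h2 : θ * ((1 + c) * (a + 1)) ≤ c :=
      (le_div_iff₀ (by positivity)).1 (min_le_right _ _)
    rw [← sub_eq_add_neg] at h1
    have h3 : 1 ≤ (1 + c) * (1 + a * -θ) := by nlinarith [mul_pos hθ0 (by linarith : 0 < 1 + c)]
    exact h3.trans (by gcongr)
  refine ⟨D * (10 / θ) ^ a, by positivity, fun u hu x hx => ?_⟩
  have hJ := productMass_nonneg u v
  have hcont : ContinuousOn (fun z => |u z| * (0.62 - ‖z‖) ^ a) (closedBall (0 : En n) 0.62) :=
    (hu.1.continuousOn.mono (closedBall_subset_ball (by norm_num))).abs.mul (by fun_prop)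
  obtain ⟨xs, hxs, hmax⟩ := (isCompact_closedBall (0 : En n) 0.62).exists_isMaxOn
    ⟨0, mem_closedBall_self (by norm_num)⟩ hcont
  have hmax' : ∀ z ∈ closedBall (0 : En n) 0.62,
      |u z| * (0.62 - ‖z‖) ^ a ≤ |u xs| * (0.62 - ‖xs‖) ^ a := fun z hz => hmax hz
  set M := |u xs| with hM
  have hM0 : 0 ≤ M := abs_nonneg _
  set d := 0.62 - ‖xs‖ with hd
  have hx' : ‖x‖ ≤ 0.6 := mem_closedBall_zero_iff.1 hx
  have hxs' : ‖xs‖ ≤ 0.62 := mem_closedBall_zero_iff.1 hxs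
  suffices hMd : M * d ^ a ≤ D * (0.2 / θ) ^ a * productMass u v by
    have h1 := (hmax' x (closedBall_subset_closedBall (by norm_num) hx)).trans hMd
    have h2 : |u x| * (0.02 : ℝ) ^ a ≤ |u x| * (0.62 - ‖x‖) ^ a := by gcongr; linarith
    have h3 : (10 / θ) ^ a * (0.02 : ℝ) ^ a = (0.2 / θ) ^ a := by
      rw [← mul_pow]; congr 1; field_simp; norm_num
    refine le_of_mul_le_mul_right ?_ (by positivity : (0 : ℝ) < 0.02 ^ a)
    calc _ ≤ D * (0.2 / θ) ^ a * productMass u v := h2.trans h1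
      _ = _ := by rw [← h3]; ring
  rcases (sub_nonneg.2 hxs').eq_or_lt with h0 | hd0
  · rw [hd, ← h0, zero_pow ha0, mul_zero]; positivity
  change 0 < d at hd0
  have hdle : d ≤ 0.62 := by have := norm_nonneg xs; linarith
  obtain ⟨j, hj1, hj2⟩ := exists_nat_pow_near_of_lt_one (x := 10 * (θ * d)) (y := (1 / 2 : ℝ))
    (by positivity) (by nlinarith) (by norm_num) (by norm_num)
  set i := j + 1 with hi
  rw [one_div, inv_pow] at hj1 hj2
  have hρ : 0.1 / 2 ^ i ≤ θ * d := by
    rw [div_eq_mul_inv]; linarith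
  have h2i : (2 : ℝ) ^ i ≤ 0.2 / (θ * d) := by
    have e : (2 : ℝ) ^ i = 2 * 2 ^ j := by rw [hi, pow_succ]; ring
    rw [le_div_iff₀ (by positivity), e]
    rw [← one_div, le_div_iff₀ (by positivity)] at hj2
    linarith
  have hsub : closedBall xs (0.1 / 2 ^ i) ⊆ closedBall 0 0.62 := by
    refine closedBall_subset_closedBall' ?_
    rw [dist_zero_right]
    nlinarith
  have hbound := hmain u hu xs i hsub fun z hz => by
    have h1 := hmax' z (hsub hz)
    have h2 : (1 - θ) * d ≤ 0.62 - ‖z‖ := by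
      rw [mem_closedBall, dist_eq_norm] at hz
      have := norm_sub_norm_le z xs
      linarith
    have h3 : |u z| * ((1 - θ) * d) ^ a ≤ M * d ^ a :=
      (mul_le_mul_of_nonneg_left (pow_le_pow_left₀ (by nlinarith) h2 a) (abs_nonneg _)).trans h1
    rw [mul_pow, ← mul_assoc] at h3
    have h4 : |u z| * (1 - θ) ^ a ≤ M := le_of_mul_le_mul_right h3 (by positivity)
    calc |u z| ≤ |u z| * ((1 + c) * (1 - θ) ^ a) := le_mul_of_one_le_right (abs_nonneg _) hbern
      _ = (1 + c) * (|u z| * (1 - θ) ^ a) := by ring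
      _ ≤ _ := by gcongr
  calc M * d ^ a ≤ D * L ^ i * productMass u v * d ^ a := by gcongr
    _ ≤ D * (0.2 / (θ * d)) ^ a * productMass u v * d ^ a := by
      have : L ^ i ≤ (0.2 / (θ * d)) ^ a := by
        calc L ^ i ≤ (2 ^ a) ^ i := by gcongr
          _ = (2 ^ i) ^ a := by rw [← pow_mul, ← pow_mul, mul_comm]
          _ ≤ _ := by gcongr
      gcongr
    _ = D * (0.2 / θ) ^ a * productMass u v := by
      rw [div_pow, mul_pow, div_pow]; field_simp

/-- For harmonic functions with the same sign as `v`, the size on the ball of radius `1 / 2`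
controls the size on a larger ball. -/
theorem HarmonicOnSet.exists_growth (hv : HarmonicOnSet v (ball 0 1))
    (hne : ∃ x ∈ ball (0 : En n) 1, v x ≠ 0) :
    ∃ C : ℝ, 0 ≤ C ∧ ∀ u : En n → ℝ, HarmonicOnSet u (ball 0 1) →
      (∀ z ∈ ball (0 : En n) 1, 0 ≤ u z * v z) → ∀ S : ℝ,
      (∀ z ∈ closedBall (0 : En n) (1 / 2), |u z| ≤ S) →
      ∀ x ∈ closedBall (0 : En n) 0.6, |u x| ≤ C * S := by
  obtain ⟨C, hC, hmain⟩ := hv.exists_le_productMass hne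
  obtain ⟨V, hV⟩ := ((isCompact_closedBall (0 : En n) 0.845).image_of_continuousOn
    (hv.1.continuousOn.mono (closedBall_subset_ball (by norm_num)))).isBounded.exists_norm_le
  have hV' : ∀ z ∈ closedBall (0 : En n) 0.845, |v z| ≤ V := fun z hz =>
    hV _ (mem_image_of_mem v hz)
  have hV0 : 0 ≤ V := (abs_nonneg _).trans (hV' 0 (mem_closedBall_self (by norm_num)))
  have hm := ballMass_pos n
  refine ⟨C * (V * ballMass n), by positivity, fun u hu huv S hS x hx => ?_⟩
  have hS0 : 0 ≤ S := (abs_nonneg _).trans (hS 0 (mem_closedBall_self (by norm_num)))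
  refine (hmain u hu x hx).trans ?_
  rw [mul_assoc]
  refine mul_le_mul_of_nonneg_left ?_ hC
  have e1 : productMass u v
      = ∫ y, ballWeight y * (u (0 + (0.65 : ℝ) • y) * v (0 + (0.65 : ℝ) • y)) := by
    refine integral_congr_ae (ae_of_all _ fun y => ?_)
    simp only [zero_add]
    by_cases hy : y ∈ closedBall (0 : En n) 1
    · rw [abs_of_nonneg (huv _ ?_)]
      have := add_smul_mem_ball (x := (0 : En n)) (s := 0.65) (R := 1) (by norm_num [abs_of_pos]) hy
      rwa [zero_add] at this
    · simp [ballWeight_eq_zero_of_notMem hy]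
  rw [e1, hu.integral_mul_dilation hv (s' := 1 / 2) (t' := 0.845) (by norm_num) (by norm_num)
    (by norm_num) (by norm_num) (by norm_num) (by norm_num) (by norm_num) (by norm_num)]
  have e2 : V * ballMass n * S = ∫ y : En n, ballWeight y * (S * V) := by
    rw [integral_mul_const]; change _ = ballMass n * _; ring
  rw [e2]
  have cu : ContinuousOn (fun y => u (0 + (1 / 2 : ℝ) • y)) (closedBall (0 : En n) 1) :=
    continuousOn_comp_closedBall (by norm_num)
      (hu.1.continuousOn.mono (closedBall_subset_ball (by norm_num)))
  have cv : ContinuousOn (fun y => v (0 + (0.845 : ℝ) • y)) (closedBall (0 : En n) 1) :=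
    continuousOn_comp_closedBall (by norm_num)
      (hv.1.continuousOn.mono (closedBall_subset_ball (by norm_num)))
  refine integral_mono (integrable_ballWeight_mul (cu.mul cv))
    (integrable_ballWeight_mul continuousOn_const) fun y => ?_
  simp only
  by_cases hy : y ∈ closedBall (0 : En n) 1
  · have h1 := hS _ (add_smul_mem_closedBall (x := 0) (by norm_num) hy)
    have h2 := hV' _ (add_smul_mem_closedBall (x := 0) (by norm_num) hy)
    refine mul_le_mul_of_nonneg_left ?_ (ballWeight_nonneg y)
    refine (le_abs_self _).trans ?_
    rw [abs_mul]
    gcongr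
  · simp [ballWeight_eq_zero_of_notMem hy]

end

section

variable {n : ℕ} {u v f : En n → ℝ} {U : Set (En n)}

theorem HarmonicOnSet.const_mul (hU : IsOpen U) (hf : HarmonicOnSet f U) (c : ℝ) :
    HarmonicOnSet (fun x => c * f x) U :=
  ((hf.meanValueOn hU).const_mul c).harmonicOnSet hU

theorem MeanValueOn.tendsto_iteratedFDeriv (hU : IsOpen U) {u : ℕ → En n → ℝ}
    (hu : ∀ j, MeanValueOn (u j) U) (h : TendstoUniformlyOn u f atTop U) {x : En n} (hx : x ∈ U)
    (k : ℕ) : Tendsto (fun j => iteratedFDeriv ℝ k (u j) x) atTop (𝓝 (iteratedFDeriv ℝ k f x)) := by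
  have hf := MeanValueOn.of_tendstoUniformlyOn hu h
  obtain ⟨C, hC, hbound⟩ := exists_norm_iteratedFDeriv_le n k
  obtain ⟨r, hr, hrU⟩ := Metric.nhds_basis_closedBall.mem_iff.1 (hU.mem_nhds hx)
  rw [Metric.tendsto_atTop']
  intro ε hε
  have hev := Metric.tendstoUniformlyOn_iff.1 h (ε / (C / r ^ k + 1)) (by positivity)
  obtain ⟨N, hN⟩ := eventually_atTop.1 hev
  refine ⟨N, fun j hj => ?_⟩
  have h1 := hbound hU ((hu j).sub hf) hr hrU (M := ε / (C / r ^ k + 1)) fun z hz => by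
    rw [← Real.dist_eq, dist_comm]; exact (hN j hj.le z (hrU hz)).le
  have cu : ContDiffAt ℝ k (u j) x := (((hu j).contDiffOn hU (k := (k : ℕ∞))).contDiffAt
    (hU.mem_nhds hx))
  have cf : ContDiffAt ℝ k f x := ((hf.contDiffOn hU (k := (k : ℕ∞))).contDiffAt (hU.mem_nhds hx))
  change ‖iteratedFDeriv ℝ k (u j - f) x‖ ≤ _ at h1
  rw [iteratedFDeriv_sub_apply cu cf] at h1
  rw [dist_eq_norm]
  refine h1.trans_lt ?_
  rw [mul_div_assoc', div_lt_iff₀ (by positivity)]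
  nlinarith

/-- Compactness of bounded families of harmonic functions. -/
theorem exists_subseq_tendstoUniformlyOn {u : ℕ → En n → ℝ}
    (hu : ∀ j, HarmonicOnSet (u j) (ball 0 1)) {S : ℝ}
    (hS : ∀ j, ∀ x ∈ closedBall (0 : En n) 0.6, |u j x| ≤ S) :
    ∃ (f : En n → ℝ) (φ : ℕ → ℕ), StrictMono φ ∧
      TendstoUniformlyOn (fun j => u (φ j)) f atTop (closedBall 0 0.55) := by
  set X := closedBall (0 : En n) 0.55 with hX
  have hXsub : X ⊆ ball 0 1 := closedBall_subset_ball (by norm_num)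
  set Λ := gradientConst n / 0.05 * S
  have hlip : ∀ j, ∀ x ∈ X, ∀ y ∈ X, ‖u j y - u j x‖ ≤ Λ * ‖y - x‖ := fun j x hx y hy => by
    refine (convex_closedBall (0 : En n) 0.55).norm_image_sub_le_of_norm_fderiv_le
      (𝕜 := ℝ) (fun z hz => ?_) (fun z hz => ?_) hx hy
    · exact (((hu j).meanValueOn isOpen_ball).hasFDerivAt isOpen_ball
        (hXsub hz)).differentiableAt
    · have hs : closedBall z 0.05 ⊆ closedBall (0 : En n) 0.6 := by
        refine closedBall_subset_closedBall' ?_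
        rw [mem_closedBall] at hz; linarith
      exact ((hu j).meanValueOn isOpen_ball).norm_fderiv_le isOpen_ball (by norm_num)
        (hs.trans (closedBall_subset_ball (by norm_num))) fun w hw => hS j w (hs hw)
  have : CompactSpace X := isCompact_iff_compactSpace.1 (isCompact_closedBall _ _)
  let F : ℕ → BoundedContinuousFunction X ℝ := fun j =>
    BoundedContinuousFunction.mkOfCompact ⟨X.domRestrict (u j),
      ((hu j).1.continuousOn.mono hXsub).domRestrict⟩
  have hF : ∀ j (x : X), F j x = u j x := fun _ _ => rfl
  have hcomp : IsCompact (closure (range F)) := by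
    refine BoundedContinuousFunction.arzela_ascoli (Icc (-S) S) isCompact_Icc _ ?_ ?_
    · rintro _ x ⟨j, rfl⟩
      rw [hF]
      exact abs_le.1 (hS j x (closedBall_subset_closedBall (by norm_num) x.2))
    · refine Metric.equicontinuous_of_continuity_modulus (fun t => Λ * t) ?_ _ ?_
      · exact (Continuous.tendsto' (by fun_prop) _ _ (by simp))
      · rintro x y ⟨_, j, rfl⟩
        have := hlip j y y.2 x x.2
        rw [← dist_eq_norm, ← dist_eq_norm] at this
        exact this
  obtain ⟨G, -, φ, hφ, hlim⟩ := hcomp.tendsto_subseq fun j => subset_closure (mem_range_self j)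
  classical
  refine ⟨fun x => if h : x ∈ X then G ⟨x, h⟩ else 0, φ, hφ, ?_⟩
  rw [tendstoUniformlyOn_iff_tendstoUniformly_comp_coe]
  have h2 := BoundedContinuousFunction.tendsto_iff_tendstoUniformly.1 hlim
  convert h2 using 1
  · rfl
  · funext x; simp

/-- Reduction of the bound to a nonvanishing statement for limits. -/
theorem HarmonicOnSet.exists_bound_of_forall_ne_zero (hv : HarmonicOnSet v (ball 0 1))
    (hne : ∃ x ∈ ball (0 : En n) 1, v x ≠ 0) {x₀ : En n} (hx₀ : x₀ ∈ ball (0 : En n) (1 / 2))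
    {k : ℕ} (hord : ∀ f : En n → ℝ, HarmonicOnSet f (ball 0 0.55) →
      (∃ x ∈ ball (0 : En n) 0.55, f x ≠ 0) → (∀ z ∈ ball (0 : En n) 0.55, 0 ≤ f z * v z) →
      iteratedFDeriv ℝ k f x₀ ≠ 0) :
    ∃ C > (0 : ℝ), ∀ u : En n → ℝ, HarmonicOnSet u (ball 0 1) →
      (∀ z ∈ ball (0 : En n) 1, 0 ≤ u z * v z) → ∀ x ∈ ball (0 : En n) (1 / 2),
      |u x| ≤ C * ‖iteratedFDeriv ℝ k u x₀‖ := by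
  by_contra! hcon
  obtain ⟨G, hG, hgrow⟩ := hv.exists_growth hne
  have hx₀1 : x₀ ∈ ball (0 : En n) 1 := ball_subset_ball (by norm_num) hx₀
  have hx₀2 : x₀ ∈ ball (0 : En n) 0.55 := ball_subset_ball (by norm_num) hx₀
  have key : ∀ j : ℕ, ∃ w : En n → ℝ, HarmonicOnSet w (ball 0 1) ∧
      (∀ z ∈ ball (0 : En n) 1, 0 ≤ w z * v z) ∧ (∀ z ∈ closedBall (0 : En n) (1 / 2), |w z| ≤ 1) ∧
      (∃ y ∈ closedBall (0 : En n) (1 / 2), |w y| = 1) ∧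
      ‖iteratedFDeriv ℝ k w x₀‖ ≤ 1 / ((j : ℝ) + 1) := by
    intro j
    obtain ⟨u, hu, huv, x, hx, hlt⟩ := hcon (j + 1) (by positivity)
    obtain ⟨y, hy, hmax⟩ := (isCompact_closedBall (0 : En n) (1 / 2)).exists_isMaxOn
      ⟨0, mem_closedBall_self (by norm_num)⟩
      (hu.1.continuousOn.mono (closedBall_subset_ball (by norm_num))).abs
    have hmax' : ∀ z ∈ closedBall (0 : En n) (1 / 2), |u z| ≤ |u y| := fun z hz => hmax hz
    have hxy := hmax' x (ball_subset_closedBall hx)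
    have hpos : 0 < |u y| := (lt_of_le_of_lt (by positivity) hlt).trans_le hxy
    refine ⟨fun z => |u y|⁻¹ * u z, hu.const_mul isOpen_ball _, fun z hz => ?_, fun z hz => ?_,
      ⟨y, hy, ?_⟩, ?_⟩
    · rw [mul_assoc]; exact mul_nonneg (by positivity) (huv z hz)
    · rw [abs_mul, abs_of_pos (inv_pos.2 hpos), inv_mul_le_iff₀ hpos, mul_one]
      exact hmax' z hz
    · rw [abs_mul, abs_of_pos (inv_pos.2 hpos), inv_mul_cancel₀ hpos.ne']
    · have cu : ContDiffAt ℝ k u x₀ :=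
        (hu.contDiffOn isOpen_ball (k := (k : ℕ∞))).contDiffAt (isOpen_ball.mem_nhds hx₀1)
      have := iteratedFDeriv_const_smul_apply' (a := |u y|⁻¹) cu
      simp only [smul_eq_mul] at this
      rw [this, norm_smul, Real.norm_of_nonneg (by positivity), inv_mul_le_iff₀ hpos, mul_one_div,
        le_div_iff₀ (by positivity)]
      linarith
  choose w hw hwv hw1 hwy hwk using key
  obtain ⟨f, φ, hφ, hlim⟩ := exists_subseq_tendstoUniformlyOn hw fun j =>
    hgrow _ (hw j) (hwv j) 1 (hw1 j)
  have hlim' := hlim.mono (ball_subset_closedBall)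
  have hmv : ∀ j, MeanValueOn (w (φ j)) (ball 0 0.55) := fun j =>
    ((hw (φ j)).mono (ball_subset_ball (by norm_num))).meanValueOn isOpen_ball
  have hf := (MeanValueOn.of_tendstoUniformlyOn hmv hlim').harmonicOnSet isOpen_ball
  refine hord f hf ?_ (fun z hz => ?_) ?_
  · obtain ⟨j, hj⟩ := (Metric.tendstoUniformlyOn_iff.1 hlim' (1 / 2) (by norm_num)).exists
    obtain ⟨y, hy, hy1⟩ := hwy (φ j)
    have hy' : y ∈ ball (0 : En n) 0.55 := closedBall_subset_ball (by norm_num) hy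
    refine ⟨y, hy', fun h0 => ?_⟩
    have := hj y hy'
    rw [h0, dist_zero_left, Real.norm_eq_abs, hy1] at this
    norm_num at this
  · exact ge_of_tendsto ((hlim'.tendsto_at hz).mul_const (v z)) (Eventually.of_forall fun j =>
      hwv _ z (ball_subset_ball (by norm_num) hz))
  · have h1 := (MeanValueOn.tendsto_iteratedFDeriv isOpen_ball hmv hlim' hx₀2 k)
    refine tendsto_nhds_unique h1 ?_
    have h2 : Tendsto (fun j => 1 / ((φ j : ℝ) + 1)) atTop (𝓝 0) :=
      tendsto_one_div_add_atTop_nhds_zero_nat.comp hφ.tendsto_atTop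
    exact squeeze_zero_norm (fun j => hwk (φ j)) h2

end

section

variable {n : ℕ} {u v f : En n → ℝ} {U : Set (En n)}

open Nat in
/-- Taylor's formula with a remainder bound that is uniform in the direction. -/
theorem HarmonicOnSet.exists_taylor_bound {x : En n} {r R : ℝ} (hf : HarmonicOnSet f (ball x R))
    (hr : 0 < r) (hrR : r < R) (k : ℕ) : ∃ C : ℝ, 0 ≤ C ∧ ∀ y ∈ closedBall (0 : En n) 1,
      ∀ t ∈ Icc (0 : ℝ) r, |f (x + t • y) - ∑ j ∈ Finset.range (k + 1),
        ((j ! : ℝ)⁻¹ * t ^ j) * iteratedFDeriv ℝ j f x fun _ => y| ≤ C * t ^ (k + 1) := by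
  have hcd : ∀ z ∈ ball x R, ∀ m : ℕ, ContDiffAt ℝ m f z := fun z hz m =>
    (hf.contDiffOn isOpen_ball (k := (m : ℕ∞))).contDiffAt (isOpen_ball.mem_nhds hz)
  have hcont : ContinuousOn (iteratedFDeriv ℝ (k + 1) f) (closedBall x r) := fun z hz =>
    ((hcd z (closedBall_subset_ball hrR hz) (k + 1)).continuousAt_iteratedFDeriv
      le_rfl).continuousWithinAt
  obtain ⟨C, hC⟩ :=
    ((isCompact_closedBall x r).image_of_continuousOn hcont).isBounded.exists_norm_le
  have hC' : ∀ z ∈ closedBall x r, ‖iteratedFDeriv ℝ (k + 1) f z‖ ≤ C := fun z hz =>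
    hC _ (mem_image_of_mem _ hz)
  have hC0 : 0 ≤ C := (norm_nonneg _).trans (hC' x (mem_closedBall_self hr.le))
  refine ⟨C, hC0, fun y hy t ht => ?_⟩
  have hy1 : ‖y‖ ≤ 1 := mem_closedBall_zero_iff.1 hy
  have hmem : ∀ s ∈ Icc (0 : ℝ) r, x + s • y ∈ closedBall x r := fun s hs =>
    closedBall_subset_closedBall hs.2 (add_smul_mem_closedBall hs.1 hy)
  have hud := uniqueDiffOn_Icc hr
  have hder : ∀ j : ℕ, ∀ s ∈ Icc (0 : ℝ) r,
      iteratedDerivWithin j (fun s : ℝ => f (x + s • y)) (Icc 0 r) s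
        = iteratedFDeriv ℝ j f (x + s • y) fun _ => y := by
    intro j
    induction j with
    | zero => intro s _; simp
    | succ j ih =>
      intro s hs
      rw [iteratedDerivWithin_succ, derivWithin_congr ih (ih s hs), iteratedFDeriv_succ_apply_left]
      have h1 : DifferentiableAt ℝ (iteratedFDeriv ℝ j f) (x + s • y) :=
        (hcd _ (closedBall_subset_ball hrR (hmem s hs)) (j + 1)).differentiableAt_iteratedFDeriv
          (by exact_mod_cast j.lt_succ_self)
      have h2 := hasDerivAt_comp_add_smul h1.hasFDerivAt
      have h3 := ((ContinuousMultilinearMap.apply ℝ (fun _ : Fin j => En n) ℝ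
        (fun _ => y)).hasFDerivAt).comp_hasDerivAt s h2
      exact h3.hasDerivWithinAt.derivWithin (hud s hs)
  have hγ : ContDiffOn ℝ (k + 1) (fun s : ℝ => f (x + s • y)) (Icc 0 r) := fun s hs =>
    ((hcd _ (closedBall_subset_ball hrR (hmem s hs)) (k + 1)).comp s
      (by fun_prop : ContDiff ℝ _ fun s : ℝ => x + s • y).contDiffAt).contDiffWithinAt
  have h := taylor_mean_remainder_bound hr.le hγ ht (C := C) fun s hs => by
    rw [hder _ s hs]
    refine (ContinuousMultilinearMap.le_opNorm _ _).trans ?_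
    have h1 : ∏ _i : Fin (k + 1), ‖y‖ ≤ 1 := Finset.prod_le_one (fun _ _ => norm_nonneg _)
      fun _ _ => hy1
    calc _ ≤ C * 1 := mul_le_mul (hC' _ (hmem s hs)) h1
          (Finset.prod_nonneg fun _ _ => norm_nonneg _) hC0
      _ = C := mul_one C
  rw [taylor_within_apply] at h
  have hs : ∑ j ∈ Finset.range (k + 1), ((j ! : ℝ)⁻¹ * (t - 0) ^ j) •
      iteratedDerivWithin j (fun s : ℝ => f (x + s • y)) (Icc 0 r) 0
      = ∑ j ∈ Finset.range (k + 1), ((j ! : ℝ)⁻¹ * t ^ j) * iteratedFDeriv ℝ j f x fun _ => y := by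
    refine Finset.sum_congr rfl fun j _ => ?_
    rw [hder j 0 (left_mem_Icc.2 hr.le), sub_zero, smul_eq_mul, zero_smul, add_zero]
  rw [hs, sub_zero] at h
  refine h.trans (div_le_self (mul_nonneg hC0 (pow_nonneg ht.1 _)) ?_)
  exact_mod_cast Nat.one_le_iff_ne_zero.2 k.factorial_ne_zero

theorem coeff_eq_zero_of_abs_sum_le {k : ℕ} {c : ℕ → ℝ} {C ρ : ℝ} (hρ : 0 < ρ)
    (h : ∀ s ∈ Ioo 0 ρ, |∑ j ∈ Finset.range (k + 1), c j * s ^ j| ≤ C * s ^ (k + 1)) :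
    ∀ j ≤ k, c j = 0 := by
  induction k generalizing c with
  | zero =>
    intro j hj
    obtain rfl : j = 0 := by omega
    have h1 : Tendsto (fun s : ℝ => C * s ^ 1) (𝓝[>] 0) (𝓝 0) :=
      (Continuous.tendsto' (by fun_prop) _ _ (by simp)).mono_left nhdsWithin_le_nhds
    have h2 : |c 0| ≤ 0 := by
      refine ge_of_tendsto h1 ?_
      filter_upwards [Ioo_mem_nhdsGT hρ] with s hs
      simpa using h s hs
    exact abs_nonpos_iff.1 h2
  | succ k ih =>
    have hc0 : c 0 = 0 := by
      have h1 : Tendsto (fun s : ℝ => C * s ^ (k + 1 + 1)) (𝓝[>] 0) (𝓝 0) :=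
        (Continuous.tendsto' (by fun_prop) _ _ (by simp)).mono_left nhdsWithin_le_nhds
      have h2 : Tendsto (fun s : ℝ => |∑ j ∈ Finset.range (k + 1 + 1), c j * s ^ j|) (𝓝[>] 0)
          (𝓝 |c 0|) := by
        refine (Continuous.tendsto' (by fun_prop) _ _ ?_).mono_left nhdsWithin_le_nhds
        rw [Finset.sum_range_succ']
        simp
      refine abs_nonpos_iff.1 (le_of_tendsto_of_tendsto h2 h1 ?_)
      filter_upwards [Ioo_mem_nhdsGT hρ] with s hs using h s hs
    have h3 := ih (c := fun j => c (j + 1)) fun s hs => by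
      have h4 := h s hs
      rw [Finset.sum_range_succ', hc0, zero_mul, add_zero] at h4
      have h5 : ∑ j ∈ Finset.range (k + 1), c (j + 1) * s ^ (j + 1)
          = s * ∑ j ∈ Finset.range (k + 1), c (j + 1) * s ^ j := by
        rw [Finset.mul_sum]; exact Finset.sum_congr rfl fun j _ => by ring
      rw [h5, abs_mul, abs_of_pos hs.1] at h4
      refine le_of_mul_le_mul_left (h4.trans_eq ?_) hs.1
      ring
    intro j hj
    cases j with
    | zero => exact hc0
    | succ j => exact h3 j (by omega)

end

section

variable {n : ℕ} {u v f : En n → ℝ} {U : Set (En n)} {x : En n} {R : ℝ} {k : ℕ}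

theorem tendsto_integral_ballWeight {ι : Type*} {l : Filter ι} [l.IsCountablyGenerated]
    {F : ι → En n → ℝ} {G : En n → ℝ} {B : ℝ}
    (hF : ∀ᶠ i in l, ContinuousOn (F i) (closedBall 0 1))
    (hB : ∀ᶠ i in l, ∀ y ∈ closedBall (0 : En n) 1, |F i y| ≤ B)
    (hlim : ∀ y ∈ closedBall (0 : En n) 1, Tendsto (fun i => F i y) l (𝓝 (G y))) :
    Tendsto (fun i => ∫ y, ballWeight y * F i y) l (𝓝 (∫ y, ballWeight y * G y)) := by
  refine tendsto_integral_filter_of_dominated_convergence (fun y => ballWeight y * B) ?_ ?_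
    (integrable_ballWeight.mul_const B) ?_
  · filter_upwards [hF] with i hi using (integrable_ballWeight_mul hi).aestronglyMeasurable
  · filter_upwards [hB] with i hi
    refine ae_of_all _ fun y => ?_
    by_cases hy : y ∈ closedBall (0 : En n) 1
    · rw [norm_mul, Real.norm_of_nonneg (ballWeight_nonneg y)]
      exact mul_le_mul_of_nonneg_left (hi y hy) (ballWeight_nonneg y)
    · simp [ballWeight_eq_zero_of_notMem hy]
  · refine ae_of_all _ fun y => ?_
    by_cases hy : y ∈ closedBall (0 : En n) 1
    · exact (hlim y hy).const_mul _
    · simp only [ballWeight_eq_zero_of_notMem hy, zero_mul]; exact tendsto_const_nhds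

/-- The homogeneous term of order `k` in the Taylor expansion of `v` at `x`. -/
def taylorTerm (v : En n → ℝ) (x : En n) (k : ℕ) (y : En n) : ℝ :=
  (k.factorial : ℝ)⁻¹ * iteratedFDeriv ℝ k v x fun _ => y

theorem continuous_taylorTerm (v : En n → ℝ) (x : En n) (k : ℕ) :
    Continuous (taylorTerm v x k) :=
  continuous_const.mul ((iteratedFDeriv ℝ k v x).cont.comp (by fun_prop))

theorem taylorTerm_smul (v : En n → ℝ) (x : En n) (k : ℕ) (c : ℝ) (y : En n) :
    taylorTerm v x k (c • y) = c ^ k * taylorTerm v x k y := by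
  have := (iteratedFDeriv ℝ k v x).map_smul_univ (fun _ => c) (fun _ => y)
  rw [taylorTerm, this, taylorTerm]
  simp only [Finset.prod_const, Finset.card_univ, Fintype.card_fin, smul_eq_mul]
  ring

theorem HarmonicOnSet.exists_abs_sub_taylorTerm_le (hv : HarmonicOnSet v (ball x R)) {r : ℝ}
    (hr : 0 < r) (hrR : r < R) (hvan : ∀ j < k, iteratedFDeriv ℝ j v x = 0) :
    ∃ C : ℝ, 0 ≤ C ∧ ∀ y ∈ closedBall (0 : En n) 1, ∀ t ∈ Icc (0 : ℝ) r,
      |v (x + t • y) - t ^ k * taylorTerm v x k y| ≤ C * t ^ (k + 1) := by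
  obtain ⟨C, hC, h⟩ := hv.exists_taylor_bound hr hrR k
  refine ⟨C, hC, fun y hy t ht => ?_⟩
  have := h y hy t ht
  rw [Finset.sum_range_succ, Finset.sum_eq_zero, zero_add] at this
  · rwa [taylorTerm, ← mul_assoc, mul_comm (t ^ k)]
  · intro j hj
    simp [hvan j (Finset.mem_range.1 hj)]

theorem HarmonicOnSet.exists_taylorTerm_ne_zero (hv : HarmonicOnSet v (ball x R)) (hR : 0 < R)
    (hvan : ∀ j < k, iteratedFDeriv ℝ j v x = 0) (hk : iteratedFDeriv ℝ k v x ≠ 0) :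
    ∃ y ∈ ball (0 : En n) 1, taylorTerm v x k y ≠ 0 := by
  by_contra! hz
  have hz' : ∀ y ∈ closedBall (0 : En n) 1, taylorTerm v x k y = 0 := fun y hy => by
    have h1 : (1 / 2 : ℝ) • y ∈ ball (0 : En n) 1 := by
      rw [mem_closedBall_zero_iff] at hy
      rw [mem_ball_zero_iff, norm_smul]
      norm_num; linarith
    have h2 := hz _ h1
    rw [taylorTerm_smul] at h2
    exact (mul_eq_zero.1 h2).resolve_left (by positivity)
  obtain ⟨C, hC, hT⟩ := hv.exists_abs_sub_taylorTerm_le (half_pos hR) (half_lt_self hR) hvan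
  obtain ⟨D, hD, hcauchy⟩ := exists_norm_iteratedFDeriv_le n k
  have hbound : ∀ t ∈ Ioo 0 (R / 2), ‖iteratedFDeriv ℝ k v x‖ ≤ D * C * t := fun t ht => by
    have ht0 := ht.1
    have h1 := hcauchy isOpen_ball (hv.meanValueOn isOpen_ball) ht.1
      (closedBall_subset_ball (ht.2.trans (half_lt_self hR))) (M := C * t ^ (k + 1)) fun z hz => by
        have h2 : t⁻¹ • (z - x) ∈ closedBall (0 : En n) 1 := by
          rw [mem_closedBall_zero_iff, norm_smul, norm_inv, Real.norm_of_nonneg ht0.le,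
            inv_mul_le_iff₀ ht0, mul_one, ← dist_eq_norm]
          exact hz
        have h3 := hT _ h2 t ⟨ht0.le, ht.2.le⟩
        rwa [hz' _ h2, mul_zero, sub_zero, smul_smul, mul_inv_cancel₀ ht0.ne', one_smul,
          add_sub_cancel] at h3
    refine h1.trans_eq ?_
    rw [pow_succ]; field_simp
  have h0 : ‖iteratedFDeriv ℝ k v x‖ ≤ 0 := by
    have h1 : Tendsto (fun t : ℝ => D * C * t) (𝓝[>] 0) (𝓝 0) :=
      (Continuous.tendsto' (by fun_prop) _ _ (by simp)).mono_left nhdsWithin_le_nhds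
    refine ge_of_tendsto h1 ?_
    filter_upwards [Ioo_mem_nhdsGT (half_pos hR)] with t ht using hbound t ht
  exact hk (norm_le_zero_iff.1 h0)

theorem HarmonicOnSet.tendsto_div_pow (hv : HarmonicOnSet v (ball x R)) (hR : 0 < R)
    (hvan : ∀ j < k, iteratedFDeriv ℝ j v x = 0) {y : En n} (hy : y ∈ closedBall (0 : En n) 1) :
    Tendsto (fun t : ℝ => v (x + t • y) / t ^ k) (𝓝[>] 0) (𝓝 (taylorTerm v x k y)) := by
  obtain ⟨C, hC, hT⟩ := hv.exists_abs_sub_taylorTerm_le (half_pos hR) (half_lt_self hR) hvan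
  rw [tendsto_iff_norm_sub_tendsto_zero]
  have h1 : Tendsto (fun t : ℝ => C * t) (𝓝[>] 0) (𝓝 0) :=
    (Continuous.tendsto' (by fun_prop) _ _ (by simp)).mono_left nhdsWithin_le_nhds
  refine squeeze_zero' (Eventually.of_forall fun _ => norm_nonneg _) ?_ h1
  filter_upwards [Ioo_mem_nhdsGT (half_pos hR)] with t ht
  have ht0 := ht.1
  have h2 := hT y hy t ⟨ht0.le, ht.2.le⟩
  have h3 : v (x + t • y) / t ^ k - taylorTerm v x k y
      = (v (x + t • y) - t ^ k * taylorTerm v x k y) / t ^ k := by field_simp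
  rw [Real.norm_eq_abs, h3, abs_div, abs_of_pos (pow_pos ht0 k), div_le_iff₀ (by positivity)]
  rw [pow_succ] at h2
  linarith

theorem HarmonicOnSet.integral_mul_taylorTerm (hf : HarmonicOnSet f (ball x R))
    (hv : HarmonicOnSet v (ball x R)) (hvan : ∀ j < k, iteratedFDeriv ℝ j v x = 0) {s s' : ℝ}
    (hs : 0 < s) (hsR : s < R) (hs' : 0 < s') (hsR' : s' < R) :
    ∫ y, ballWeight y * (f (x + s • y) * taylorTerm v x k y)
      = (s / s') ^ k * ∫ y, ballWeight y * (f (x + s' • y) * taylorTerm v x k y) := by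
  have hR : 0 < R := hs.trans hsR
  obtain ⟨C, hC, hT⟩ := hv.exists_abs_sub_taylorTerm_le (half_pos hR) (half_lt_self hR) hvan
  obtain ⟨P, hP⟩ := ((isCompact_closedBall (0 : En n) 1).image
    (continuous_taylorTerm v x k)).isBounded.exists_norm_le
  have hP' : ∀ z ∈ closedBall (0 : En n) 1, |taylorTerm v x k z| ≤ P := fun z hz =>
    hP _ (mem_image_of_mem _ hz)
  have key : ∀ s, 0 < s → s < R →
      Tendsto (fun t : ℝ => ∫ y, ballWeight y * (f (x + s • y) * (v (x + t • y) / t ^ k)))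
        (𝓝[>] 0) (𝓝 (∫ y, ballWeight y * (f (x + s • y) * taylorTerm v x k y))) := by
    intro s hs hsR
    have hfc := continuousOn_comp_add_smul hf.1.continuousOn (by rwa [abs_of_pos hs] : |s| < R)
    obtain ⟨A, hA⟩ := ((isCompact_closedBall (0 : En n) 1).image_of_continuousOn
      hfc).isBounded.exists_norm_le
    have hA' : ∀ z ∈ closedBall (0 : En n) 1, |f (x + s • z)| ≤ A := fun z hz =>
      hA _ (mem_image_of_mem _ hz)
    refine tendsto_integral_ballWeight (B := A * (P + C * (R / 2))) ?_ ?_ fun y hy =>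
      (hv.tendsto_div_pow hR hvan hy).const_mul _
    · filter_upwards [Ioo_mem_nhdsGT hR] with t ht
      exact hfc.mul ((continuousOn_comp_add_smul hv.1.continuousOn
        (by rw [abs_of_pos ht.1]; exact ht.2)).div_const _)
    · filter_upwards [Ioo_mem_nhdsGT (half_pos hR)] with t ht y hy
      have ht0 := ht.1
      rw [abs_mul]
      refine mul_le_mul (hA' y hy) ?_ (abs_nonneg _) ((abs_nonneg _).trans (hA' y hy))
      rw [abs_div, abs_of_pos (pow_pos ht0 k), div_le_iff₀ (pow_pos ht0 k)]
      have h2 := hT y hy t ⟨ht0.le, ht.2.le⟩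
      have h3 := abs_sub_abs_le_abs_sub (v (x + t • y)) (t ^ k * taylorTerm v x k y)
      rw [abs_mul, abs_of_pos (pow_pos ht0 k)] at h3
      have h4 := mul_le_mul_of_nonneg_left (hP' y hy) (pow_pos ht0 k).le
      have h5 : C * t ^ (k + 1) ≤ C * (R / 2) * t ^ k := by
        rw [pow_succ, mul_assoc, mul_comm (t ^ k)]
        gcongr
        exact ht.2.le
      linarith
  have h1 := key s hs hsR
  have hsc : Tendsto (fun t : ℝ => s * t / s') (𝓝[>] 0) (𝓝[>] 0) := by
    refine tendsto_nhdsWithin_iff.2 ⟨(Continuous.tendsto' (by fun_prop) _ _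
      (by simp)).mono_left nhdsWithin_le_nhds, ?_⟩
    filter_upwards [self_mem_nhdsWithin] with t ht
    have : 0 < t := ht
    exact mem_Ioi.2 (by positivity)
  have h2 := ((key s' hs' hsR').comp hsc).const_mul ((s / s') ^ k)
  refine tendsto_nhds_unique h1 (h2.congr' ?_)
  have hmin : 0 < min R (s' * R / s) := lt_min hR (by positivity)
  filter_upwards [Ioo_mem_nhdsGT hmin] with t ht
  have ht0 := ht.1
  have htR : t < R := ht.2.trans_le (min_le_left _ _)
  have htR' : s * t / s' < R := by
    have := ht.2.trans_le (min_le_right _ _)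
    rw [lt_div_iff₀ hs] at this
    rw [div_lt_iff₀ hs']; linarith
  have hd := hf.integral_mul_dilation hv hs hsR ht0 htR hs' hsR' htR' (by field_simp)
  simp only [Function.comp_apply]
  have e : ∀ s t : ℝ, ∫ y, ballWeight y * (f (x + s • y) * (v (x + t • y) / t ^ k))
      = (∫ y, ballWeight y * (f (x + s • y) * v (x + t • y))) / t ^ k := fun s t => by
    rw [← integral_div]; simp only [mul_div_assoc]
  have e2 : (s * t / s') ^ k = (s / s') ^ k * t ^ k := by rw [← mul_pow]; congr 1; ring
  rw [e, e, hd, e2]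
  field_simp

theorem HarmonicOnSet.integral_mul_taylorTerm_eq_zero (hf : HarmonicOnSet f (ball x R))
    (hv : HarmonicOnSet v (ball x R)) (hvan : ∀ j < k, iteratedFDeriv ℝ j v x = 0)
    (hfk : iteratedFDeriv ℝ k f x = 0) {s : ℝ} (hs : 0 < s) (hsR : s < R) :
    ∫ y, ballWeight y * (f (x + s • y) * taylorTerm v x k y) = 0 := by
  have hR : 0 < R := hs.trans hsR
  set p := taylorTerm v x k with hp
  have hpc : Continuous p := continuous_taylorTerm v x k
  obtain ⟨P, hP⟩ := ((isCompact_closedBall (0 : En n) 1).image hpc).isBounded.exists_norm_le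
  have hP' : ∀ z ∈ closedBall (0 : En n) 1, |p z| ≤ P := fun z hz =>
    hP _ (mem_image_of_mem _ hz)
  obtain ⟨C, hC, hT⟩ := hf.exists_taylor_bound hs hsR k
  set I := ∫ y, ballWeight y * (f (x + s • y) * p y) with hI
  set c : ℕ → ℝ := fun j => ∫ y, ballWeight y * (taylorTerm f x j y * p y) with hc
  have hck : c k = 0 := by
    simp [hc, taylorTerm, hfk]
  have hIi : ∀ j, Integrable fun y : En n => ballWeight y * (taylorTerm f x j y * p y) := fun j =>
    integrable_ballWeight_mul ((continuous_taylorTerm f x j).mul hpc).continuousOn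
  have hmain := coeff_eq_zero_of_abs_sum_le (k := k)
    (c := fun j => (if j = k then I / s ^ k else 0) - c j)
    (C := C * P * ballMass n) hs fun t ht => by
      have ht0 := ht.1
      have hid := hf.integral_mul_taylorTerm hv hvan ht.1 (ht.2.trans hsR) hs hsR
      have e1 : ∑ j ∈ Finset.range (k + 1), ((if j = k then I / s ^ k else 0) - c j) * t ^ j
          = (∫ y, ballWeight y * (f (x + t • y) * p y)) - ∫ y, ballWeight y *
            ((∑ j ∈ Finset.range (k + 1), t ^ j * taylorTerm f x j y) * p y) := by
        simp only [Finset.sum_mul, Finset.mul_sum]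
        rw [integral_finsetSum _ fun j _ => ?_]
        · simp only [sub_mul, Finset.sum_sub_distrib, ite_mul, zero_mul, Finset.sum_ite_eq',
            Finset.self_mem_range_succ, if_true]
          congr 1
          · rw [hid, ← hI, div_pow]; field_simp
          · refine Finset.sum_congr rfl fun j _ => ?_
            rw [hc, ← integral_mul_const]
            refine integral_congr_ae (ae_of_all _ fun y => ?_)
            simp only
            ring
        · exact ((hIi j).const_mul (t ^ j)).congr (ae_of_all _ fun y => by simp only; ring)
      have cf := continuousOn_comp_add_smul hf.1.continuousOn
        (by rw [abs_of_pos ht0]; exact ht.2.trans hsR : |t| < R)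
      have cs : Continuous fun y => ∑ j ∈ Finset.range (k + 1), t ^ j * taylorTerm f x j y :=
        continuous_finsetSum _ fun j _ => continuous_const.mul (continuous_taylorTerm f x j)
      have i1 : Integrable fun y : En n => ballWeight y * (f (x + t • y) * p y) :=
        integrable_ballWeight_mul (cf.mul hpc.continuousOn)
      have i2 : Integrable fun y : En n => ballWeight y *
            ((∑ j ∈ Finset.range (k + 1), t ^ j * taylorTerm f x j y) * p y) :=
        integrable_ballWeight_mul (cs.mul hpc).continuousOn
      rw [e1, ← integral_sub i1 i2]
      have e2 : C * P * ballMass n * t ^ (k + 1)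
          = ∫ y : En n, ballWeight y * (C * t ^ (k + 1) * P) := by
        rw [integral_mul_const]; change _ = ballMass n * _; ring
      rw [e2]
      refine abs_integral_le_integral_abs.trans (integral_mono (i1.sub i2).abs
        (integrable_ballWeight.mul_const _) fun y => ?_)
      simp only
      by_cases hy : y ∈ closedBall (0 : En n) 1
      · rw [← mul_sub, ← sub_mul, abs_mul, abs_of_nonneg (ballWeight_nonneg y), abs_mul]
        refine mul_le_mul_of_nonneg_left ?_ (ballWeight_nonneg y)
        refine mul_le_mul ?_ (hP' y hy) (abs_nonneg _) (by positivity)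
        have := hT y hy t ⟨ht0.le, ht.2.le⟩
        have e3 : ∑ j ∈ Finset.range (k + 1), t ^ j * taylorTerm f x j y
            = ∑ j ∈ Finset.range (k + 1),
              ((j.factorial : ℝ)⁻¹ * t ^ j) * iteratedFDeriv ℝ j f x fun _ => y :=
          Finset.sum_congr rfl fun j _ => by simp only [taylorTerm]; ring
        rwa [e3]
      · simp [ballWeight_eq_zero_of_notMem hy]
  have h := hmain k le_rfl
  simp only [if_true, hck, sub_zero] at h
  exact (div_eq_zero_iff.1 h).resolve_right (by positivity)

end

section

variable {n : ℕ} {u v f : En n → ℝ} {U : Set (En n)} {x : En n} {R : ℝ} {k : ℕ}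

theorem integral_ballWeight_pos {F : En n → ℝ} (hF : ContinuousOn F (closedBall 0 1))
    (hF0 : ∀ y ∈ closedBall (0 : En n) 1, 0 ≤ F y) {y₀ : En n} (hy₀ : ‖y₀‖ < 1)
    (hpos : 0 < F y₀) : 0 < ∫ y, ballWeight y * F y :=
  integral_mul_pos_of_ball ballWeight_continuous (fun _ => ballWeight_pos)
    (fun _ => ballWeight_eq_zero_of_notMem) hF hF0 hy₀ hpos

theorem HarmonicOnSet.comp_add_smul (hf : HarmonicOnSet f (ball x R)) {s : ℝ} (hs : 0 < s)
    (hsR : s ≤ R) : HarmonicOnSet (fun z => f (x + s • z)) (ball 0 1) := by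
  have hmv := hf.meanValueOn isOpen_ball
  have hmaps : ∀ z ∈ ball (0 : En n) 1, x + s • z ∈ ball x R := fun z hz => by
    rw [mem_ball_zero_iff] at hz
    rw [mem_ball, dist_eq_norm, add_sub_cancel_left, norm_smul, Real.norm_of_nonneg hs.le]
    nlinarith
  refine MeanValueOn.harmonicOnSet isOpen_ball
    ⟨hmv.1.comp (f := fun z : En n => x + s • z) (by fun_prop) hmaps, fun y r hr hy => ?_⟩
  have h := hmv.2 (x + s • y) (s * r) (by positivity) ?_
  · convert h using 4 with z
    change f (x + s • (y + r • z)) = _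
    rw [smul_add, smul_smul, add_assoc]
  · intro w hw
    have h1 : s⁻¹ • (w - x) ∈ closedBall y r := by
      rw [mem_closedBall, dist_eq_norm] at hw ⊢
      have e : s⁻¹ • (w - x) - y = s⁻¹ • (w - (x + s • y)) := by
        rw [← sub_sub, smul_sub _ (w - x), smul_smul, inv_mul_cancel₀ hs.ne', one_smul]
      rw [e, norm_smul, norm_inv, Real.norm_of_nonneg hs.le, inv_mul_le_iff₀ hs]
      exact hw
    have h2 := hmaps _ (hy h1)
    rwa [smul_smul, mul_inv_cancel₀ hs.ne', one_smul, add_sub_cancel] at h2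

/-- Blow-up limits of a harmonic function exist and are nontrivial. -/
theorem HarmonicOnSet.exists_blowup (hR : 0 < R) (hf : HarmonicOnSet f (ball x R))
    (hne : ∃ z ∈ ball x R, f z ≠ 0) :
    ∃ (q : En n → ℝ) (s c : ℕ → ℝ), (∀ i, 0 < s i ∧ s i < R / 2) ∧ Tendsto s atTop (𝓝 0) ∧
      (∀ i, 0 < c i) ∧ HarmonicOnSet q (ball 0 0.55) ∧ (∃ z ∈ ball (0 : En n) 0.55, q z ≠ 0) ∧
      TendstoUniformlyOn (fun i y => c i * f (x + s i • y)) q atTop (closedBall 0 0.55) := by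
  set r := R / 2 with hr
  have hr0 : 0 < r := half_pos hR
  have hrR : r < R := half_lt_self hR
  have hri : ∀ i : ℕ, 0 < r / 2 ^ i ∧ r / 2 ^ i ≤ r := fun i =>
    ⟨by positivity, div_le_self hr0.le (one_le_pow₀ one_le_two)⟩
  have hpos : ∀ i : ℕ, 0 < ballEnergy f x (r / 2 ^ i) := fun i =>
    hf.ballEnergy_pos isOpen_ball (convex_ball _ _).isPreconnected hne (hri i).1
      (closedBall_subset_ball ((hri i).2.trans_lt hrR))
  have h1 := hpos 1
  rw [pow_one] at h1
  set N := ballEnergy f x r / ballEnergy f x (r / 2) with hN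
  have hN0 : 0 ≤ N := div_nonneg (ballEnergy_nonneg _ _ _) h1.le
  have hdy := hf.ballEnergy_dyadic hr0 hrR hpos (N := N) (by rw [hN, div_mul_cancel₀ _ h1.ne'])
  set s : ℕ → ℝ := fun i => r / 2 ^ (i + 1) with hs
  set c : ℕ → ℝ := fun i => (√(ballEnergy f x (r / 2 ^ (i + 2))))⁻¹ with hc
  have hc0 : ∀ i, 0 < c i := fun i => inv_pos.2 (Real.sqrt_pos.2 (hpos _))
  have hc2 : ∀ i, c i ^ 2 = (ballEnergy f x (r / 2 ^ (i + 2)))⁻¹ := fun i => by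
    rw [hc]; simp only; rw [inv_pow, Real.sq_sqrt (hpos _).le]
  have hs0 : ∀ i, 0 < s i := fun i => (hri (i + 1)).1
  have hsr : ∀ i, s i < r := fun i => div_lt_self hr0 (one_lt_pow₀ one_lt_two i.succ_ne_zero)
  have hw : ∀ i, HarmonicOnSet (fun z => c i * f (x + s i • z)) (ball 0 1) := fun i =>
    (hf.comp_add_smul (hs0 i) ((hsr i).trans hrR).le).const_mul isOpen_ball _
  have hS : ∀ i, ∀ z ∈ closedBall (0 : En n) 0.6,
      |c i * f (x + s i • z)| ≤ √(supConst n * (N * N)) := by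
    intro i z hz
    refine Real.abs_le_sqrt ?_
    have e : 2 * s i = r / 2 ^ i := by rw [hs]; simp only; rw [pow_succ]; field_simp
    have h2 := (hf.meanValueOn isOpen_ball).sq_le_ballEnergy (hs0 i)
      (by rw [e]; exact closedBall_subset_ball ((hri i).2.trans_lt hrR))
      (add_smul_mem_closedBall (hs0 i).le (closedBall_subset_closedBall (by norm_num) hz))
    rw [e] at h2
    have h3 : ballEnergy f x (r / 2 ^ i) ≤ N * N * ballEnergy f x (r / 2 ^ (i + 2)) :=
      (hdy i).trans (by rw [mul_assoc]; exact mul_le_mul_of_nonneg_left (hdy (i + 1)) hN0)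
    rw [mul_pow, hc2, inv_mul_le_iff₀ (hpos _)]
    refine h2.trans ((mul_le_mul_of_nonneg_left h3 (supConst_pos n).le).trans_eq ?_)
    ring
  obtain ⟨q, φ, hφ, hlim⟩ := exists_subseq_tendstoUniformlyOn hw hS
  have hs_lim : Tendsto s atTop (𝓝 0) := by
    have h2 : Tendsto (fun i : ℕ => r * (1 / 2 : ℝ) ^ (i + 1)) atTop (𝓝 (r * 0)) :=
      ((tendsto_pow_atTop_nhds_zero_of_lt_one (by norm_num) (by norm_num)).comp
        (tendsto_add_atTop_nat 1)).const_mul r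
    rw [mul_zero] at h2
    refine h2.congr fun i => ?_
    change r * (1 / 2 : ℝ) ^ (i + 1) = r / 2 ^ (i + 1)
    rw [one_div, inv_pow, div_eq_mul_inv]
  have hlim' := hlim.mono ball_subset_closedBall
  have hmv : ∀ i, MeanValueOn (fun z => c (φ i) * f (x + s (φ i) • z)) (ball 0 0.55) := fun i =>
    ((hw (φ i)).mono (ball_subset_ball (by norm_num))).meanValueOn isOpen_ball
  refine ⟨q, s ∘ φ, c ∘ φ, fun i => ⟨hs0 _, hsr _⟩, hs_lim.comp hφ.tendsto_atTop, fun i => hc0 _,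
    (MeanValueOn.of_tendstoUniformlyOn hmv hlim').harmonicOnSet isOpen_ball, ?_, hlim⟩
  by_contra! hq
  have hmem : ∀ y ∈ closedBall (0 : En n) 1, (1 / 2 : ℝ) • y ∈ ball (0 : En n) 0.55 :=
    fun y hy => by
      rw [mem_closedBall_zero_iff] at hy
      rw [mem_ball_zero_iff, norm_smul]
      norm_num; linarith
  have hI : Tendsto (fun i => ∫ y : En n, ballWeight y *
      (c (φ i) * f (x + s (φ i) • (1 / 2 : ℝ) • y)) ^ 2) atTop
      (𝓝 (∫ y : En n, ballWeight y * q ((1 / 2 : ℝ) • y) ^ 2)) := by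
    refine tendsto_integral_ballWeight (B := √(supConst n * (N * N)) ^ 2)
      (Eventually.of_forall fun i => ?_)
      (Eventually.of_forall fun i y hy => ?_) fun y hy => ?_
    · exact ((hmv i).1.comp (f := fun y : En n => (1 / 2 : ℝ) • y) (by fun_prop) hmem).pow 2
    · rw [abs_pow]
      exact pow_le_pow_left₀ (abs_nonneg _) (hS _ _ (closedBall_subset_closedBall (by norm_num)
        (ball_subset_closedBall (hmem y hy)))) 2
    · exact (hlim'.tendsto_at (hmem y hy)).pow 2
  have h0 : ∫ y : En n, ballWeight y * q ((1 / 2 : ℝ) • y) ^ 2 = 0 := by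
    refine integral_eq_zero_of_ae (ae_of_all _ fun y => ?_)
    by_cases hy : y ∈ closedBall (0 : En n) 1
    · simp only [hq _ (hmem y hy)]
      simp
    · simp [ballWeight_eq_zero_of_notMem hy]
  have h1 : ∀ i, ∫ y : En n, ballWeight y *
      (c (φ i) * f (x + s (φ i) • (1 / 2 : ℝ) • y)) ^ 2 = 1 := by
    intro i
    have e : s (φ i) * (1 / 2) = r / 2 ^ (φ i + 2) := by
      rw [hs]; simp only; rw [pow_succ _ (φ i + 1)]; field_simp
    simp only [smul_smul, e, mul_pow, mul_left_comm _ (c (φ i) ^ 2)]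
    rw [integral_const_mul, hc2]
    exact inv_mul_cancel₀ (hpos _).ne'
  simp only [h1, h0] at hI
  exact one_ne_zero (tendsto_nhds_unique tendsto_const_nhds hI)

/-- Harmonic functions whose product is nonnegative vanish to the same order. -/
theorem HarmonicOnSet.iteratedFDeriv_ne_zero_of_mul_nonneg (hR : 0 < R)
    (hf : HarmonicOnSet f (ball x R)) (hv : HarmonicOnSet v (ball x R))
    (hfne : ∃ z ∈ ball x R, f z ≠ 0) (hfv : ∀ z ∈ ball x R, 0 ≤ f z * v z)
    (hvan : ∀ j < k, iteratedFDeriv ℝ j v x = 0) (hvk : iteratedFDeriv ℝ k v x ≠ 0) :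
    iteratedFDeriv ℝ k f x ≠ 0 := by
  intro hfk
  obtain ⟨q, s, c, hs, hs0, hc, hq, hqne, hlim⟩ := hf.exists_blowup hR hfne
  obtain ⟨y₀, hy₀, hp₀⟩ := hv.exists_taylorTerm_ne_zero hR hvan hvk
  set p := taylorTerm v x k with hp
  have hpc : Continuous p := continuous_taylorTerm v x k
  have hmem : ∀ y ∈ closedBall (0 : En n) 1, (1 / 2 : ℝ) • y ∈ ball (0 : En n) 0.55 :=
    fun y hy => by
      rw [mem_closedBall_zero_iff] at hy
      rw [mem_ball_zero_iff, norm_smul]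
      norm_num; linarith
  have hlim' := hlim.mono ball_subset_closedBall
  have hs2 : ∀ i, 0 < s i * (1 / 2) ∧ s i * (1 / 2) < R := fun i => by
    have := hs i; constructor <;> linarith [this.1, this.2]
  have hqc : ContinuousOn (fun y => q ((1 / 2 : ℝ) • y)) (closedBall (0 : En n) 1) :=
    hq.1.continuousOn.comp (f := fun y : En n => (1 / 2 : ℝ) • y) (by fun_prop) hmem
  have hfc : ∀ i, ContinuousOn (fun y => c i * f (x + s i • (1 / 2 : ℝ) • y))
      (closedBall (0 : En n) 1) := fun i => by
    simp only [smul_smul]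
    exact continuousOn_const.mul (continuousOn_comp_add_smul hf.1.continuousOn
      (by rw [abs_of_pos (hs2 i).1]; exact (hs2 i).2))
  obtain ⟨P, hP⟩ := ((isCompact_closedBall (0 : En n) 1).image_of_continuousOn
    hpc.continuousOn).isBounded.exists_norm_le
  have hP' : ∀ z ∈ closedBall (0 : En n) 1, |p z| ≤ P := fun z hz =>
    hP _ (mem_image_of_mem _ hz)
  obtain ⟨Q, hQ⟩ := ((isCompact_closedBall (0 : En n) 1).image_of_continuousOn
    hqc).isBounded.exists_norm_le
  have hQ' : ∀ z ∈ closedBall (0 : En n) 1, |q ((1 / 2 : ℝ) • z)| ≤ Q := fun z hz =>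
    hQ _ (mem_image_of_mem _ hz)
  have hI : Tendsto (fun i => ∫ y : En n, ballWeight y *
      (c i * f (x + s i • (1 / 2 : ℝ) • y) * p y)) atTop
      (𝓝 (∫ y : En n, ballWeight y * (q ((1 / 2 : ℝ) • y) * p y))) := by
    refine tendsto_integral_ballWeight (B := (Q + 1) * P)
      (Eventually.of_forall fun i => (hfc i).mul hpc.continuousOn) ?_ fun y hy =>
        (hlim'.tendsto_at (hmem y hy)).mul_const _
    filter_upwards [Metric.tendstoUniformlyOn_iff.1 hlim' 1 one_pos] with i hi y hy
    have h1 := hi _ (hmem y hy)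
    rw [dist_comm, Real.dist_eq] at h1
    have h2 := abs_sub_abs_le_abs_sub (c i * f (x + s i • (1 / 2 : ℝ) • y)) (q ((1 / 2 : ℝ) • y))
    have h3 := hQ' y hy
    rw [abs_mul]
    exact mul_le_mul (by linarith) (hP' y hy) (abs_nonneg _)
      (by linarith [abs_nonneg (q ((1 / 2 : ℝ) • y))])
  have h0 : ∀ i, ∫ y : En n, ballWeight y * (c i * f (x + s i • (1 / 2 : ℝ) • y) * p y) = 0 := by
    intro i
    have := hf.integral_mul_taylorTerm_eq_zero hv hvan hfk (hs2 i).1 (hs2 i).2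
    simp only [smul_smul, mul_assoc (c i), mul_left_comm _ (c i)]
    rw [integral_const_mul, this, mul_zero]
  simp only [h0] at hI
  have hI0 := tendsto_nhds_unique hI tendsto_const_nhds
  have hnn : ∀ y ∈ closedBall (0 : En n) 1, 0 ≤ q ((1 / 2 : ℝ) • y) * p y := by
    intro y hy
    have ht : Tendsto (fun i => s i * (1 / 2)) atTop (𝓝[>] 0) := by
      refine tendsto_nhdsWithin_iff.2 ⟨?_, Eventually.of_forall fun i => (hs2 i).1⟩
      have h := hs0.mul_const (1 / 2 : ℝ)
      rwa [zero_mul] at h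
    refine ge_of_tendsto ((hlim'.tendsto_at (hmem y hy)).mul
      ((hv.tendsto_div_pow hR hvan hy).comp ht)) (Eventually.of_forall fun i => ?_)
    simp only [Function.comp_apply, smul_smul]
    have h1 := hfv _ (add_smul_mem_ball (x := x) (s := s i * (1 / 2)) (R := R)
      (by rw [abs_of_pos (hs2 i).1]; exact (hs2 i).2) hy)
    have h2 := (hs2 i).1
    rw [mul_assoc, mul_div_assoc']
    exact mul_nonneg (hc i).le (div_nonneg h1 (by positivity))
  have hzero : ∀ y ∈ ball (0 : En n) 1, q ((1 / 2 : ℝ) • y) * p y = 0 := by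
    intro y hy
    by_contra hne
    have := integral_ballWeight_pos (hqc.mul hpc.continuousOn) hnn (mem_ball_zero_iff.1 hy)
      ((hnn y (ball_subset_closedBall hy)).lt_of_ne' hne)
    exact this.ne' hI0
  obtain ⟨z, hz, hqz⟩ := hqne
  refine hqz (hq.eqOn_zero isOpen_ball (convex_ball _ _).isPreconnected
    (hmem y₀ (ball_subset_closedBall hy₀)) ?_ z hz)
  have hev : ∀ᶠ y in 𝓝 y₀, p y ≠ 0 ∧ y ∈ ball (0 : En n) 1 :=
    (hpc.continuousAt.eventually_ne hp₀).and (isOpen_ball.mem_nhds hy₀)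
  have hcont : Tendsto (fun w : En n => (2 : ℝ) • w) (𝓝 ((1 / 2 : ℝ) • y₀)) (𝓝 y₀) :=
    Continuous.tendsto' (by fun_prop) _ _ (by rw [smul_smul]; norm_num)
  filter_upwards [hcont.eventually hev] with w hw
  have h1 := hzero _ hw.2
  rw [smul_smul] at h1
  norm_num at h1
  exact h1.resolve_right hw.1

end

section

variable {n : ℕ} {u v f : En n → ℝ} {U A A' : Set (En n)} {x z : En n} {R ε : ℝ}

theorem hasFDerivAt_indicator_of_flat {F : Type*} [NormedAddCommGroup F] [NormedSpace ℝ F]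
    {Φ : En n → F} {Φ' : En n → En n →L[ℝ] F} (hA : IsOpen A) (hA' : IsOpen A')
    (hdisj : Disjoint A A') (h : HasFDerivAt Φ (Φ' z) z)
    (hz : z ∈ A ∨ z ∈ A' ∨ Φ z = 0 ∧ Φ' z = 0) :
    HasFDerivAt (A.indicator Φ) (A.indicator Φ' z) z := by
  rcases hz with hz | hz | ⟨h0, h1⟩
  · rw [indicator_of_mem hz]
    refine h.congr_of_eventuallyEq ?_
    filter_upwards [hA.mem_nhds hz] with y hy using indicator_of_mem hy _
  · rw [indicator_of_notMem (hdisj.notMem_of_mem_right hz)]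
    refine (hasFDerivAt_const (0 : F) z).congr_of_eventuallyEq ?_
    filter_upwards [hA'.mem_nhds hz] with y hy
      using indicator_of_notMem (hdisj.notMem_of_mem_right hy) _
  · have e1 : A.indicator Φ' z = 0 := by rw [indicator_apply_eq_zero]; exact fun _ => h1
    have e2 : A.indicator Φ z = 0 := by rw [indicator_apply_eq_zero]; exact fun _ => h0
    rw [h1, hasFDerivAt_iff_isLittleO] at h
    rw [e1, hasFDerivAt_iff_isLittleO]
    refine (Asymptotics.IsBigO.of_bound 1 (Eventually.of_forall fun y => ?_)).trans_isLittleO h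
    simp only [h0, e2, sub_zero, zero_apply, one_mul]
    exact norm_indicator_le_norm_self _ _

theorem continuousAt_indicator_of_eq_zero {F : Type*} [NormedAddCommGroup F] {Φ : En n → F}
    (hA : IsOpen A) (hA' : IsOpen A') (hdisj : Disjoint A A') (h : ContinuousAt Φ z)
    (hz : z ∈ A ∨ z ∈ A' ∨ Φ z = 0) : ContinuousAt (A.indicator Φ) z := by
  rcases hz with hz | hz | h0
  · refine h.congr ?_
    filter_upwards [hA.mem_nhds hz] with y hy using (indicator_of_mem hy _).symm
  · refine (continuousAt_const (y := (0 : F))).congr ?_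
    filter_upwards [hA'.mem_nhds hz] with y hy
      using (indicator_of_notMem (hdisj.notMem_of_mem_right hy) _).symm
  · have e2 : A.indicator Φ z = 0 := by rw [indicator_apply_eq_zero]; exact fun _ => h0
    have h' : Tendsto Φ (𝓝 z) (𝓝 0) := h0 ▸ h
    rw [ContinuousAt, e2]
    exact squeeze_zero_norm (fun y => norm_indicator_le_norm_self _ _)
      (norm_zero (E := F) ▸ h'.norm)

/-- The partial derivatives of `v`. -/
def partialDeriv (v : En n → ℝ) (i : Fin n) (z : En n) : ℝ :=
  fderiv ℝ v z (EuclideanSpace.single i 1)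

/-- The squared gradient of `v`. -/
def gradSq (v : En n → ℝ) (z : En n) : ℝ := ∑ i, partialDeriv v i z ^ 2

/-- The derivative of `partialDeriv v i`. -/
def partialDerivDeriv (v : En n → ℝ) (i : Fin n) (z : En n) : En n →L[ℝ] ℝ :=
  (fderiv ℝ (fderiv ℝ v) z).flip (EuclideanSpace.single i 1)

/-- The derivative of `gradSq v`. -/
def gradSqDeriv (v : En n → ℝ) (z : En n) : En n →L[ℝ] ℝ :=
  ∑ i, (2 * partialDeriv v i z) • partialDerivDeriv v i z

theorem gradSq_nonneg (v : En n → ℝ) (z : En n) : 0 ≤ gradSq v z :=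
  Finset.sum_nonneg fun _ _ => sq_nonneg _

theorem hasFDerivAt_partialDeriv (hU : IsOpen U) (hv : ContDiffOn ℝ 2 v U) (hz : z ∈ U)
    (i : Fin n) : HasFDerivAt (partialDeriv v i) (partialDerivDeriv v i z) z := by
  refine ((contDiffOn_two_hasFDerivAt_fderiv hU hv hz).clm_apply
    (hasFDerivAt_const (EuclideanSpace.single i (1 : ℝ)) z)).congr_fderiv ?_
  ext y; simp [partialDerivDeriv]

theorem hasFDerivAt_gradSq (hU : IsOpen U) (hv : ContDiffOn ℝ 2 v U) (hz : z ∈ U) :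
    HasFDerivAt (gradSq v) (gradSqDeriv v z) z := by
  refine HasFDerivAt.fun_sum fun i _ => ?_
  refine ((hasFDerivAt_partialDeriv hU hv hz i).pow 2).congr_fderiv ?_
  simp

/-- The components of the gradient of `v`, cut off where the gradient is small. -/
def cutGrad (v : En n → ℝ) (ε : ℝ) (i : Fin n) (z : En n) : ℝ :=
  gradSq v z / (gradSq v z + ε) * partialDeriv v i z

/-- The derivative of `cutGrad v ε i`. -/
def cutGradDeriv (v : En n → ℝ) (ε : ℝ) (i : Fin n) (z : En n) : En n →L[ℝ] ℝ :=
  (gradSq v z / (gradSq v z + ε)) • partialDerivDeriv v i z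
    + (ε / (gradSq v z + ε) ^ 2 * partialDeriv v i z) • gradSqDeriv v z

theorem hasFDerivAt_cutGrad (hU : IsOpen U) (hv : ContDiffOn ℝ 2 v U) (hz : z ∈ U) (hε : 0 < ε)
    (i : Fin n) : HasFDerivAt (cutGrad v ε i) (cutGradDeriv v ε i z) z := by
  have hg : gradSq v z + ε ≠ 0 := by have := gradSq_nonneg v z; positivity
  have h1 : HasDerivAt (fun t : ℝ => t / (t + ε)) (ε / (gradSq v z + ε) ^ 2) (gradSq v z) := by
    refine ((hasDerivAt_id (gradSq v z)).div ((hasDerivAt_id _).add_const ε) hg).congr_deriv ?_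
    simp
  refine ((h1.comp_hasFDerivAt z (hasFDerivAt_gradSq hU hv hz)).mul
    (hasFDerivAt_partialDeriv hU hv hz i)).congr_fderiv ?_
  ext y
  simp [cutGradDeriv]
  ring

theorem continuousOn_partialDeriv (hU : IsOpen U) (hv : ContDiffOn ℝ 2 v U) (i : Fin n) :
    ContinuousOn (partialDeriv v i) U := fun _ hz =>
  (hasFDerivAt_partialDeriv hU hv hz i).continuousAt.continuousWithinAt

theorem continuousOn_gradSq (hU : IsOpen U) (hv : ContDiffOn ℝ 2 v U) :
    ContinuousOn (gradSq v) U := fun _ hz =>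
  (hasFDerivAt_gradSq hU hv hz).continuousAt.continuousWithinAt

theorem continuousOn_partialDerivDeriv (hU : IsOpen U) (hv : ContDiffOn ℝ 2 v U) (i : Fin n)
    (y : En n) : ContinuousOn (fun z => partialDerivDeriv v i z y) U :=
  ((contDiffOn_two_continuousOn_fderiv_fderiv hU hv).clm_apply continuousOn_const).clm_apply
    continuousOn_const

theorem gradSqDeriv_apply (v : En n → ℝ) (z y : En n) :
    gradSqDeriv v z y = ∑ i, 2 * partialDeriv v i z * partialDerivDeriv v i z y := by
  simp [gradSqDeriv]

theorem continuousOn_gradSqDeriv (hU : IsOpen U) (hv : ContDiffOn ℝ 2 v U) (y : En n) :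
    ContinuousOn (fun z => gradSqDeriv v z y) U := by
  simp only [gradSqDeriv_apply]
  exact continuousOn_finsetSum _ fun i _ => (continuousOn_const.mul
    (continuousOn_partialDeriv hU hv i)).mul (continuousOn_partialDerivDeriv hU hv i y)

theorem continuousOn_cutGradDeriv (hU : IsOpen U) (hv : ContDiffOn ℝ 2 v U) (hε : 0 < ε)
    (i : Fin n) (y : En n) : ContinuousOn (fun z => cutGradDeriv v ε i z y) U := by
  have hg : ∀ z ∈ U, gradSq v z + ε ≠ 0 := fun z _ => by have := gradSq_nonneg v z; positivity
  have c := continuousOn_gradSq hU hv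
  have c' : ContinuousOn (fun z => gradSq v z + ε) U := c.add continuousOn_const
  exact ((c.div c' hg).mul (continuousOn_partialDerivDeriv hU hv i y)).add
    (((continuousOn_const.div (c'.pow 2) fun z hz => pow_ne_zero 2 (hg z hz)).mul
      (continuousOn_partialDeriv hU hv i)).mul (continuousOn_gradSqDeriv hU hv y))

theorem abs_partialDeriv_mul_le (v : En n → ℝ) (i j : Fin n) (z : En n) :
    |partialDeriv v i z * partialDeriv v j z| ≤ gradSq v z := by
  have h := fun i => Finset.single_le_sum (f := fun i => partialDeriv v i z ^ 2)
    (fun _ _ => sq_nonneg _) (Finset.mem_univ i)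
  have h1 : partialDeriv v i z ^ 2 ≤ gradSq v z := h i
  have h2 : partialDeriv v j z ^ 2 ≤ gradSq v z := h j
  rw [abs_le]
  constructor <;> nlinarith [sq_nonneg (partialDeriv v i z + partialDeriv v j z),
    sq_nonneg (partialDeriv v i z - partialDeriv v j z)]

theorem abs_sum_partialDeriv_mul_gradSqDeriv_le (v : En n → ℝ) (z : En n) :
    |∑ i, partialDeriv v i z * gradSqDeriv v z (EuclideanSpace.single i 1)|
      ≤ (∑ i, ∑ j, 2 * |partialDerivDeriv v j z (EuclideanSpace.single i 1)|) * gradSq v z := by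
  rw [Finset.sum_mul]
  refine (Finset.abs_sum_le_sum_abs _ _).trans (Finset.sum_le_sum fun i _ => ?_)
  rw [gradSqDeriv_apply, Finset.mul_sum, Finset.sum_mul]
  refine (Finset.abs_sum_le_sum_abs _ _).trans (Finset.sum_le_sum fun j _ => ?_)
  have h := mul_le_mul_of_nonneg_left (abs_partialDeriv_mul_le v i j z)
    (abs_nonneg (2 * partialDerivDeriv v j z (EuclideanSpace.single i 1)))
  rw [← abs_mul] at h
  have e : |2 * partialDerivDeriv v j z (EuclideanSpace.single i 1)|
      = 2 * |partialDerivDeriv v j z (EuclideanSpace.single i 1)| := by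
    rw [abs_mul, abs_of_pos (two_pos)]
  rw [← e]
  exact (congrArg abs (by ring)).trans_le h

theorem sum_cutGradDeriv (hv : laplacianAt v z = 0) :
    ∑ i, cutGradDeriv v ε i z (EuclideanSpace.single i 1) = ε / (gradSq v z + ε) ^ 2 *
      ∑ i, partialDeriv v i z * gradSqDeriv v z (EuclideanSpace.single i 1) := by
  rw [laplacianAt_eq_sum_fderiv] at hv
  simp only [cutGradDeriv, add_apply, smul_apply, smul_eq_mul, Finset.sum_add_distrib,
    ← Finset.mul_sum, mul_assoc]
  have : ∑ i, partialDerivDeriv v i z (EuclideanSpace.single i 1) = 0 := hv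
  rw [this, mul_zero, zero_add]

end

section

variable {n : ℕ} {u v f : En n → ℝ} {U A A' : Set (En n)} {x z : En n} {R s ε : ℝ}

theorem abs_cutGrad_le (hε : 0 < ε) (i : Fin n) : |cutGrad v ε i z| ≤ |partialDeriv v i z| := by
  have hg := gradSq_nonneg v z
  rw [cutGrad, abs_mul, abs_of_nonneg (by positivity)]
  exact mul_le_of_le_one_left (abs_nonneg _) (div_le_one_of_le₀ (by linarith) (by positivity))

theorem tendsto_cutGrad (i : Fin n) {e : ℕ → ℝ} (he : Tendsto e atTop (𝓝 0)) :
    Tendsto (fun m => cutGrad v (e m) i z) atTop (𝓝 (partialDeriv v i z)) := by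
  rcases eq_or_ne (gradSq v z) 0 with h0 | h0
  · have h1 : partialDeriv v i z = 0 := by
      have := abs_partialDeriv_mul_le v i i z
      rw [h0] at this
      exact mul_self_eq_zero.1 (abs_nonpos_iff.1 this)
    simp [cutGrad, h1]
  · have h1 : Tendsto (fun m => gradSq v z + e m) atTop (𝓝 (gradSq v z)) := by
      simpa using he.const_add (gradSq v z)
    have h2 := (((tendsto_const_nhds (x := gradSq v z)).div h1 h0)).mul_const (partialDeriv v i z)
    rwa [div_self h0, one_mul] at h2

theorem abs_sum_cutGradDeriv_le (hv : laplacianAt v z = 0) (hε : 0 < ε) :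
    |∑ i, cutGradDeriv v ε i z (EuclideanSpace.single i 1)|
      ≤ ∑ i, ∑ j, 2 * |partialDerivDeriv v j z (EuclideanSpace.single i 1)| := by
  have hg := gradSq_nonneg v z
  have h := abs_sum_partialDeriv_mul_gradSqDeriv_le v z
  set S := ∑ i, ∑ j, 2 * |partialDerivDeriv v j z (EuclideanSpace.single i 1)| with hS
  have hS0 : 0 ≤ S := by positivity
  rw [sum_cutGradDeriv hv, abs_mul, abs_of_nonneg (by positivity), div_mul_eq_mul_div,
    div_le_iff₀ (by positivity)]
  refine (mul_le_mul_of_nonneg_left h hε.le).trans ?_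
  have : ε * gradSq v z ≤ (gradSq v z + ε) ^ 2 := by nlinarith
  nlinarith

theorem tendsto_sum_cutGradDeriv (hv : laplacianAt v z = 0) {e : ℕ → ℝ}
    (he : Tendsto e atTop (𝓝 0)) :
    Tendsto (fun m => ∑ i, cutGradDeriv v (e m) i z (EuclideanSpace.single i 1)) atTop (𝓝 0) := by
  simp only [sum_cutGradDeriv hv]
  rcases eq_or_ne (gradSq v z) 0 with h0 | h0
  · have := abs_sum_partialDeriv_mul_gradSqDeriv_le v z
    rw [h0, mul_zero] at this
    simp [abs_nonpos_iff.1 this]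
  · have h1 : Tendsto (fun m => (gradSq v z + e m) ^ 2) atTop (𝓝 (gradSq v z ^ 2)) := by
      simpa using (he.const_add (gradSq v z)).pow 2
    have h2 := (he.div h1 (pow_ne_zero 2 h0)).mul_const
      (∑ i, partialDeriv v i z * gradSqDeriv v z (EuclideanSpace.single i 1))
    rwa [zero_div, zero_mul] at h2

theorem partialDeriv_eq_zero (h : fderiv ℝ v z = 0) (i : Fin n) : partialDeriv v i z = 0 := by
  simp [partialDeriv, h]

theorem gradSq_eq_zero (h : fderiv ℝ v z = 0) : gradSq v z = 0 := by
  simp [gradSq, partialDeriv_eq_zero h]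

/-- The gradient of a harmonic function, restricted to an open set whose frontier consists of
critical points, has zero flux. -/
theorem HarmonicOnSet.integral_indicator_fderiv (hv : HarmonicOnSet v (ball x R)) (hA : IsOpen A)
    (hA' : IsOpen A') (hdisj : Disjoint A A')
    (hcov : ∀ z ∈ ball x R, z ∈ A ∨ z ∈ A' ∨ v z = 0 ∧ fderiv ℝ v z = 0) (hs : |s| < R) :
    ∫ y, ballWeight y * A.indicator (fderiv ℝ v) (x + s • y) y = 0 := by
  have hmem : ∀ y ∈ closedBall (0 : En n) 1, x + s • y ∈ ball x R := fun y hy =>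
    add_smul_mem_ball hs hy
  set e : ℕ → ℝ := fun m => 1 / ((m : ℝ) + 1) with he_def
  have he : Tendsto e atTop (𝓝 0) := tendsto_one_div_add_atTop_nhds_zero_nat
  have he0 : ∀ m, 0 < e m := fun m => Nat.one_div_pos_of_nat
  have hX : ∀ m i, ∀ y ∈ closedBall (0 : En n) 1,
      HasFDerivAt (fun y => A.indicator (cutGrad v (e m) i) (x + s • y))
        (s • A.indicator (cutGradDeriv v (e m) i) (x + s • y)) y := fun m i y hy =>
    hasFDerivAt_comp_add_smul (hasFDerivAt_indicator_of_flat hA hA' hdisj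
      (hasFDerivAt_cutGrad isOpen_ball hv.1 (hmem y hy) (he0 m) i)
      ((hcov _ (hmem y hy)).imp_right fun h => h.imp_right fun h =>
        ⟨by simp [cutGrad, partialDeriv_eq_zero h.2],
          by simp [cutGradDeriv, partialDeriv_eq_zero h.2, gradSq_eq_zero h.2]⟩))
  have hpre : MeasurableSet ((fun y : En n => x + s • y) ⁻¹' A) :=
    (hA.preimage (by fun_prop)).measurableSet
  have hX' : ∀ m i, IntegrableOn (fun y => (s • A.indicator (cutGradDeriv v (e m) i) (x + s • y))
      (EuclideanSpace.single i 1)) (closedBall (0 : En n) 1) := fun m i => by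
    have h1 : ContinuousOn (fun y : En n => s * cutGradDeriv v (e m) i (x + s • y)
        (EuclideanSpace.single i 1)) (closedBall 0 1) :=
      continuousOn_const.mul (continuousOn_comp_add_smul
        (continuousOn_cutGradDeriv isOpen_ball hv.1 (he0 m) i _) hs)
    refine ((h1.integrableOn_compact (isCompact_closedBall _ _)).indicator hpre).congr
      (ae_of_all _ fun y => ?_)
    by_cases hy : x + s • y ∈ A
    · rw [indicator_of_mem (show y ∈ (fun y : En n => x + s • y) ⁻¹' A from hy)]
      simp [indicator_of_mem hy]
    · rw [indicator_of_notMem (show y ∉ (fun y : En n => x + s • y) ⁻¹' A from hy)]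
      simp [indicator_of_notMem hy]
  have hflux := fun m => integral_ballWeight_flux (hX m) (hX' m)
  have hH : ContinuousOn (fun y : En n => ∑ i, ∑ j,
      2 * |partialDerivDeriv v j (x + s • y) (EuclideanSpace.single i 1)|) (closedBall 0 1) :=
    continuousOn_finsetSum _ fun i _ => continuousOn_finsetSum _ fun j _ =>
      continuousOn_const.mul (continuousOn_comp_add_smul
        (continuousOn_partialDerivDeriv isOpen_ball hv.1 j _) hs).abs
  have hdiv : ∀ (m : ℕ) (y : En n),
      ∑ i, (s • A.indicator (cutGradDeriv v (e m) i) (x + s • y)) (EuclideanSpace.single i 1)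
        = A.indicator (fun z => s * ∑ i, cutGradDeriv v (e m) i z (EuclideanSpace.single i 1))
          (x + s • y) := fun m y => by
    by_cases hy : x + s • y ∈ A
    · simp [indicator_of_mem hy, Finset.mul_sum]
    · simp [indicator_of_notMem hy]
  have hR : Tendsto (fun m => ∫ y : En n, ballPotential y * ∑ i, (s • A.indicator
      (cutGradDeriv v (e m) i) (x + s • y)) (EuclideanSpace.single i 1)) atTop
      (𝓝 (∫ _ : En n, (0 : ℝ))) := by
    have hb := integrable_mul_of_eq_zero (ballPotential_continuous (n := n))
      (fun _ => ballPotential_eq_zero_of_notMem)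
      ((continuousOn_const (c := |s|)).mul hH |>.integrableOn_compact (isCompact_closedBall _ _))
    refine tendsto_integral_of_dominated_convergence _ (fun m => ?_) hb.norm (fun m => ?_) ?_
    · exact (integrable_mul_of_eq_zero (ballPotential_continuous (n := n))
        (fun _ => ballPotential_eq_zero_of_notMem)
        (integrable_finsetSum _ fun i _ => hX' m i)).aestronglyMeasurable
    · refine ae_of_all _ fun y => ?_
      by_cases hy : y ∈ closedBall (0 : En n) 1
      · rw [norm_mul, norm_mul, hdiv]
        refine mul_le_mul_of_nonneg_left ((norm_indicator_le_norm_self _ _).trans ?_)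
          (norm_nonneg _)
        rw [norm_mul, Real.norm_eq_abs s]
        refine (mul_le_mul_of_nonneg_left (abs_sum_cutGradDeriv_le (hv.2 _ (hmem y hy)) (he0 m))
          (abs_nonneg s)).trans (le_abs_self _)
      · simp [ballPotential_eq_zero_of_notMem hy]
    · refine ae_of_all _ fun y => ?_
      by_cases hy : y ∈ closedBall (0 : En n) 1
      · simp only [hdiv]
        by_cases hyA : x + s • y ∈ A
        · simp only [indicator_of_mem hyA]
          have h := (tendsto_sum_cutGradDeriv (hv.2 _ (hmem y hy)) he).const_mul s
          have h' := h.const_mul (ballPotential y)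
          rwa [mul_zero, mul_zero] at h'
        · simp [indicator_of_notMem hyA]
      · simp [ballPotential_eq_zero_of_notMem hy]
  have hK : ContinuousOn (fun y : En n => ∑ i, |y i| * |partialDeriv v i (x + s • y)|)
      (closedBall 0 1) :=
    continuousOn_finsetSum _ fun i _ => (by fun_prop : Continuous fun y : En n =>
      |y i|).continuousOn.mul (continuousOn_comp_add_smul
        (continuousOn_partialDeriv isOpen_ball hv.1 i) hs).abs
  obtain ⟨K, hK⟩ := ((isCompact_closedBall (0 : En n) 1).image_of_continuousOn
    hK).isBounded.exists_norm_le
  have hL : Tendsto (fun m => ∫ y : En n, ballWeight y * ∑ i, y i *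
      A.indicator (cutGrad v (e m) i) (x + s • y)) atTop
      (𝓝 (∫ y : En n, ballWeight y * A.indicator (fderiv ℝ v) (x + s • y) y)) := by
    refine tendsto_integral_ballWeight (B := K) (Eventually.of_forall fun m => ?_)
      (Eventually.of_forall fun m y hy => ?_) fun y hy => ?_
    · exact continuousOn_finsetSum _ fun i _ => (by fun_prop : Continuous fun y : En n =>
        y i).continuousOn.mul fun y hy => (hX m i y hy).continuousAt.continuousWithinAt
    · refine le_trans ?_ ((le_abs_self _).trans (hK _ (mem_image_of_mem _ hy)))
      refine (Finset.abs_sum_le_sum_abs _ _).trans (Finset.sum_le_sum fun i _ => ?_)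
      rw [abs_mul]
      have h : |A.indicator (cutGrad v (e m) i) (x + s • y)| ≤ |cutGrad v (e m) i (x + s • y)| :=
        norm_indicator_le_norm_self (cutGrad v (e m) i) _
      exact mul_le_mul_of_nonneg_left (h.trans (abs_cutGrad_le (he0 m) i)) (abs_nonneg _)
    · by_cases hyA : x + s • y ∈ A
      · simp only [indicator_of_mem hyA]
        rw [← sum_coord_mul_apply_single]
        exact tendsto_finsetSum _ fun i _ => (tendsto_cutGrad i he).const_mul _
      · simp [indicator_of_notMem hyA]
  simp only [hflux] at hL
  rw [tendsto_nhds_unique hL hR, integral_zero]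

theorem HarmonicOnSet.indicator (hU : IsOpen U) (hv : HarmonicOnSet v U) (hA : IsOpen A)
    (hA' : IsOpen A') (hdisj : Disjoint A A')
    (hcov : ∀ z ∈ U, z ∈ A ∨ z ∈ A' ∨ v z = 0 ∧ fderiv ℝ v z = 0) :
    HarmonicOnSet (A.indicator v) U := by
  have hd : ∀ z ∈ U, HasFDerivAt (A.indicator v) (A.indicator (fderiv ℝ v) z) z := fun z hz =>
    hasFDerivAt_indicator_of_flat hA hA' hdisj (contDiffOn_two_hasFDerivAt hU hv.1 hz) (hcov z hz)
  have hc : ContinuousOn (A.indicator (fderiv ℝ v)) U := fun z hz =>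
    (continuousAt_indicator_of_eq_zero hA hA' hdisj
      (contDiffOn_two_hasFDerivAt_fderiv hU hv.1 hz).continuousAt
      ((hcov z hz).imp_right fun h => h.imp_right And.right)).continuousWithinAt
  have h1 : ContDiffOn ℝ 1 (A.indicator v) U := by
    refine (contDiffOn_succ_iff_fderiv_of_isOpen (n := 0) hU).2
      ⟨fun z hz => (hd z hz).differentiableAt.differentiableWithinAt, by simp, ?_⟩
    rw [contDiffOn_zero]
    exact hc.congr fun z hz => (hd z hz).fderiv
  refine MeanValueOn.harmonicOnSet hU ⟨h1.continuousOn, fun x r hr hx => ?_⟩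
  obtain ⟨R, hrR, hR⟩ := exists_ball_subset_of_closedBall_subset hU hr.le hx
  refine integral_ballWeight_comp_of_flux_zero (h1.mono hR) (fun s hs => ?_)
    (by rwa [abs_of_pos hr])
  rw [← (hv.mono hR).integral_indicator_fderiv hA hA' hdisj (fun z hz => hcov z (hR hz)) hs]
  refine integral_congr_ae (ae_of_all _ fun y => ?_)
  by_cases hy : y ∈ closedBall (0 : En n) 1
  · simp only [(hd _ (hR (add_smul_mem_ball hs hy))).fderiv]
  · simp [ballWeight_eq_zero_of_notMem hy]

end

section

variable {n : ℕ} {u v f : En n → ℝ} {U A A' : Set (En n)} {x z : En n} {R s ε : ℝ}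

theorem mul_pos_of_isPreconnected {α : Type*} [TopologicalSpace α] {S : Set α} {g : α → ℝ}
    (hS : IsPreconnected S) (hg : ContinuousOn g S) (hne : ∀ a ∈ S, g a ≠ 0) {a b : α}
    (ha : a ∈ S) (hb : b ∈ S) : 0 < g a * g b := by
  rcases (hne a ha).lt_or_gt with h1 | h1 <;> rcases (hne b hb).lt_or_gt with h2 | h2
  · exact mul_pos_of_neg_of_neg h1 h2
  · obtain ⟨c, hc, h0⟩ := hS.intermediate_value ha hb hg ⟨h1.le, h2.le⟩
    exact absurd h0 (hne c hc)
  · obtain ⟨c, hc, h0⟩ := hS.intermediate_value hb ha hg ⟨h2.le, h1.le⟩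
    exact absurd h0 (hne c hc)
  · exact mul_pos h1 h2

/-- Near a regular zero of `v`, a function without zeros in `{v > 0}` has constant sign there. -/
theorem exists_eventually_mul_pos (hU : IsOpen U) (hv : ContDiffOn ℝ 2 v U) (hz : z ∈ U)
    (hvz : v z = 0) (hd : fderiv ℝ v z ≠ 0) (hu : ContinuousOn u U)
    (huv : ∀ y ∈ U, v y ≠ 0 → u y ≠ 0) : ∃ c : ℝ, c ≠ 0 ∧ ∀ᶠ y in 𝓝 z, 0 < v y → 0 < u y * c := by
  obtain ⟨e, he⟩ : ∃ e, 0 < fderiv ℝ v z e := by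
    obtain ⟨e, he⟩ : ∃ e, fderiv ℝ v z e ≠ 0 := by
      by_contra! h
      exact hd (ContinuousLinearMap.ext h)
    rcases he.lt_or_gt with h | h
    · exact ⟨-e, by rw [map_neg]; exact neg_pos.2 h⟩
    · exact ⟨e, h⟩
  have hc : ContinuousAt (fun y => fderiv ℝ v y e) z :=
    (contDiffOn_two_hasFDerivAt_fderiv hU hv hz).continuousAt.clm_apply continuousAt_const
  obtain ⟨r, hr, hr'⟩ := Metric.eventually_nhds_iff_ball.1
    ((hU.eventually_mem hz).and (continuousAt_const.eventually_lt hc he))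
  set τ := r / (2 * (‖e‖ + 1)) with hτ
  have hτ0 : 0 < τ := by positivity
  have hτe : τ * ‖e‖ < r / 2 := by
    rw [hτ, div_mul_eq_mul_div, div_lt_div_iff₀ (by positivity) two_pos]
    nlinarith [norm_nonneg e]
  have hmem : ∀ y ∈ ball z (r / 2), ∀ t ∈ Icc 0 τ, y + t • e ∈ ball z r := by
    intro y hy t ht
    rw [mem_ball, dist_eq_norm] at hy ⊢
    have h1 : ‖t • e‖ ≤ τ * ‖e‖ := by
      rw [norm_smul, Real.norm_of_nonneg ht.1]
      exact mul_le_mul_of_nonneg_right ht.2 (norm_nonneg e)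
    calc ‖y + t • e - z‖ = ‖(y - z) + t • e‖ := by congr 1; abel
      _ ≤ ‖y - z‖ + ‖t • e‖ := norm_add_le _ _
      _ < r := by linarith
  have hderiv : ∀ y ∈ ball z (r / 2), ∀ t ∈ Icc 0 τ,
      HasDerivAt (fun t : ℝ => v (y + t • e)) (fderiv ℝ v (y + t • e) e) t := fun y hy t ht =>
    hasDerivAt_comp_add_smul (contDiffOn_two_hasFDerivAt hU hv (hr' _ (hmem y hy t ht)).1)
  have hmono : ∀ y ∈ ball z (r / 2), StrictMonoOn (fun t : ℝ => v (y + t • e)) (Icc 0 τ) :=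
    fun y hy => strictMonoOn_of_hasDerivWithinAt_pos (convex_Icc 0 τ)
      (fun t ht => (hderiv y hy t ht).continuousAt.continuousWithinAt)
      (fun t ht => (hderiv y hy t (interior_subset ht)).hasDerivWithinAt)
      fun t ht => (hr' _ (hmem y hy t (interior_subset ht))).2
  have h0τ : (0 : ℝ) ∈ Icc 0 τ := left_mem_Icc.2 hτ0.le
  have hττ : τ ∈ Icc 0 τ := right_mem_Icc.2 hτ0.le
  have hzr : z ∈ ball z (r / 2) := mem_ball_self (half_pos hr)
  have hpos : 0 < v (z + τ • e) := by
    have := hmono z hzr h0τ hττ hτ0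
    simpa [hvz] using this
  have hcv : ContinuousAt (fun y => v (y + τ • e)) z :=
    ContinuousAt.comp (f := fun y : En n => y + τ • e) (g := v)
      (hv.continuousOn.continuousAt (hU.mem_nhds (hr' _ (hmem z hzr τ hττ)).1)) (by fun_prop)
  obtain ⟨η, hη, hη'⟩ := Metric.eventually_nhds_iff_ball.1
    ((isOpen_ball.eventually_mem hzr).and (continuousAt_const.eventually_lt hcv hpos))
  refine ⟨u (z + τ • e), huv _ (hr' _ (hmem z hzr τ hττ)).1 hpos.ne', ?_⟩
  filter_upwards [ball_mem_nhds z hη] with y hy hvy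
  have h1 : 0 < u y * u (y + τ • e) := by
    have := mul_pos_of_isPreconnected (g := fun t : ℝ => u (y + t • e)) isPreconnected_Icc
      (hu.comp (f := fun t : ℝ => y + t • e) (by fun_prop)
        fun t ht => (hr' _ (hmem y (hη' y hy).1 t ht)).1)
      (fun t ht => huv _ (hr' _ (hmem y (hη' y hy).1 t ht)).1 ?_) h0τ hττ
    · simpa using this
    · have := (hmono y (hη' y hy).1).monotoneOn h0τ ht ht.1
      simp only [zero_smul, add_zero] at this
      exact (hvy.trans_le this).ne'
  have h2 : 0 < u (y + τ • e) * u (z + τ • e) :=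
    mul_pos_of_isPreconnected (g := fun y => u (y + τ • e)) (convex_ball z η).isPreconnected
      (hu.comp (f := fun y : En n => y + τ • e) (by fun_prop)
        fun y hy => (hr' _ (hmem y (hη' y hy).1 τ hττ)).1)
      (fun y hy => huv _ (hr' _ (hmem y (hη' y hy).1 τ hττ)).1 (hη' y hy).2.ne') hy
      (mem_ball_self hη)
  have h3 : u (y + τ • e) ≠ 0 := fun h => by simp [h] at h2
  have h4 : 0 < u (y + τ • e) ^ 2 * (u y * u (z + τ • e)) := by
    have := mul_pos h1 h2; nlinarith
  exact pos_of_mul_pos_right h4 (sq_nonneg _)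

/-- The strong minimum principle. -/
theorem MeanValueOn.eventually_eq_zero_of_nonneg (hU : IsOpen U) (hf : MeanValueOn f U)
    (hz : z ∈ U) (hfz : f z = 0) (h0 : ∀ᶠ y in 𝓝 z, 0 ≤ f y) : ∀ᶠ y in 𝓝 z, f y = 0 := by
  obtain ⟨r, hr, hr'⟩ := Metric.nhds_basis_closedBall.eventually_iff.1
    ((hU.eventually_mem hz).and h0)
  have hrU : closedBall z r ⊆ U := fun y hy => (hr' hy).1
  have hmv := hf.2 z r hr hrU
  rw [hfz, mul_zero] at hmv
  filter_upwards [ball_mem_nhds z hr] with y hy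
  by_contra hne
  have hy' : z + r • r⁻¹ • (y - z) = y := by
    rw [smul_smul, mul_inv_cancel₀ hr.ne', one_smul, add_sub_cancel]
  refine (integral_ballWeight_pos (F := fun y => f (z + r • y)) (y₀ := r⁻¹ • (y - z))
    (continuousOn_comp_closedBall hr.le (hf.1.mono hrU))
    (fun w hw => (hr' (add_smul_mem_closedBall hr.le hw)).2) ?_ ?_).ne' hmv
  · rw [mem_ball, dist_eq_norm] at hy
    rw [norm_smul, norm_inv, Real.norm_of_nonneg hr.le, inv_mul_lt_iff₀ hr]
    linarith
  · simp only [hy']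
    exact ((hr' (ball_subset_closedBall hy)).2).lt_of_ne' hne

theorem HarmonicOnSet.eventually_mul_sign (hU : IsOpen U) (hu : HarmonicOnSet u U)
    (hv : HarmonicOnSet v U) (hZ : ∀ y ∈ U, u y = 0 ↔ v y = 0) (hz : z ∈ U)
    (hvz : v z = 0) (hd : fderiv ℝ v z ≠ 0) :
    (∀ᶠ y in 𝓝 z, 0 ≤ u y * v y) ∨ ∀ᶠ y in 𝓝 z, u y * v y ≤ 0 := by
  have huv : ∀ y ∈ U, v y ≠ 0 → u y ≠ 0 := fun y hy h h' => h ((hZ y hy).1 h')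
  obtain ⟨c, hc, hcu⟩ := exists_eventually_mul_pos hU hv.1 hz hvz hd hu.1.continuousOn huv
  obtain ⟨c', hc', hcu'⟩ := exists_eventually_mul_pos (v := fun y => -v y) hU hv.1.neg hz
    (by simp [hvz]) (by rw [fderiv_fun_neg]; exact neg_ne_zero.2 hd) hu.1.continuousOn
    (fun y hy h => huv y hy (by simpa using h))
  have hmv := hu.meanValueOn hU
  have huz := (hZ z hz).2 hvz
  have hcontra : ¬ ∀ᶠ y in 𝓝 z, u y = 0 := fun h => by
    have h' : v =ᶠ[𝓝 z] fun _ => (0 : ℝ) := by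
      filter_upwards [h, hU.mem_nhds hz] with y hy hyU using (hZ y hyU).1 hy
    exact hd (by rw [h'.fderiv_eq]; simp)
  rcases hc.lt_or_gt with h | h <;> rcases hc'.lt_or_gt with h' | h'
  · refine absurd ?_ hcontra
    have := MeanValueOn.eventually_eq_zero_of_nonneg hU (hmv.const_mul (-1)) hz (by simp [huz]) ?_
    · filter_upwards [this] with y hy using by simpa using hy
    · filter_upwards [hcu, hcu', hU.mem_nhds hz] with y h1 h2 hyU
      rcases lt_trichotomy (v y) 0 with h3 | h3 | h3
      · nlinarith [h2 (by linarith)]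
      · simp [(hZ y hyU).2 h3]
      · nlinarith [h1 h3]
  · right
    filter_upwards [hcu, hcu'] with y h1 h2
    rcases lt_trichotomy (v y) 0 with h3 | h3 | h3
    · exact mul_nonpos_of_nonneg_of_nonpos (by by_contra!; nlinarith [h2 (by linarith)]) h3.le
    · simp [h3]
    · exact mul_nonpos_of_nonpos_of_nonneg (by by_contra!; nlinarith [h1 h3]) h3.le
  · left
    filter_upwards [hcu, hcu'] with y h1 h2
    rcases lt_trichotomy (v y) 0 with h3 | h3 | h3
    · exact mul_nonneg_of_nonpos_of_nonpos (by by_contra!; nlinarith [h2 (by linarith)]) h3.le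
    · simp [h3]
    · exact mul_nonneg (by by_contra!; nlinarith [h1 h3]) h3.le
  · refine absurd (MeanValueOn.eventually_eq_zero_of_nonneg hU hmv hz huz ?_) hcontra
    filter_upwards [hcu, hcu', hU.mem_nhds hz] with y h1 h2 hyU
    rcases lt_trichotomy (v y) 0 with h3 | h3 | h3
    · by_contra!; nlinarith [h2 (by linarith)]
    · simp [(hZ y hyU).2 h3]
    · by_contra!; nlinarith [h1 h3]

/-- Harmonic functions with the same zero set have a ratio of constant sign. -/
theorem HarmonicOnSet.mul_sign (hU : IsOpen U) (hUc : IsPreconnected U) (hu : HarmonicOnSet u U)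
    (hv : HarmonicOnSet v U) (hne : ∃ z ∈ U, v z ≠ 0) (hZ : ∀ y ∈ U, u y = 0 ↔ v y = 0) :
    (∀ z ∈ U, 0 ≤ u z * v z) ∨ ∀ z ∈ U, u z * v z ≤ 0 := by
  set A := {z | ∀ᶠ y in 𝓝 z, y ∈ U ∧ 0 ≤ u y * v y} with hA
  set A' := {z | ∀ᶠ y in 𝓝 z, y ∈ U ∧ u y * v y ≤ 0} with hA'
  have hAo : IsOpen A := isOpen_setOfPred_eventually_nhds
  have hAo' : IsOpen A' := isOpen_setOfPred_eventually_nhds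
  obtain ⟨z₀, hz₀, hvz₀⟩ := hne
  have hdisj : Disjoint A A' := by
    refine disjoint_left.2 fun z hz hz' => hvz₀ ?_
    refine hv.eqOn_zero hU hUc (Eventually.self_of_nhds hz).1 ?_ z₀ hz₀
    filter_upwards [hz, hz'] with y h1 h2
    rcases mul_eq_zero.1 (le_antisymm h2.2 h1.2) with h | h
    · exact (hZ y h1.1).1 h
    · exact h
  have hcov : ∀ z ∈ U, z ∈ A ∨ z ∈ A' ∨ v z = 0 ∧ fderiv ℝ v z = 0 := by
    intro z hz
    by_cases hvz : v z = 0
    · by_cases hd : fderiv ℝ v z = 0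
      · exact Or.inr (Or.inr ⟨hvz, hd⟩)
      · exact (hu.eventually_mul_sign hU hv hZ hz hvz hd).imp
          (fun h => (hU.eventually_mem hz).and h) fun h => Or.inl ((hU.eventually_mem hz).and h)
    · have hc : ContinuousAt (fun y => u y * v y) z :=
        (hu.1.continuousOn.continuousAt (hU.mem_nhds hz)).mul
          (hv.1.continuousOn.continuousAt (hU.mem_nhds hz))
      rcases (mul_ne_zero (fun h => hvz ((hZ z hz).1 h)) hvz : u z * v z ≠ 0).lt_or_gt with h | h
      · exact Or.inr (Or.inl ((hU.eventually_mem hz).and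
          ((hc.eventually_lt continuousAt_const h).mono fun _ => le_of_lt)))
      · exact Or.inl ((hU.eventually_mem hz).and
          ((continuousAt_const.eventually_lt hc h).mono fun _ => le_of_lt))
  have hw := hv.indicator hU hAo hAo' hdisj hcov
  by_cases hne' : ∃ z, z ∈ A'
  · right
    obtain ⟨z, hz⟩ := hne'
    have h0 := hw.eqOn_zero hU hUc (Eventually.self_of_nhds hz).1 (by
      filter_upwards [hAo'.mem_nhds hz] with y hy
        using indicator_of_notMem (hdisj.notMem_of_mem_right hy) _)
    intro y hy
    rcases hcov y hy with h | h | h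
    · have := h0 y hy
      rw [indicator_of_mem h] at this
      simp [this]
    · exact (Eventually.self_of_nhds h).2
    · simp [h.1]
  · left
    intro y hy
    rcases hcov y hy with h | h | h
    · exact (Eventually.self_of_nhds h).2
    · exact absurd ⟨y, h⟩ hne'
    · simp [h.1]

end

end

theorem stmt17 (n : ℕ) (v : En n → ℝ)
    (hv : HarmonicOnSet v (ball 0 1))
    (hne : ∃ x ∈ ball (0 : En n) 1, v x ≠ 0)
    (x₀ : En n) (hx₀ : x₀ ∈ zeroSet v (ball 0 1) ∩ ball (0 : En n) (1/2))
    (k : ℕ) (hk : 1 ≤ k)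
    (hvanish : ∀ j < k, iteratedFDeriv ℝ j v x₀ = 0)
    (hnonzero : iteratedFDeriv ℝ k v x₀ ≠ 0) :
    ∃ C > (0 : ℝ),
      ∀ u : En n → ℝ, HarmonicOnSet u (ball 0 1) →
        zeroSet u (ball 0 1) = zeroSet v (ball 0 1) →
        ∀ x ∈ ball (0 : En n) (1/2), |u x| ≤ C * ‖iteratedFDeriv ℝ k u x₀‖ := by
  have hsub : ball x₀ 0.05 ⊆ ball (0 : En n) 0.55 := fun y hy => by
    have h1 := hx₀.2
    rw [mem_ball] at hy h1 ⊢
    have := dist_triangle y x₀ 0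
    norm_num at *; linarith
  have hx : x₀ ∈ ball (0 : En n) 0.55 := hsub (mem_ball_self (by norm_num))
  obtain ⟨C, hC, hbound⟩ := hv.exists_bound_of_forall_ne_zero hne hx₀.2 (k := k)
    fun f hf hfne hfv => by
      refine HarmonicOnSet.iteratedFDeriv_ne_zero_of_mul_nonneg (by norm_num) (hf.mono hsub)
        (hv.mono (hsub.trans (ball_subset_ball (by norm_num)))) ?_ (fun z hz => hfv z (hsub hz))
        hvanish hnonzero
      by_contra! h
      obtain ⟨z, hz, hfz⟩ := hfne
      refine hfz (hf.eqOn_zero isOpen_ball (convex_ball _ _).isPreconnected hx ?_ z hz)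
      filter_upwards [ball_mem_nhds x₀ (by norm_num : (0 : ℝ) < 0.05)] using h
  refine ⟨C, hC, fun u hu hZ => ?_⟩
  have hZ' : ∀ y ∈ ball (0 : En n) 1, u y = 0 ↔ v y = 0 := fun y hy => by
    have := Set.ext_iff.1 hZ y
    constructor
    · exact fun h => (this.1 ⟨hy, h⟩).2
    · exact fun h => (this.2 ⟨hy, h⟩).2
  rcases hu.mul_sign isOpen_ball (convex_ball _ _).isPreconnected hv hne hZ' with h | h
  · exact hbound u hu h
  · intro x hx
    have := hbound (fun y => -u y) (by simpa using hu.const_mul isOpen_ball (-1))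
      (fun z hz => by rw [neg_mul]; exact neg_nonneg.2 (h z hz)) x hx
    rwa [abs_neg, show (fun y => -u y) = -u from rfl, iteratedFDeriv_neg_apply, norm_neg] at this
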